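/- With the apparatus fixed and p sufficiently large in terms of k, suppose that a and b are integers with 0 ≤ a < b ≤ (32tθ)^{−1} and b ≥ ta; put H = 15(t−1)b and g = b − ta. Then there exist an integer h with 0 ≤ h < H and a constant C depending at most on s, k, r, t, N such that ⟦K_{a,b}(X)⟧ ≤ C(X^δ·((M^{g−4h/3})^s·⟦K_{b,tb+h}(X)⟧)^{1/t}·(X/M^b)^{Λ(1−1/t)} + (M^H)^{−r/6}·(X/M^b)^{Λ}). -/

import Mathlib

open Filter MeasureTheory Finset

attribute [local instance] Classical.propDecidable

noncomputable section

/-- Number of integral solutions of the Vinogradov system of degree k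
in 2s variables from [1,X]. -/
def Jcount (s k : ℕ) (X : ℝ) : ℕ :=
  Set.ncard {xy : (Fin s → ℤ) × (Fin s → ℤ) |
    (∀ i, 1 ≤ xy.1 i ∧ (xy.1 i : ℝ) ≤ X) ∧
    (∀ i, 1 ≤ xy.2 i ∧ (xy.2 i : ℝ) ≤ X) ∧
    ∀ j ∈ Finset.Icc 1 k, ∑ i, ((xy.1 i) ^ j - (xy.2 i) ^ j) = 0}

/-- e(z) = exp(2πiz). -/
def ec (z : ℝ) : ℂ := Complex.exp (2 * Real.pi * Complex.I * z)

/-- The unit box [0,1)^k. -/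
def box (k : ℕ) : Set (Fin k → ℝ) := Set.univ.pi fun _ => Set.Ico (0:ℝ) 1

/-- The exponential sum f_c(α;ξ), over 1 ≤ x ≤ X with x ≡ ξ (mod p^c). -/
def fexp (k p : ℕ) (X : ℝ) (c : ℕ) (ξ : ℤ) (α : Fin k → ℝ) : ℂ :=
  ∑ x ∈ (Finset.Icc (1:ℤ) ⌊X⌋).filter (fun x => Int.ModEq ((p:ℤ)^c) x ξ),
    ec (∑ j : Fin k, α j * (x:ℝ)^((j:ℕ)+1))

/-- The set Ξ_c^r(ξ): r-tuples in [1,p^{c+1}], congruent to ξ mod p^c,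
pairwise distinct mod p^{c+1}. -/
def XiSet (p r c : ℕ) (ξ : ℤ) : Set (Fin r → ℤ) :=
  {v | (∀ i, 1 ≤ v i ∧ v i ≤ (p:ℤ)^(c+1)) ∧
       (∀ i, Int.ModEq ((p:ℤ)^c) (v i) ξ) ∧
       Function.Injective fun i => ((v i : ZMod (p^(c+1))))}

/-- The conditioned exponential sum F_c(α;ξ). -/
def Fexp (k p r : ℕ) (X : ℝ) (c : ℕ) (ξ : ℤ) (α : Fin k → ℝ) : ℂ :=
  ∑ᶠ v ∈ XiSet p r c ξ, ∏ i, fexp k p X (c+1) (v i) α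

/-- The mean value I_{a,b}(X;ξ,η). -/
def Iab (k p r s : ℕ) (X : ℝ) (a b : ℕ) (ξ η : ℤ) : ℝ :=
  ∫ α in box k, ‖Fexp k p r X a ξ α‖^2 * ‖fexp k p X b η α‖^(2*s)

/-- The mean value K_{a,b}(X;ξ,η). -/
def Kab (k p r t : ℕ) (X : ℝ) (a b : ℕ) (ξ η : ℤ) : ℝ :=
  ∫ α in box k, ‖Fexp k p r X a ξ α‖^2 * ‖Fexp k p r X b η α‖^(2*t)

/-- I_{a,b}(X): the maximum of I_{a,b}(X;ξ,η) over admissible ξ, η. -/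
def Imax (k p r s : ℕ) (X : ℝ) (a b : ℕ) : ℝ :=
  sSup {v : ℝ | ∃ ξ η : ℤ, 1 ≤ ξ ∧ ξ ≤ (p:ℤ)^a ∧ 1 ≤ η ∧ η ≤ (p:ℤ)^b ∧
    ¬ Int.ModEq (p:ℤ) η ξ ∧ v = Iab k p r s X a b ξ η}

/-- The set Ξ(η) of members of Ξ_0^r(0) avoiding the class of η mod p. -/
def XiTilde (p r : ℕ) (η : ℤ) : Set (Fin r → ℤ) :=
  {v | v ∈ XiSet p r 0 0 ∧ ∀ i, ¬ Int.ModEq (p:ℤ) (v i) η}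

/-- The pre-conditioned sum F(α;η). -/
def Ftilde (k p r : ℕ) (X : ℝ) (η : ℤ) (α : Fin k → ℝ) : ℂ :=
  ∑ᶠ v ∈ XiTilde p r η, ∏ i, fexp k p X 1 (v i) α

/-- The mean value K̃_c(X;η). -/
def Ktilde (k p r t : ℕ) (X : ℝ) (c : ℕ) (η : ℤ) : ℝ :=
  ∫ α in box k, ‖Ftilde k p r X η α‖^2 * ‖Fexp k p r X c η α‖^(2*t)

/-- K_{a,b}(X): for a ≥ 1 the maximum of K_{a,b}(X;ξ,η) over admissible ξ, η;
for a = 0 the pre-congruencing quantity K_{0,b}(X) = max_η K̃_b(X;η). -/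
def Kmax (k p r t : ℕ) (X : ℝ) (a b : ℕ) : ℝ :=
  if a = 0 then sSup {v : ℝ | ∃ η : ℤ, 1 ≤ η ∧ η ≤ (p:ℤ)^b ∧ v = Ktilde k p r t X b η}
  else sSup {v : ℝ | ∃ ξ η : ℤ, 1 ≤ ξ ∧ ξ ≤ (p:ℤ)^a ∧ 1 ≤ η ∧ η ≤ (p:ℤ)^b ∧
    ¬ Int.ModEq (p:ℤ) η ξ ∧ v = Kab k p r t X a b ξ η}

/-- λ = limsup_{Y→∞} log J_{sr,k}(Y)/log Y. -/
def lamExp (k sr : ℕ) : ℝ :=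
  Filter.limsup (fun Y : ℝ => Real.log ((Jcount sr k Y : ℝ)) / Real.log Y) Filter.atTop

/-- θ = (16t)^{-N-1}. -/
def thetaC (t N : ℕ) : ℝ := (16*(t:ℝ)) ^ (-((N:ℝ)+1))

/-- δ = θ/(1000 N t^N). -/
def deltaC (t N : ℕ) : ℝ := thetaC t N / (1000 * (N:ℝ) * (t:ℝ)^N)

/-- M = X^θ. -/
def Mval (t N : ℕ) (X : ℝ) : ℝ := X ^ thetaC t N

/-- κ = r(t+1) - (1/2)(t+r-k)(t+r-k-1+(2r-2)/(t-1)). -/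
def kappa (k r t : ℕ) : ℝ :=
  (r : ℝ) * ((t : ℝ) + 1) -
    (1/2) * ((t : ℝ) + r - k) * ((t : ℝ) + r - k - 1 + (2*(r:ℝ) - 2)/((t:ℝ) - 1))

/-- Λ = λ - 2(s+r) + κ, with s = rt. -/
def LamC (k r t : ℕ) : ℝ := lamExp k (r*(t+1)) - 2*((r*(t+1) : ℕ) : ℝ) + kappa k r t

/-- The normalised mean value ⟦K_{a,b}(X)⟧ = K_{a,b}(X) (X/M^b)^{-2s} (X/M^a)^{κ-2r}. -/
def normK (k p r t N : ℕ) (X : ℝ) (a b : ℕ) : ℝ :=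
  Kmax k p r t X a b * (X / (Mval t N X)^b) ^ (-(2*((r*t : ℕ):ℝ))) *
    (X / (Mval t N X)^a) ^ (kappa k r t - 2*(r:ℝ))

/-- μ = (1/2)(t+r-k)(t+r-k-1). -/
def muC (k r t : ℕ) : ℝ := (1/2) * ((t:ℝ)+r-k) * ((t:ℝ)+r-k-1)

/-- ν = (1/2)(t+r-k)(k+r-t-1). -/
def nuC (k r t : ℕ) : ℝ := (1/2) * ((t:ℝ)+r-k) * ((k:ℝ)+r-t-1)

/-! ### Refining finite sets by residue conditions -/

theorem exists_card_le_mul_card_fiber {α β : Type*} (S : Finset α) (T : Finset β) (g : α → β)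
    (hg : ∀ x ∈ S, g x ∈ T) : ∃ S' ⊆ S, S.card ≤ T.card * S'.card ∧
      ∀ x ∈ S', ∀ y ∈ S', g x = g y := by
  rcases S.eq_empty_or_nonempty with rfl | ⟨x, hx⟩
  · exact ⟨∅, by simp, by simp, by simp⟩
  · obtain ⟨b, -, hb⟩ := T.exists_max_image (fun b => (S.filter (g · = b)).card) ⟨_, hg x hx⟩
    refine ⟨S.filter (g · = b), filter_subset _ _, ?_, ?_⟩
    · rw [mul_comm]
      exact card_le_mul_card_image_of_maps_to hg _ hb
    · intro x hx y hy
      rw [(mem_filter.1 hx).2, (mem_filter.1 hy).2]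

theorem exists_subset_modEq_pow {α : Type*} {p : ℕ} (hp : 0 < p) (S : Finset α) (F : α → ℤ)
    {A B e : ℕ} (hB : B ≤ A + e)
    (hF : ∀ x ∈ S, ∀ y ∈ S, F x ≡ F y [ZMOD (p : ℤ) ^ A]) :
    ∃ S' ⊆ S, S.card ≤ p ^ e * S'.card ∧
      ∀ x ∈ S', ∀ y ∈ S', F x ≡ F y [ZMOD (p : ℤ) ^ B] := by
  rcases S.eq_empty_or_nonempty with rfl | ⟨x₀, hx₀⟩
  · exact ⟨∅, by simp, by simp, by simp⟩
  have hpe : (0 : ℤ) < (p : ℤ) ^ e := by positivity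
  have hpA : (0 : ℤ) < (p : ℤ) ^ A := by positivity
  obtain ⟨S', hS', hcard, hconst⟩ := exists_card_le_mul_card_fiber S
    (Finset.Ico (0 : ℤ) ((p : ℤ) ^ e)) (fun x => ((F x - F x₀) / (p : ℤ) ^ A) % (p : ℤ) ^ e)
    (fun x _ => Finset.mem_Ico.2 ⟨Int.emod_nonneg _ hpe.ne', Int.emod_lt_of_pos _ hpe⟩)
  refine ⟨S', hS', ?_, ?_⟩
  · have : ((p : ℤ) ^ e).toNat = p ^ e := by
      rw [← Nat.cast_pow, Int.toNat_natCast]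
    simpa [this] using hcard
  · intro x hx y hy
    obtain ⟨u, hu⟩ := (hF x₀ hx₀ x (hS' hx)).dvd
    obtain ⟨v, hv⟩ := (hF x₀ hx₀ y (hS' hy)).dvd
    have h := hconst x hx y hy
    simp only [hu, hv, Int.mul_ediv_cancel_left _ hpA.ne'] at h
    obtain ⟨w, hw⟩ := (show u ≡ v [ZMOD (p : ℤ) ^ e] from h).dvd
    have h1 : F x ≡ F y [ZMOD (p : ℤ) ^ (A + e)] := by
      refine Int.modEq_iff_dvd.2 ⟨w, ?_⟩
      rw [pow_add]
      linear_combination hv - hu + (p : ℤ) ^ A * hw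
    exact h1.of_dvd (pow_dvd_pow _ hB)

theorem exists_subset_forall_modEq_pow {α ι : Type*} {p : ℕ} (hp : 0 < p) (I : Finset ι)
    (S : Finset α) (F : ι → α → ℤ) (A B e : ι → ℕ) (hB : ∀ i ∈ I, B i ≤ A i + e i)
    (hF : ∀ i ∈ I, ∀ x ∈ S, ∀ y ∈ S, F i x ≡ F i y [ZMOD (p : ℤ) ^ A i]) :
    ∃ S' ⊆ S, S.card ≤ p ^ (∑ i ∈ I, e i) * S'.card ∧
      ∀ i ∈ I, ∀ x ∈ S', ∀ y ∈ S', F i x ≡ F i y [ZMOD (p : ℤ) ^ B i] := by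
  induction I using Finset.induction_on with
  | empty => exact ⟨S, subset_rfl, by simp, by simp⟩
  | insert i I hi ih =>
    obtain ⟨S₁, hS₁, hcard, h₁⟩ := ih (fun j hj => hB j (mem_insert_of_mem hj))
      (fun j hj => hF j (mem_insert_of_mem hj))
    obtain ⟨S₂, hS₂, hcard₂, h₂⟩ := exists_subset_modEq_pow hp S₁ (F i)
      (hB i (mem_insert_self _ _))
      (fun x hx y hy => hF i (mem_insert_self _ _) x (hS₁ hx) y (hS₁ hy))
    refine ⟨S₂, hS₂.trans hS₁, ?_, ?_⟩
    · rw [sum_insert hi, pow_add]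
      calc S.card ≤ p ^ (∑ i ∈ I, e i) * S₁.card := hcard
        _ ≤ p ^ (∑ i ∈ I, e i) * (p ^ e i * S₂.card) := by gcongr
        _ = _ := by ring
    · intro j hj x hx y hy
      rcases mem_insert.1 hj with rfl | hj
      · exact h₂ x hx y hy
      · exact h₁ j hj x (hS₂ hx) y (hS₂ hy)

/-! ### Power sums determine a tuple up to order -/

theorem esymm_eq_of_psum_eq {K : Type*} [Field K] {r : ℕ} (hr : ∀ n : ℕ, 0 < n → n ≤ r → (n : K) ≠ 0)
    (y z : Fin r → K) (h : ∀ l : ℕ, 1 ≤ l → l ≤ r → ∑ i, y i ^ l = ∑ i, z i ^ l) (n : ℕ)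
    (hn : n ≤ r) :
    MvPolynomial.aeval y (MvPolynomial.esymm (Fin r) K n) =
      MvPolynomial.aeval z (MvPolynomial.esymm (Fin r) K n) := by
  induction n using Nat.strong_induction_on with
  | _ n ih =>
    rcases Nat.eq_zero_or_pos n with rfl | hpos
    · simp
    have key := MvPolynomial.mul_esymm_eq_sum (Fin r) K n
    have hy := congrArg (MvPolynomial.aeval y) key
    have hz := congrArg (MvPolynomial.aeval z) key
    simp only [map_mul, map_natCast, map_sum, map_pow, map_neg, map_one] at hy hz
    have : (n : K) * MvPolynomial.aeval y (MvPolynomial.esymm (Fin r) K n) =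
        n * MvPolynomial.aeval z (MvPolynomial.esymm (Fin r) K n) := by
      rw [hy, hz]
      congr 1
      refine sum_congr rfl fun a ha => ?_
      simp only [mem_filter, HasAntidiagonal.mem_antidiagonal] at ha
      rw [ih a.1 ha.2 (by omega)]
      congr 1
      simp only [MvPolynomial.psum, map_sum, map_pow, MvPolynomial.aeval_X]
      exact h a.2 (by omega) (by omega)
    exact mul_left_cancel₀ (hr n hpos hn) this

theorem exists_eq_of_psum_eq {K : Type*} [Field K] {r : ℕ}
    (hr : ∀ n : ℕ, 0 < n → n ≤ r → (n : K) ≠ 0)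
    (y z : Fin r → K) (h : ∀ l : ℕ, 1 ≤ l → l ≤ r → ∑ i, y i ^ l = ∑ i, z i ^ l) (i : Fin r) :
    ∃ j, z i = y j := by
  have hprod : ((univ.val.map y).map fun a => Polynomial.X + Polynomial.C a).prod =
      ((univ.val.map z).map fun a => Polynomial.X + Polynomial.C a).prod := by
    rw [Multiset.prod_X_add_C_eq_sum_esymm, Multiset.prod_X_add_C_eq_sum_esymm]
    have hc : Multiset.card (univ.val.map y) = r := by simp
    have hc' : Multiset.card (univ.val.map z) = r := by simp
    rw [hc, hc']
    refine sum_congr rfl fun j hj => ?_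
    rw [← MvPolynomial.aeval_esymm_eq_multiset_esymm (Fin r) K,
      ← MvPolynomial.aeval_esymm_eq_multiset_esymm (Fin r) K,
      esymm_eq_of_psum_eq hr y z h j (by simpa [Nat.lt_succ_iff] using hj)]
  have h2 := congrArg (Polynomial.eval (-z i)) hprod
  have e1 : ∀ w : Fin r → K, ((univ.val.map w).map fun a => Polynomial.X + Polynomial.C a).prod =
      ∏ j, (Polynomial.X + Polynomial.C (w j)) := by
    intro w; rw [Multiset.map_map]; rfl
  rw [e1, e1, Polynomial.eval_prod, Polynomial.eval_prod,
    Finset.prod_eq_zero (f := fun j => Polynomial.eval (-z i) (Polynomial.X + Polynomial.C (z j)))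
      (mem_univ i) (by simp)] at h2
  obtain ⟨j, -, hj⟩ := Finset.prod_eq_zero_iff.1 h2
  refine ⟨j, ?_⟩
  simp only [Polynomial.eval_add, Polynomial.eval_X, Polynomial.eval_C] at hj
  linear_combination -hj

/-! ### Uniqueness of lifts of nonsingular solutions -/

theorem modEq_pow_of_nonsingular {p r : ℕ} (Ψ : Fin r → Polynomial ℤ) (L : ℕ) (y z : Fin r → ℤ)
    (hy : ∀ v : Fin r → ZMod p,
      (∀ l, ∑ i, v i * (((Ψ l).derivative.eval (y i) : ℤ) : ZMod p) = 0) → v = 0)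
    (h1 : ∀ i, y i ≡ z i [ZMOD p])
    (h : ∀ l, ∑ i, (Ψ l).eval (y i) ≡ ∑ i, (Ψ l).eval (z i) [ZMOD (p : ℤ) ^ L]) :
    ∀ i, y i ≡ z i [ZMOD (p : ℤ) ^ L] := by
  suffices H : ∀ e, 1 ≤ e → e ≤ L → ∀ i, y i ≡ z i [ZMOD (p : ℤ) ^ e] by
    rcases Nat.eq_zero_or_pos L with rfl | hL
    · intro i; simpa using Int.modEq_one
    · exact H L hL le_rfl
  intro e he
  induction e, he using Nat.le_induction with
  | base => intro _ i; simpa using h1 i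
  | succ e he ih =>
    intro heL
    have ih := ih (by omega)
    choose v hv using fun i => (ih i).dvd
    have hz : ∀ i, z i = y i + (p : ℤ) ^ e * v i := fun i => by linear_combination hv i
    rcases Nat.eq_zero_or_pos p with rfl | hp
    · intro i
      have := hv i
      rw [Nat.cast_zero, zero_pow (by omega), zero_mul, sub_eq_zero] at this
      rw [this]
    have hp0 : ((p : ℤ) ^ e) ≠ 0 := by positivity
    have key : (fun i => (v i : ZMod p)) = 0 := by
      apply hy
      intro l
      have hbin : ∀ i, ∃ q : ℤ, (Ψ l).eval (y i + (p : ℤ) ^ e * v i) = (Ψ l).eval (y i) +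
          (Ψ l).derivative.eval (y i) * ((p : ℤ) ^ e * v i) + q * ((p : ℤ) ^ e * v i) ^ 2 :=
        fun i => ⟨_, ((Ψ l).binomExpansion (y i) ((p : ℤ) ^ e * v i)).2⟩
      choose q hq using hbin
      have hd := ((h l).of_dvd (pow_dvd_pow (p : ℤ) heL)).dvd
      have hsum : ∑ i, (Ψ l).eval (z i) - ∑ i, (Ψ l).eval (y i) =
          (p : ℤ) ^ e * (∑ i, v i * (Ψ l).derivative.eval (y i)
            + (p : ℤ) ^ e * ∑ i, q i * v i ^ 2) := by
        rw [mul_add, Finset.mul_sum, Finset.mul_sum, Finset.mul_sum, ← sum_sub_distrib,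
          ← sum_add_distrib]
        refine sum_congr rfl fun i _ => ?_
        rw [hz i, hq i]
        ring
      rw [hsum, pow_succ] at hd
      have hd' := Int.dvd_of_mul_dvd_mul_left hp0 hd
      have hpe : (p : ℤ) ∣ (p : ℤ) ^ e * ∑ i, q i * v i ^ 2 :=
        Dvd.dvd.mul_right (dvd_pow_self _ (by omega)) _
      have h3 := (Int.dvd_iff_dvd_of_dvd_add hd').2 hpe
      have h4 := (ZMod.intCast_zmod_eq_zero_iff_dvd _ p).2 h3
      push_cast at h4
      exact h4
    intro i
    have := congrFun key i
    obtain ⟨w, hw⟩ := (ZMod.intCast_zmod_eq_zero_iff_dvd _ p).1 this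
    refine Int.modEq_iff_dvd.2 ⟨w, ?_⟩
    rw [hv i, hw, pow_succ]
    ring

theorem card_le_of_psum_of_nonsingular {p r : ℕ} [Fact p.Prime] (hpr : r < p)
    (S : Finset (Fin r → ℤ))
    (Ψ : Fin r → Polynomial ℤ) (L : ℕ)
    (hns : ∀ y ∈ S, ∀ v : Fin r → ZMod p,
      (∀ l, ∑ i, v i * (((Ψ l).derivative.eval (y i) : ℤ) : ZMod p) = 0) → v = 0)
    (hps : ∀ y ∈ S, ∀ z ∈ S, ∀ l : ℕ, 1 ≤ l → l ≤ r →
      ∑ i, y i ^ l ≡ ∑ i, z i ^ l [ZMOD p])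
    (hΨ : ∀ y ∈ S, ∀ z ∈ S, ∀ l,
      ∑ i, (Ψ l).eval (y i) ≡ ∑ i, (Ψ l).eval (z i) [ZMOD (p : ℤ) ^ L])
    (hinj : ∀ y ∈ S, ∀ z ∈ S, (∀ i, y i ≡ z i [ZMOD (p : ℤ) ^ L]) → y = z) :
    S.card ≤ r ^ r := by
  rcases S.eq_empty_or_nonempty with rfl | ⟨y₀, hy₀⟩
  · simp
  have hr : ∀ n : ℕ, 0 < n → n ≤ r → (n : ZMod p) ≠ 0 := by
    intro n hn hnr h0
    have := Nat.le_of_dvd hn ((ZMod.natCast_eq_zero_iff n p).1 h0)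
    omega
  have hex : ∀ z ∈ S, ∃ g : Fin r → Fin r, ∀ i, (z i : ZMod p) = y₀ (g i) := by
    intro z hz
    have := exists_eq_of_psum_eq hr (fun i => (y₀ i : ZMod p)) (fun i => (z i : ZMod p)) (by
      intro l hl hlr
      have := (ZMod.intCast_eq_intCast_iff _ _ p).2 (hps y₀ hy₀ z hz l hl hlr)
      push_cast at this
      exact this)
    exact Classical.skolem.1 this
  have : Nonempty (Fin r → Fin r) := ⟨id⟩
  choose! g hg using hex
  obtain ⟨S', hS', hcard, hS'g⟩ := exists_card_le_mul_card_fiber S univ g (by simp)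
  have h1 : S'.card ≤ 1 := by
    refine Finset.card_le_one.2 fun y hy z hz => hinj y (hS' hy) z (hS' hz) ?_
    refine modEq_pow_of_nonsingular Ψ L y z (hns y (hS' hy)) (fun i => ?_)
      (hΨ y (hS' hy) z (hS' hz))
    rw [← ZMod.intCast_eq_intCast_iff, hg y (hS' hy), hg z (hS' hz), hS'g y hy z hz]
  calc S.card ≤ _ := hcard
    _ ≤ r ^ r * 1 := by
      gcongr
      simp
    _ = r ^ r := mul_one _

/-! ### Triangulating consecutive powers of a linear polynomial -/

theorem det_coeff_add_X_pow_ne_zero {K : Type*} [Field K] {m n : ℕ} {u : K} (hu : u ≠ 0)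
    (hmn : ∀ i : ℕ, 0 < i → i ≤ m + n → (i : K) ≠ 0) :
    (Matrix.of fun i j : Fin n =>
      ((Polynomial.C u + Polynomial.X : Polynomial K) ^ (m + 1 + (j : ℕ))).coeff
        ((i : ℕ) + 1)).det ≠ 0 := by
  intro hdet
  obtain ⟨v, hv0, hv⟩ := Matrix.exists_mulVec_eq_zero_iff.2 hdet
  apply hv0
  set lin : Polynomial K := Polynomial.C u + Polynomial.X with hlin
  set Q : Polynomial K := ∑ j : Fin n, Polynomial.C (v j) * lin ^ (m + 1 + (j : ℕ)) with hQ
  set q : Polynomial K :=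
    ∑ j : Fin n, Polynomial.C (v j * ((m + 1 + (j : ℕ) : ℕ) : K)) * Polynomial.X ^ (j : ℕ) with hq
  have hcoef : ∀ i : Fin n, Q.coeff ((i : ℕ) + 1) = 0 := by
    intro i
    have := congrFun hv i
    simp only [Matrix.mulVec, dotProduct, Matrix.of_apply, Pi.zero_apply] at this
    rw [hQ, Polynomial.finsetSum_coeff, ← this]
    refine sum_congr rfl fun j _ => ?_
    rw [Polynomial.coeff_C_mul, mul_comm]
  have hder : Q.derivative = lin ^ m * q.comp lin := by
    rw [hQ, hq, Polynomial.derivative_sum, Polynomial.sum_comp, Finset.mul_sum]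
    refine sum_congr rfl fun j _ => ?_
    have hl : Polynomial.derivative lin = 1 := by simp [hlin]
    simp only [Polynomial.derivative_C_mul, Polynomial.derivative_pow, hl,
      Polynomial.mul_comp, Polynomial.C_comp, Polynomial.pow_comp, Polynomial.X_comp,
      show m + 1 + (j : ℕ) - 1 = m + j by omega, Polynomial.C_mul, pow_add lin m]
    ring
  have hdvd : Polynomial.X ^ n ∣ lin ^ m * q.comp lin := by
    rw [← hder, Polynomial.X_pow_dvd_iff]
    intro d hd
    rw [Polynomial.coeff_derivative, hcoef ⟨d, hd⟩, zero_mul]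
  have hcop : IsCoprime (Polynomial.X ^ n : Polynomial K) (lin ^ m) := by
    refine IsCoprime.pow ⟨-Polynomial.C u⁻¹, Polynomial.C u⁻¹, ?_⟩
    rw [hlin, mul_add, ← Polynomial.C_mul, inv_mul_cancel₀ hu]
    simp
  have hdvd2 := hcop.dvd_of_dvd_mul_left hdvd
  have hlin1 : lin.natDegree = 1 := by
    rw [hlin, add_comm, Polynomial.natDegree_X_add_C]
  have hqdeg : q.degree < n := by
    rw [hq]
    refine (Polynomial.degree_sum_le _ _).trans_lt ?_
    refine (Finset.sup_lt_iff (WithBot.bot_lt_coe n)).2 fun j _ => ?_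
    exact (Polynomial.degree_C_mul_X_pow_le _ _).trans_lt (Nat.cast_lt.2 j.2)
  have hq0 : q = 0 := by
    by_contra hne
    have hne' : q.comp lin ≠ 0 := by
      intro h0
      have h1 := congrArg (fun P => Polynomial.comp P (Polynomial.X - Polynomial.C u)) h0
      simp only [Polynomial.comp_assoc, Polynomial.zero_comp, hlin, Polynomial.add_comp,
        Polynomial.C_comp, Polynomial.X_comp, add_sub_cancel, Polynomial.comp_X] at h1
      exact hne h1
    have h1 := Polynomial.natDegree_le_of_dvd hdvd2 hne'
    rw [Polynomial.natDegree_comp, hlin1, Polynomial.natDegree_X_pow, mul_one] at h1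
    have h2 := (Polynomial.natDegree_lt_iff_degree_lt hne).2 hqdeg
    omega
  funext j
  have h3 : q.coeff j = v j * ((m + 1 + (j : ℕ) : ℕ) : K) := by
    rw [hq, Polynomial.finsetSum_coeff, Finset.sum_eq_single j]
    · rw [Polynomial.coeff_C_mul_X_pow, if_pos rfl]
    · intro i _ hij
      rw [Polynomial.coeff_C_mul_X_pow, if_neg]
      intro h; exact hij (Fin.ext h.symm)
    · simp
  rw [hq0, Polynomial.coeff_zero] at h3
  exact (mul_eq_zero.1 h3.symm).resolve_right
    (hmn _ (by omega) (by have := j.2; omega))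

theorem exists_comb_add_X_pow {p : ℕ} [Fact p.Prime] {m n l : ℕ} {u : ℤ} (hu : ¬ (p : ℤ) ∣ u)
    (hp : m + n < p) (hl : 1 ≤ l) (hln : l ≤ n) :
    ∃ (c : Fin n → ℤ) (c₀ D : ℤ) (R : Polynomial ℤ), ¬ (p : ℤ) ∣ D ∧
      ∑ j : Fin n, Polynomial.C (c j) * (Polynomial.C u + Polynomial.X) ^ (m + 1 + (j : ℕ)) =
        Polynomial.C c₀ + Polynomial.C D * Polynomial.X ^ l + Polynomial.X ^ (n + 1) * R := by
  set A : Matrix (Fin n) (Fin n) ℤ := Matrix.of fun i j =>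
      ((Polynomial.C u + Polynomial.X : Polynomial ℤ) ^ (m + 1 + (j : ℕ))).coeff
        ((i : ℕ) + 1) with hA
  have hD : ¬ (p : ℤ) ∣ A.det := by
    intro h
    have h0 := (ZMod.intCast_zmod_eq_zero_iff_dvd _ p).2 h
    have hmap : ((A.det : ℤ) : ZMod p) = ((Int.castRingHom (ZMod p)).mapMatrix A).det := by
      rw [← RingHom.map_det]; rfl
    rw [hmap] at h0
    refine det_coeff_add_X_pow_ne_zero (K := ZMod p) (m := m) (n := n) (u := (u : ZMod p))
      (fun h => hu ((ZMod.intCast_zmod_eq_zero_iff_dvd _ p).1 h)) ?_ ?_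
    · intro i hi him h0
      have := Nat.le_of_dvd hi ((ZMod.natCast_eq_zero_iff i p).1 h0)
      omega
    · rw [← h0]
      congr 1
      ext i j
      simp only [hA, Matrix.of_apply, RingHom.mapMatrix_apply, Matrix.map_apply]
      rw [← Polynomial.coeff_map]
      simp
  set lf : Fin n := ⟨l - 1, by omega⟩ with hlf
  set P : Polynomial ℤ := ∑ j : Fin n,
    Polynomial.C (A.adjugate j lf) * (Polynomial.C u + Polynomial.X) ^ (m + 1 + (j : ℕ)) with hP
  have hcoef : ∀ i : Fin n, P.coeff ((i : ℕ) + 1) = if i = lf then A.det else 0 := by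
    intro i
    have h := congrFun (congrFun A.mul_adjugate i) lf
    rw [Matrix.mul_apply, Matrix.smul_apply, Matrix.one_apply] at h
    simp only [smul_eq_mul, mul_ite, mul_one, mul_zero] at h
    rw [← h, hP, Polynomial.finsetSum_coeff]
    refine sum_congr rfl fun j _ => ?_
    rw [Polynomial.coeff_C_mul, mul_comm]
    rfl
  have hdvd : Polynomial.X ^ (n + 1) ∣
      P - (Polynomial.C (P.coeff 0) + Polynomial.C A.det * Polynomial.X ^ l) := by
    rw [Polynomial.X_pow_dvd_iff]
    intro d hd
    rw [Polynomial.coeff_sub, Polynomial.coeff_add, Polynomial.coeff_C_mul_X_pow,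
      Polynomial.coeff_C]
    rcases d with _ | d
    · rw [if_pos rfl, if_neg (by omega)]; ring
    · have hc := hcoef ⟨d, by omega⟩
      simp only [hlf, Fin.mk.injEq] at hc
      rw [hc, if_neg (Nat.succ_ne_zero d)]
      by_cases hdl : d + 1 = l
      · rw [if_pos (by omega), if_pos hdl]; ring
      · rw [if_neg (by omega), if_neg hdl]; ring
  obtain ⟨R, hR⟩ := hdvd
  exact ⟨fun j => A.adjugate j lf, P.coeff 0, A.det, R, hD, by linear_combination hR⟩

/-- Rescaled version: integer combinations of `(u + p^a y)^j` over `n` consecutive exponents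
isolate `y^l` modulo `p`. -/
theorem exists_comb_rescaled {p : ℕ} [Fact p.Prime] {m n l a : ℕ} {u : ℤ} (hu : ¬ (p : ℤ) ∣ u)
    (hp : m + n < p) (hl : 1 ≤ l) (hln : l ≤ n) (ha : 1 ≤ a) :
    ∃ (c : Fin n → ℤ) (c₀ D : ℤ) (Q : Polynomial ℤ), ¬ (p : ℤ) ∣ D ∧
      ∀ y : ℤ, ∑ j : Fin n, c j * (u + (p : ℤ) ^ a * y) ^ (m + 1 + (j : ℕ)) =
        c₀ + (p : ℤ) ^ (l * a) *
          (Polynomial.C D * Polynomial.X ^ l + Polynomial.C (p : ℤ) * Q).eval y := by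
  obtain ⟨c, c₀, D, R, hD, h⟩ := exists_comb_add_X_pow hu hp hl hln
  refine ⟨c, c₀, D, Polynomial.C ((p : ℤ) ^ ((n + 1 - l) * a - 1)) * Polynomial.X ^ (n + 1) *
    R.comp (Polynomial.C ((p : ℤ) ^ a) * Polynomial.X), hD, fun y => ?_⟩
  have h1 := congrArg (Polynomial.eval ((p : ℤ) ^ a * y)) h
  simp only [Polynomial.eval_finsetSum, Polynomial.eval_mul, Polynomial.eval_C,
    Polynomial.eval_pow, Polynomial.eval_add, Polynomial.eval_X] at h1
  simp only [Polynomial.eval_mul, Polynomial.eval_C,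
    Polynomial.eval_pow, Polynomial.eval_add, Polynomial.eval_X, Polynomial.eval_comp]
  rw [h1]
  have h2 : (p : ℤ) ^ (l * a) * ((p : ℤ) * (p : ℤ) ^ ((n + 1 - l) * a - 1)) =
      ((p : ℤ) ^ a) ^ (n + 1) := by
    rw [← pow_succ', ← pow_add, ← pow_mul]
    congr 1
    obtain ⟨e, he⟩ : ∃ e, n + 1 = l + e + 1 := ⟨n - l, by omega⟩
    rw [he, show l + e + 1 - l = e + 1 by omega]
    have : 1 ≤ (e + 1) * a := Nat.mul_pos (by omega) ha
    rw [Nat.sub_add_cancel this]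
    ring
  rw [mul_pow, mul_pow, ← pow_mul (p : ℤ) a l, mul_comm a l]
  linear_combination (-(y ^ (n + 1) * Polynomial.eval ((p : ℤ) ^ a * y) R)) * h2

/-! ### Counting solutions of the auxiliary congruences -/

/-- The exponent of `p ^ b` lost by lifting the low degree congruences. -/
def muN (k r t : ℕ) : ℕ := ∑ j ∈ Finset.Ioc (k - r) t, (t - j)

/-- The exponent of `p ^ a` lost by isolating the variables. -/
def nuN (k r t : ℕ) : ℕ := ∑ l ∈ Finset.Ico (k - t) r, l

theorem modEq_pow_of_mul_pow {p : ℕ} (hp : 0 < p) {A B : ℤ} {e E : ℕ}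
    (h : (p : ℤ) ^ e * A ≡ (p : ℤ) ^ e * B [ZMOD (p : ℤ) ^ E]) :
    A ≡ B [ZMOD (p : ℤ) ^ (E - e)] := by
  rcases le_total e E with hle | hle
  · have hpe : (p : ℤ) ^ e ≠ 0 := by positivity
    have hd := h.dvd
    rw [← mul_sub, ← Nat.add_sub_cancel' hle, pow_add] at hd
    exact Int.modEq_iff_dvd.2 (Int.dvd_of_mul_dvd_mul_left hpe hd)
  · rw [Nat.sub_eq_zero_of_le hle, pow_zero]
    exact Int.modEq_one

theorem sum_modEq_of_comb {p : ℕ} (hp : 0 < p) {r n m e E : ℕ} {c : Fin n → ℤ} {c₀ : ℤ}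
    {Ψ : ℤ → ℤ} {g : ℤ → ℤ}
    (hc : ∀ y : ℤ, ∑ j : Fin n, c j * g y ^ (m + 1 + (j : ℕ)) = c₀ + (p : ℤ) ^ e * Ψ y)
    (y z : Fin r → ℤ)
    (h : ∀ j : Fin n, ∑ i, g (y i) ^ (m + 1 + (j : ℕ)) ≡
      ∑ i, g (z i) ^ (m + 1 + (j : ℕ)) [ZMOD (p : ℤ) ^ E]) :
    ∑ i, Ψ (y i) ≡ ∑ i, Ψ (z i) [ZMOD (p : ℤ) ^ (E - e)] := by
  have key : ∀ w : Fin r → ℤ, (p : ℤ) ^ e * ∑ i, Ψ (w i) =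
      ∑ j : Fin n, c j * ∑ i, g (w i) ^ (m + 1 + (j : ℕ)) - r * c₀ := by
    intro w
    simp_rw [Finset.mul_sum]
    rw [sum_comm]
    simp_rw [hc, sum_add_distrib]
    simp
  apply modEq_pow_of_mul_pow hp
  rw [key, key]
  refine Int.ModEq.sub ?_ rfl
  exact Int.ModEq.sum fun j _ => (h j).mul_left _

theorem card_le_of_congruences {p : ℕ} [Fact p.Prime] {k r t a b : ℕ} (hkp : k < p)
    (ht1 : k ≤ 2 * t + 1) (ht2 : t ≤ k) (ht : 1 ≤ t) (hr1 : 1 ≤ r) (hr2 : r ≤ k)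
    (hrt : k ≤ r + t) (hab : a < b) (hta : t * a ≤ b) (ξ η : ℤ) (S : Finset (Fin r → ℤ))
    (h1 : ∀ x ∈ S, ∀ i, x i ≡ ξ [ZMOD (p : ℤ) ^ a])
    (h2 : ∀ x ∈ S, ∀ i j, x i ≡ x j [ZMOD (p : ℤ) ^ (a + 1)] → i = j)
    (h3 : ∀ x ∈ S, ∀ i, ¬ x i ≡ η [ZMOD p])
    (h4 : ∀ x ∈ S, ∀ y ∈ S, ∀ j, 1 ≤ j → j ≤ k →
      ∑ i, (x i - η) ^ j ≡ ∑ i, (y i - η) ^ j [ZMOD (p : ℤ) ^ (j * b)])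
    (h5 : ∀ x ∈ S, ∀ y ∈ S, (∀ i, x i ≡ y i [ZMOD (p : ℤ) ^ (t * b)]) → x = y) :
    S.card ≤ r ^ r * p ^ (muN k r t * b + nuN k r t * a) := by
  have hp : 0 < p := (Fact.out : p.Prime).pos
  have hb : 1 ≤ b := by omega
  obtain ⟨S₁, hS₁, hcard₁, hmod₁⟩ := exists_subset_forall_modEq_pow hp (Finset.Ioc (k - r) t) S
    (fun j x => ∑ i, (x i - η) ^ j) (fun j => j * b) (fun _ => t * b) (fun j => (t - j) * b)
    (by
      intro j hj
      rw [← add_mul, Nat.add_sub_cancel' (Finset.mem_Ioc.1 hj).2])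
    (by
      intro j hj x hx y hy
      have := Finset.mem_Ioc.1 hj
      exact h4 x hx y hy j (by omega) (by omega))
  rw [← Finset.sum_mul] at hcard₁
  change S.card ≤ p ^ (muN k r t * b) * S₁.card at hcard₁
  have htop : ∀ j, k - r < j → j ≤ k → ∀ x ∈ S₁, ∀ y ∈ S₁,
      ∑ i, (x i - η) ^ j ≡ ∑ i, (y i - η) ^ j [ZMOD (p : ℤ) ^ (t * b)] := by
    intro j hj hjk x hx y hy
    rcases le_or_gt j t with hjt | hjt
    · exact hmod₁ j (Finset.mem_Ioc.2 ⟨hj, hjt⟩) x hx y hy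
    · exact (h4 x (hS₁ hx) y (hS₁ hy) j (by omega) hjk).of_dvd
        (pow_dvd_pow _ (Nat.mul_le_mul_right _ hjt.le))
  have hcast : ∀ n : ℕ, 0 < n → n ≤ k → (n : ZMod p) ≠ 0 := by
    intro n hn hnk h0
    have := Nat.le_of_dvd hn ((ZMod.natCast_eq_zero_iff n p).1 h0)
    omega
  suffices H : S₁.card ≤ r ^ r * p ^ (nuN k r t * a) by
    calc S.card ≤ p ^ (muN k r t * b) * S₁.card := hcard₁
      _ ≤ p ^ (muN k r t * b) * (r ^ r * p ^ (nuN k r t * a)) := by gcongr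
      _ = _ := by rw [pow_add]; ring
  rcases Nat.eq_zero_or_pos a with rfl | ha
  · have hinj : Set.InjOn (fun (x : Fin r → ℤ) i => x i - η) S₁ := by
      intro x _ y _ hxy
      funext i
      have := congrFun hxy i
      simpa using this
    rw [mul_zero, pow_zero, mul_one, ← Finset.card_image_of_injOn hinj]
    refine card_le_of_psum_of_nonsingular (p := p) (by omega) _
      (fun l => Polynomial.X ^ (k - r + 1 + (l : ℕ))) (t * b) ?_ ?_ ?_ ?_
    · intro y hy v hv
      obtain ⟨x, hx, rfl⟩ := Finset.mem_image.1 hy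
      have hne : ∀ i, ((x i - η : ℤ) : ZMod p) ≠ 0 := by
        intro i h0
        refine h3 x (hS₁ hx) i (Int.ModEq.symm (Int.modEq_iff_dvd.2 ?_))
        exact (ZMod.intCast_zmod_eq_zero_iff_dvd _ p).1 h0
      have hvz : (fun i => v i * ((x i - η : ℤ) : ZMod p) ^ (k - r)) = 0 := by
        refine Matrix.eq_zero_of_forall_pow_sum_mul_pow_eq_zero
          (f := fun i => ((x i - η : ℤ) : ZMod p)) ?_ ?_
        · intro i j hij
          apply h2 x (hS₁ hx)
          have := (ZMod.intCast_eq_intCast_iff _ _ p).1 hij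
          simpa using this.add_right η
        · intro l
          have h := hv l
          have hl := l.2
          simp only [Polynomial.derivative_X_pow, Polynomial.eval_mul, Polynomial.eval_pow,
            Polynomial.eval_X, Polynomial.eval_C,
            show k - r + 1 + (l : ℕ) - 1 = k - r + l by omega] at h
          have h' : ((k - r + 1 + (l : ℕ) : ℕ) : ZMod p) *
              ∑ j, v j * ((x j - η : ℤ) : ZMod p) ^ (k - r) *
                ((x j - η : ℤ) : ZMod p) ^ (l : ℕ) = 0 := by
            rw [← h, Finset.mul_sum]
            refine sum_congr rfl fun j _ => ?_
            push_cast
            ring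
          exact (mul_eq_zero.1 h').resolve_left (hcast _ (by omega) (by omega))
      funext i
      exact (mul_eq_zero.1 (congrFun hvz i)).resolve_right (pow_ne_zero _ (hne i))
    · intro y hy z hz l hl hlr
      obtain ⟨x, hx, rfl⟩ := Finset.mem_image.1 hy
      obtain ⟨x', hx', rfl⟩ := Finset.mem_image.1 hz
      exact (h4 x (hS₁ hx) x' (hS₁ hx') l hl (by omega)).of_dvd
        (dvd_pow_self _ (Nat.mul_ne_zero (by omega) (by omega)))
    · intro y hy z hz l
      obtain ⟨x, hx, rfl⟩ := Finset.mem_image.1 hy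
      obtain ⟨x', hx', rfl⟩ := Finset.mem_image.1 hz
      have hl := l.2
      simpa using htop (k - r + 1 + l) (by omega) (by omega) x hx x' hx'
    · intro y hy z hz hyz
      obtain ⟨x, hx, rfl⟩ := Finset.mem_image.1 hy
      obtain ⟨x', hx', rfl⟩ := Finset.mem_image.1 hz
      rw [h5 x (hS₁ hx) x' (hS₁ hx') fun i => by simpa using (hyz i).add_right η]
  · rcases S₁.eq_empty_or_nonempty with rfl | ⟨x₀, hx₀⟩
    · simp
    have hpa : (p : ℤ) ^ a ≠ 0 := by positivity
    have hu : ¬ (p : ℤ) ∣ ξ - η := by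
      intro h
      apply h3 x₀ (hS₁ hx₀) ⟨0, hr1⟩
      have e1 := (h1 x₀ (hS₁ hx₀) ⟨0, hr1⟩).of_dvd (dvd_pow_self (p : ℤ) ha.ne')
      exact e1.trans (Int.modEq_iff_dvd.2 h).symm
    set Y : (Fin r → ℤ) → Fin r → ℤ := fun x i => (x i - ξ) / (p : ℤ) ^ a with hY
    have hYx : ∀ x ∈ S₁, ∀ i, x i = ξ + (p : ℤ) ^ a * Y x i := by
      intro x hx i
      have := Int.mul_ediv_cancel' ((h1 x (hS₁ hx) i).symm.dvd)
      rw [hY]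
      linear_combination -this
    have hsum : ∀ x ∈ S₁, ∀ j : ℕ, ∑ i, (ξ - η + (p : ℤ) ^ a * Y x i) ^ j =
        ∑ i, (x i - η) ^ j := by
      intro x hx j
      refine sum_congr rfl fun i _ => ?_
      rw [hYx x hx i]
      ring
    have hex : ∀ l : Fin r, ∃ (D : ℤ) (Q : Polynomial ℤ), ¬ (p : ℤ) ∣ D ∧
        ∀ x ∈ S₁, ∀ x' ∈ S₁,
          ∑ i, (Polynomial.C D * Polynomial.X ^ ((l : ℕ) + 1) + Polynomial.C (p : ℤ) * Q).eval
            (Y x i) ≡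
          ∑ i, (Polynomial.C D * Polynomial.X ^ ((l : ℕ) + 1) + Polynomial.C (p : ℤ) * Q).eval
            (Y x' i)
          [ZMOD (p : ℤ) ^ (if (l : ℕ) < k - t then t * b - a else t * b - (l + 1) * a)] := by
      intro l
      have hl := l.2
      split_ifs with hlt
      · obtain ⟨c, c₀, D, Q, hD, hc⟩ := exists_comb_rescaled (m := t) (n := k - t)
          (l := (l : ℕ) + 1) hu (by omega) (by omega) (by omega) ha
        refine ⟨D, Q, hD, fun x hx x' hx' => ?_⟩
        refine Int.ModEq.of_dvd (pow_dvd_pow _ ?_)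
          (sum_modEq_of_comb hp (E := (t + 1) * b) hc (Y x) (Y x') ?_)
        · have : (l : ℕ) * a ≤ t * a := Nat.mul_le_mul_right _ (by omega)
          have e1 : (t + 1) * b = t * b + b := by ring
          have e2 : ((l : ℕ) + 1) * a = l * a + a := by ring
          omega
        · intro j
          have hj := j.2
          rw [hsum x hx, hsum x' hx']
          refine (h4 x (hS₁ hx) x' (hS₁ hx') _ (by omega) (by omega)).of_dvd
            (pow_dvd_pow _ (Nat.mul_le_mul_right _ (by omega)))
      · obtain ⟨c, c₀, D, Q, hD, hc⟩ := exists_comb_rescaled (m := k - r) (n := r)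
          (l := (l : ℕ) + 1) hu (by omega) (by omega) (by omega) ha
        refine ⟨D, Q, hD, fun x hx x' hx' => ?_⟩
        refine sum_modEq_of_comb hp (E := t * b) hc (Y x) (Y x') ?_
        intro j
        have hj := j.2
        rw [hsum x hx, hsum x' hx']
        exact htop _ (by omega) (by omega) x hx x' hx'
    choose D Q hD hDQ using hex
    obtain ⟨S₂, hS₂, hcard₂, hmod₂⟩ := exists_subset_forall_modEq_pow hp univ S₁
      (fun (l : Fin r) x => ∑ i, (Polynomial.C (D l) * Polynomial.X ^ ((l : ℕ) + 1) +
        Polynomial.C (p : ℤ) * Q l).eval (Y x i))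
      (fun l => if (l : ℕ) < k - t then t * b - a else t * b - (l + 1) * a) (fun _ => t * b - a)
      (fun l => if (l : ℕ) < k - t then 0 else l * a)
      (by
        intro l _
        split_ifs
        · simp
        · have e2 : ((l : ℕ) + 1) * a = l * a + a := by ring
          omega)
      (fun l _ => hDQ l)
    have he : ∑ l : Fin r, (if (l : ℕ) < k - t then 0 else (l : ℕ) * a) = nuN k r t * a := by
      rw [Fin.sum_univ_eq_sum_range (fun l => if l < k - t then 0 else l * a) r, nuN,
        Finset.sum_mul, Finset.sum_ite, Finset.sum_const_zero, zero_add]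
      refine sum_congr ?_ fun _ _ => rfl
      ext l
      simp only [mem_filter, mem_range, not_lt, mem_Ico]
      tauto
    rw [he] at hcard₂
    suffices H : S₂.card ≤ r ^ r by
      calc S₁.card ≤ p ^ (nuN k r t * a) * S₂.card := hcard₂
        _ ≤ p ^ (nuN k r t * a) * r ^ r := by gcongr
        _ = _ := mul_comm _ _
    have hS₂' : S₂ ⊆ S := hS₂.trans hS₁
    have hab' : a ≤ t * b := by nlinarith
    have hab'' : t * b - a ≠ 0 := by
      have : b ≤ t * b := Nat.le_mul_of_pos_left _ ht
      omega
    have hYinj : Set.InjOn Y S₂ := by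
      intro x hx x' hx' h
      funext i
      rw [hYx x (hS₂ hx) i, hYx x' (hS₂ hx') i, h]
    rw [← Finset.card_image_of_injOn hYinj]
    have hDz : ∀ l, ((D l : ℤ) : ZMod p) ≠ 0 := fun l h =>
      hD l ((ZMod.intCast_zmod_eq_zero_iff_dvd _ p).1 h)
    refine card_le_of_psum_of_nonsingular (p := p) (by omega) _
      (fun l => Polynomial.C (D l) * Polynomial.X ^ ((l : ℕ) + 1) + Polynomial.C (p : ℤ) * Q l)
      (t * b - a) ?_ ?_ ?_ ?_
    · intro y hy v hv
      obtain ⟨x, hx, rfl⟩ := Finset.mem_image.1 hy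
      refine Matrix.eq_zero_of_forall_pow_sum_mul_pow_eq_zero
          (f := fun i => ((Y x i : ℤ) : ZMod p)) ?_ ?_
      · intro i j hij
        apply h2 x (hS₂' hx)
        obtain ⟨w, hw⟩ := ((ZMod.intCast_eq_intCast_iff _ _ p).1 hij).dvd
        rw [hYx x (hS₂ hx) i, hYx x (hS₂ hx) j]
        refine Int.modEq_iff_dvd.2 ⟨w, ?_⟩
        rw [pow_succ]
        linear_combination (p : ℤ) ^ a * hw
      · intro l
        have h := hv l
        have hl := l.2
        simp only [Polynomial.derivative_add, Polynomial.derivative_C_mul,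
          Polynomial.derivative_X_pow, Polynomial.eval_add, Polynomial.eval_mul,
          Polynomial.eval_pow, Polynomial.eval_X, Polynomial.eval_C, add_tsub_cancel_right] at h
        have h' : ((D l : ℤ) : ZMod p) * (((l : ℕ) + 1 : ℕ) : ZMod p) *
            ∑ j, v j * ((Y x j : ℤ) : ZMod p) ^ (l : ℕ) = 0 := by
          rw [← h, Finset.mul_sum]
          refine sum_congr rfl fun j _ => ?_
          push_cast
          rw [ZMod.natCast_self]
          ring
        exact (mul_eq_zero.1 h').resolve_left
          (mul_ne_zero (hDz l) (hcast _ (by omega) (by omega)))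
    · intro y hy z hz l hl hlr
      obtain ⟨x, hx, rfl⟩ := Finset.mem_image.1 hy
      obtain ⟨x', hx', rfl⟩ := Finset.mem_image.1 hz
      have h := (hmod₂ ⟨l - 1, by omega⟩ (mem_univ _) x hx x' hx').of_dvd
        (dvd_pow_self (p : ℤ) hab'')
      rw [← ZMod.intCast_eq_intCast_iff] at h ⊢
      simp only [Polynomial.eval_add, Polynomial.eval_mul,
          Polynomial.eval_pow, Polynomial.eval_X, Polynomial.eval_C, Nat.sub_add_cancel hl] at h
      push_cast at h ⊢
      simp only [ZMod.natCast_self, zero_mul, add_zero, ← Finset.mul_sum] at h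
      exact mul_left_cancel₀ (hDz _) h
    · intro y hy z hz l
      obtain ⟨x, hx, rfl⟩ := Finset.mem_image.1 hy
      obtain ⟨x', hx', rfl⟩ := Finset.mem_image.1 hz
      exact hmod₂ l (mem_univ _) x hx x' hx'
    · intro y hy z hz hyz
      obtain ⟨x, hx, rfl⟩ := Finset.mem_image.1 hy
      obtain ⟨x', hx', rfl⟩ := Finset.mem_image.1 hz
      rw [h5 x (hS₂' hx) x' (hS₂' hx') fun i => ?_]
      obtain ⟨w, hw⟩ := (hyz i).dvd
      rw [hYx x (hS₂ hx) i, hYx x' (hS₂ hx') i]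
      refine Int.modEq_iff_dvd.2 ⟨w, ?_⟩
      rw [← Nat.add_sub_cancel' hab', pow_add]
      linear_combination (p : ℤ) ^ a * hw

/-- The character `α ↦ e(α · n)` of the torus attached to `n ∈ ℤ^k`. -/
def chi {k : ℕ} (n : Fin k → ℤ) (α : Fin k → ℝ) : ℂ := ec (∑ j, α j * (n j : ℝ))

lemma ec_add (x y : ℝ) : ec (x + y) = ec x * ec y := by
  simp only [ec]
  rw [← Complex.exp_add]
  push_cast
  ring_nf

lemma ec_zero : ec 0 = 1 := by simp [ec]

lemma conj_ec (x : ℝ) : star (ec x) = ec (-x) := by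
  rw [ec, ec, Complex.star_def, ← Complex.exp_conj]
  simp [Complex.conj_ofNat]

lemma continuous_ec : Continuous ec := by
  unfold ec
  fun_prop

lemma chi_zero {k : ℕ} : chi (0 : Fin k → ℤ) = 1 := by
  funext α
  simp [chi, ec_zero]

lemma chi_add {k : ℕ} (m n : Fin k → ℤ) : chi (m + n) = chi m * chi n := by
  funext α
  simp only [chi, Pi.mul_apply, Pi.add_apply]
  rw [← ec_add, ← sum_add_distrib]
  congr 1
  refine sum_congr rfl fun j _ => ?_
  push_cast
  ring

lemma star_chi {k : ℕ} (n : Fin k → ℤ) : star (chi n) = chi (-n) := by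
  funext α
  simp [chi, conj_ec, -Complex.star_def]

lemma chi_sum {k : ℕ} {ι : Type*} (s : Finset ι) (n : ι → Fin k → ℤ) :
    chi (∑ i ∈ s, n i) = ∏ i ∈ s, chi (n i) := by
  induction s using Finset.induction_on with
  | empty => simp [chi_zero]
  | insert i s hi ih => rw [sum_insert hi, prod_insert hi, chi_add, ih]

lemma continuous_chi {k : ℕ} (n : Fin k → ℤ) : Continuous (chi n) := by
  unfold chi
  have := continuous_ec
  fun_prop

lemma integrableOn_box {k : ℕ} {E : Type*} [NormedAddCommGroup E] {f : (Fin k → ℝ) → E}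
    (hf : Continuous f) : IntegrableOn f (box k) := by
  have h : IntegrableOn f (Set.Icc (0 : Fin k → ℝ) 1) := hf.continuousOn.integrableOn_Icc
  refine h.mono_set fun α hα => ?_
  have hα' : ∀ i, α i ∈ Set.Ico (0 : ℝ) 1 := fun i => hα i (Set.mem_univ i)
  exact ⟨fun i => (hα' i).1, fun i => (hα' i).2.le⟩

lemma integral_ec_mul_int (n : ℤ) :
    ∫ x in Set.Ico (0 : ℝ) 1, ec (x * n) = if n = 0 then 1 else 0 := by
  rw [integral_Ico_eq_integral_Ioc, ← intervalIntegral.integral_of_le zero_le_one]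
  split_ifs with hn
  · simp [hn, ec_zero]
  · have hc : (2 * Real.pi * Complex.I * n : ℂ) ≠ 0 := by
      simp [Real.pi_ne_zero, Complex.I_ne_zero, hn]
    have h1 : ∀ x : ℝ, ec (x * n) = Complex.exp ((2 * Real.pi * Complex.I * n) * x) := by
      intro x
      simp only [ec]
      push_cast
      ring_nf
    simp only [h1]
    rw [integral_exp_mul_complex hc]
    have h2 : Complex.exp (2 * Real.pi * Complex.I * n * (1 : ℝ)) = 1 := by
      have := Complex.exp_int_mul_two_pi_mul_I n
      rw [← this]
      push_cast
      ring_nf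
    rw [h2]
    simp

lemma integral_chi {k : ℕ} (n : Fin k → ℤ) :
    ∫ α in box k, chi n α = if n = 0 then 1 else 0 := by
  have h1 : ∀ α : Fin k → ℝ, chi n α = ∏ j, ec (α j * n j) := by
    intro α
    have : ∀ s : Finset (Fin k), ec (∑ j ∈ s, α j * (n j : ℝ)) = ∏ j ∈ s, ec (α j * n j) := by
      intro s
      induction s using Finset.induction_on with
      | empty => simp [ec_zero]
      | insert i s hi ih => rw [sum_insert hi, prod_insert hi, ec_add, ih]
    exact this univ
  simp only [h1]
  have hbox : box k = Set.univ.pi fun _ => Set.Ico (0 : ℝ) 1 := rfl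
  rw [hbox, volume_pi, Measure.restrict_pi_pi]
  rw [integral_fintype_prod_eq_prod (fun j (x : ℝ) => ec (x * n j))]
  simp only [integral_ec_mul_int]
  split_ifs with h
  · simp [h]
  · obtain ⟨j, hj⟩ := Function.ne_iff.mp h
    exact prod_eq_zero (mem_univ j) (by simpa using hj)

/-- The characters with frequency in a subgroup `V`, as a multiplicative monoid. -/
def chiMonoid {k : ℕ} (V : AddSubgroup (Fin k → ℤ)) : Submonoid ((Fin k → ℝ) → ℂ) where
  carrier := chi '' V
  mul_mem' := by
    rintro _ _ ⟨m, hm, rfl⟩ ⟨n, hn, rfl⟩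
    exact ⟨m + n, V.add_mem hm hn, chi_add m n⟩
  one_mem' := ⟨0, V.zero_mem, chi_zero⟩

/-- Trigonometric polynomials with frequencies in `V` and nonnegative integral coefficients. -/
def posTrig {k : ℕ} (V : AddSubgroup (Fin k → ℤ)) : Subsemiring ((Fin k → ℝ) → ℂ) :=
  (chiMonoid V).subsemiringClosure

section posTrig

variable {k : ℕ} {V : AddSubgroup (Fin k → ℤ)} {G G' : (Fin k → ℝ) → ℂ}

lemma posTrig_induction {P : ((Fin k → ℝ) → ℂ) → Prop} (hG : G ∈ posTrig V)
    (hchi : ∀ n ∈ V, P (chi n)) (h0 : P 0) (hadd : ∀ G G', G ∈ posTrig V → G' ∈ posTrig V →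
      P G → P G' → P (G + G')) : P G := by
  have h := hG
  rw [posTrig, Submonoid.subsemiringClosure_mem] at h
  have key : ∀ F, F ∈ AddSubmonoid.closure ((chiMonoid V : Set ((Fin k → ℝ) → ℂ))) ↔
      F ∈ posTrig V := fun F => by rw [posTrig, Submonoid.subsemiringClosure_mem]
  refine AddSubmonoid.closure_induction (motive := fun F _ => P F) ?_ h0 ?_ h
  · rintro _ ⟨n, hn, rfl⟩
    exact hchi n hn
  · intro F F' hF hF' h1 h2
    exact hadd F F' ((key F).1 hF) ((key F').1 hF') h1 h2

lemma chi_mem_posTrig {n : Fin k → ℤ} (hn : n ∈ V) : chi n ∈ posTrig V := by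
  rw [posTrig, Submonoid.subsemiringClosure_mem]
  exact AddSubmonoid.subset_closure ⟨n, hn, rfl⟩

lemma star_mem_posTrig (hG : G ∈ posTrig V) : star G ∈ posTrig V := by
  refine posTrig_induction (P := fun G => star G ∈ posTrig V) hG ?_ ?_ ?_
  · intro n hn
    rw [star_chi]
    exact chi_mem_posTrig (V.neg_mem hn)
  · simp [zero_mem]
  · intro F F' _ _ h h'
    rw [star_add]
    exact add_mem h h'

lemma continuous_of_mem_posTrig (hG : G ∈ posTrig V) : Continuous G := by
  refine posTrig_induction (P := Continuous) hG (fun n _ => continuous_chi n) ?_ ?_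
  · exact continuous_const
  · intro F F' _ _ h h'
    exact h.add h'

lemma posTrig_le_top : posTrig V ≤ posTrig ⊤ := by
  intro G hG
  refine posTrig_induction (P := fun G => G ∈ posTrig ⊤) hG
    (fun n _ => chi_mem_posTrig (AddSubgroup.mem_top n)) (zero_mem _) ?_
  intro F F' _ _ h h'
  exact add_mem h h'

lemma integral_re_nonneg_of_mem_posTrig (hG : G ∈ posTrig V) :
    0 ≤ (∫ α in box k, G α).re := by
  refine posTrig_induction (P := fun G => 0 ≤ (∫ α in box k, G α).re) hG ?_ ?_ ?_
  · intro n _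
    rw [integral_chi]
    split_ifs <;> simp
  · simp
  · intro F F' hF hF' h h'
    simp only [Pi.add_apply]
    rw [integral_add (integrableOn_box (continuous_of_mem_posTrig hF))
      (integrableOn_box (continuous_of_mem_posTrig hF')), Complex.add_re]
    exact add_nonneg h h'

lemma integral_chi_mul_eq_zero {n : Fin k → ℤ} (hn : n ∉ V) (hG : G ∈ posTrig V) :
    ∫ α in box k, chi n α * G α = 0 := by
  refine posTrig_induction (P := fun G => ∫ α in box k, chi n α * G α = 0) hG ?_ ?_ ?_
  · intro m hm
    have h1 : ∀ α, chi n α * chi m α = chi (n + m) α := fun α => by rw [chi_add]; rfl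
    simp only [h1]
    rw [integral_chi, if_neg]
    intro h0
    apply hn
    rw [eq_neg_of_add_eq_zero_left h0]
    exact V.neg_mem hm
  · simp
  · intro F F' hF hF' h h'
    simp only [Pi.add_apply, mul_add]
    have h1 := (continuous_chi n).mul (continuous_of_mem_posTrig hF)
    have h2 := (continuous_chi n).mul (continuous_of_mem_posTrig hF')
    have h3 := integral_add (integrableOn_box h1) (integrableOn_box h2)
    simp only [Pi.mul_apply] at h3
    rw [h3, h, h', add_zero]

lemma integral_re_le_of_sub_mem (hG : Continuous G) (hG' : Continuous G')
    (h : G' - G ∈ posTrig V) : (∫ α in box k, G α).re ≤ (∫ α in box k, G' α).re := by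
  have h1 := integral_re_nonneg_of_mem_posTrig h
  simp only [Pi.sub_apply] at h1
  rw [integral_sub (integrableOn_box hG') (integrableOn_box hG), Complex.sub_re] at h1
  linarith

lemma mul_sub_mul_mem {A B C D : (Fin k → ℝ) → ℂ} (hB : B ∈ posTrig V) (hC : C ∈ posTrig V)
    (h1 : B - A ∈ posTrig V) (h2 : D - C ∈ posTrig V) : B * D - A * C ∈ posTrig V := by
  have : B * D - A * C = B * (D - C) + (B - A) * C := by ring
  rw [this]
  exact add_mem (mul_mem hB h2) (mul_mem h1 hC)

lemma pow_sub_pow_mem {A B : (Fin k → ℝ) → ℂ} (hA : A ∈ posTrig V) (hB : B ∈ posTrig V)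
    (h : B - A ∈ posTrig V) (n : ℕ) : B ^ n - A ^ n ∈ posTrig V := by
  induction n with
  | zero => simp [zero_mem]
  | succ n ih =>
    rw [pow_succ, pow_succ]
    exact mul_sub_mul_mem (pow_mem hB n) hA ih h

lemma mul_star_sub_mul_star_mem {A B : (Fin k → ℝ) → ℂ} (hA : A ∈ posTrig V)
    (hB : B ∈ posTrig V) (h : B - A ∈ posTrig V) : B * star B - A * star A ∈ posTrig V := by
  refine mul_sub_mul_mem hB (star_mem_posTrig hA) h ?_
  rw [← star_sub]
  exact star_mem_posTrig h

end posTrig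

lemma mul_star_apply {k : ℕ} (G : (Fin k → ℝ) → ℂ) (α : Fin k → ℝ) :
    (G * star G) α = ((‖G α‖ ^ 2 : ℝ) : ℂ) := by
  simp only [Pi.mul_apply, Pi.star_apply, Complex.star_def, Complex.mul_conj']
  push_cast
  rfl

lemma integral_rpow_mul_rpow_le {k : ℕ} {A B : (Fin k → ℝ) → ℝ} (hA : Continuous A)
    (hB : Continuous B) (hA0 : ∀ α, 0 ≤ A α) (hB0 : ∀ α, 0 ≤ B α) {x y : ℝ} (hx : 0 < x)
    (hy : 0 < y) (hxy : x + y = 1) :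
    ∫ α in box k, A α ^ x * B α ^ y ≤ (∫ α in box k, A α) ^ x * (∫ α in box k, B α) ^ y := by
  have hpq : x⁻¹.HolderConjugate y⁻¹ := by
    rw [Real.holderConjugate_iff]
    refine ⟨(one_lt_inv₀ hx).2 (by linarith), ?_⟩
    simpa using hxy
  have key : ∀ {D : (Fin k → ℝ) → ℝ}, Continuous D → (∀ α, 0 ≤ D α) → ∀ {z : ℝ}, 0 < z →
      MemLp (fun α => D α ^ z) (ENNReal.ofReal z⁻¹) (volume.restrict (box k)) := by
    intro D hD hD0 z hz
    have hc : Continuous fun α => D α ^ z := hD.rpow_const fun _ => Or.inr hz.le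
    rw [← integrable_norm_rpow_iff hc.aestronglyMeasurable (by simpa using hz)
      ENNReal.ofReal_ne_top]
    have : ∀ α, ‖D α ^ z‖ ^ (ENNReal.ofReal z⁻¹).toReal = D α := by
      intro α
      rw [ENNReal.toReal_ofReal (inv_nonneg.2 hz.le), Real.norm_of_nonneg
        (Real.rpow_nonneg (hD0 α) _), ← Real.rpow_mul (hD0 α), mul_inv_cancel₀ hz.ne',
        Real.rpow_one]
    simp only [this]
    exact integrableOn_box hD
  have h := integral_mul_le_Lp_mul_Lq_of_nonneg hpq (μ := volume.restrict (box k))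
    (Eventually.of_forall fun α => Real.rpow_nonneg (hA0 α) x)
    (Eventually.of_forall fun α => Real.rpow_nonneg (hB0 α) y) (key hA hA0 hx) (key hB hB0 hy)
  have h1 : ∀ α, (A α ^ x) ^ x⁻¹ = A α := fun α => by
    rw [← Real.rpow_mul (hA0 α), mul_inv_cancel₀ hx.ne', Real.rpow_one]
  have h2 : ∀ α, (B α ^ y) ^ y⁻¹ = B α := fun α => by
    rw [← Real.rpow_mul (hB0 α), mul_inv_cancel₀ hy.ne', Real.rpow_one]
  simpa only [h1, h2, one_div, inv_inv] using h

/-- A weighted Hölder inequality on the unit box. -/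
lemma integral_mul_pow_mul_pow_le {k : ℕ} {w u v : (Fin k → ℝ) → ℝ} (hw : Continuous w)
    (hu : Continuous u) (hv : Continuous v) (hw0 : ∀ α, 0 ≤ w α) (hu0 : ∀ α, 0 ≤ u α)
    (hv0 : ∀ α, 0 ≤ v α) {m n : ℕ} (hm : 0 < m) (hn : 0 < n) :
    ∫ α in box k, w α * u α ^ m * v α ^ n ≤
      (∫ α in box k, w α * u α ^ (m + n)) ^ ((m : ℝ) / (m + n)) *
        (∫ α in box k, w α * v α ^ (m + n)) ^ ((n : ℝ) / (m + n)) := by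
  have hm' : (0 : ℝ) < m := by exact_mod_cast hm
  have hn' : (0 : ℝ) < n := by exact_mod_cast hn
  have hxy : (m : ℝ) / (m + n) + n / (m + n) = 1 := by field_simp
  refine le_trans (le_of_eq ?_) (integral_rpow_mul_rpow_le (hw.mul (hu.pow (m + n)))
    (hw.mul (hv.pow (m + n))) (fun α => mul_nonneg (hw0 α) (pow_nonneg (hu0 α) _))
    (fun α => mul_nonneg (hw0 α) (pow_nonneg (hv0 α) _)) (by positivity) (by positivity) hxy)
  congr 1
  funext α
  have h1 : ∀ {z : ℝ}, 0 ≤ z → ∀ l : ℕ, (z ^ (m + n)) ^ ((l : ℝ) / (m + n)) = z ^ l := by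
    intro z hz l
    rw [← Real.rpow_natCast, ← Real.rpow_mul hz, ← Real.rpow_natCast]
    congr 1
    push_cast
    field_simp
  simp only [Pi.mul_apply, Pi.pow_apply]
  rw [Real.mul_rpow (hw0 α) (pow_nonneg (hu0 α) _), Real.mul_rpow (hw0 α) (pow_nonneg (hv0 α) _),
    h1 (hu0 α), h1 (hv0 α)]
  have h2 : w α = w α ^ ((m : ℝ) / (m + n)) * w α ^ ((n : ℝ) / (m + n)) := by
    rw [← Real.rpow_add_of_nonneg (hw0 α) (by positivity) (by positivity), hxy, Real.rpow_one]
  nth_rewrite 1 [h2]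
  ring

lemma integral_box_mono {k : ℕ} {u v : (Fin k → ℝ) → ℝ} (hu : Continuous u) (hv : Continuous v)
    (h : ∀ α, u α ≤ v α) : ∫ α in box k, u α ≤ ∫ α in box k, v α :=
  integral_mono (integrableOn_box hu) (integrableOn_box hv) h

lemma sum_ite_comp_prod_eq {ι κ R : Type*} [Fintype ι] [Fintype κ] [CommSemiring R] {s : ℕ}
    (σ : κ ↪ Fin s) (Q : (κ → ι) → Prop) (g : ι → R) :
    ∑ v : Fin s → ι, (if Q (v ∘ σ) then ∏ i, g (v i) else 0) =
      (∑ u : κ → ι, if Q u then ∏ i, g (u i) else 0) * (∑ c, g c) ^ (s - Fintype.card κ) := by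
  let e₁ : κ ⊕ {i // i ∉ Set.range σ} ≃ Fin s :=
    ((Equiv.ofInjective σ σ.injective).sumCongr (Equiv.refl _)).trans
      (Equiv.sumCompl (· ∈ Set.range σ))
  have hl : ∀ x, e₁ (Sum.inl x) = σ x := fun x => by simp [e₁]
  have hcard : Fintype.card {i // i ∉ Set.range σ} = s - Fintype.card κ := by
    have := Fintype.card_congr e₁
    rw [Fintype.card_sum, Fintype.card_fin] at this
    omega
  let e₂ : (Fin s → ι) ≃ (κ → ι) × ({i // i ∉ Set.range σ} → ι) :=
    (e₁.symm.arrowCongr (Equiv.refl ι)).trans (Equiv.sumArrowEquivProdArrow _ _ _)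
  have h1 : ∀ v, (e₂ v).1 = v ∘ σ := fun v => by
    funext x
    simp [e₂, Equiv.sumArrowEquivProdArrow, hl]
  have h2 : ∀ v x, (e₂ v).2 x = v (e₁ (Sum.inr x)) := fun v x => by
    simp [e₂, Equiv.sumArrowEquivProdArrow]
  have h3 : (∑ c, g c) ^ (s - Fintype.card κ) =
      ∑ u : {i // i ∉ Set.range σ} → ι, ∏ i, g (u i) := by
    rw [← hcard, ← Finset.card_univ, ← prod_const, prod_univ_sum, Fintype.piFinset_univ]
  rw [h3, sum_mul_sum, ← Fintype.sum_prod_type', ← e₂.sum_comp]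
  refine sum_congr rfl fun v _ => ?_
  have h4 : ∏ i, g (v i) = (∏ i, g ((e₂ v).1 i)) * ∏ i, g ((e₂ v).2 i) := by
    rw [← e₁.prod_comp, Fintype.prod_sum_type]
    simp only [h1, h2, hl, Function.comp_apply]
  rw [h4, ← h1]
  split_ifs <;> simp

lemma exists_injective_comp_or_const_comp {ι : Type*} [Fintype ι] {r s : ℕ} (hs : 2 * r ≤ s)
    (v : Fin s → ι) :
    (∃ σ : Fin r ↪ Fin s, Function.Injective (v ∘ σ)) ∨
      ∃ σ : Fin 3 ↪ Fin s, ∀ i, (v ∘ σ) i = (v ∘ σ) 0 := by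
  by_cases hcard : r ≤ (univ.image v).card
  · left
    obtain ⟨T, hT, hTc⟩ := exists_subset_card_eq hcard
    have hT' : ∀ x : T, ∃ i, v i = x := fun x => by simpa using hT x.2
    choose w hw using hT'
    let e : Fin r ≃ T := (finCongr (by simpa using hTc.symm)).trans (Fintype.equivFin T).symm
    have hwi : Function.Injective w := fun x y h => by
      apply Subtype.ext
      rw [← hw x, ← hw y, h]
    refine ⟨⟨w ∘ e, hwi.comp e.injective⟩, ?_⟩
    intro i j hij
    simp only [Function.comp_apply, Function.Embedding.coeFn_mk, hw] at hij
    exact e.injective (Subtype.ext hij)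
  · right
    obtain ⟨c, -, hc⟩ := exists_lt_card_fiber_of_mul_lt_card_of_maps_to (n := 2)
      (f := v) (s := univ) (t := univ.image v) (fun i _ => mem_image_of_mem v (mem_univ i))
      (by rw [card_univ, Fintype.card_fin]; omega)
    obtain ⟨T, hT, hTc⟩ := exists_subset_card_eq (show 3 ≤ _ from hc)
    let e : Fin 3 ≃ T := (finCongr (by simpa using hTc.symm)).trans (Fintype.equivFin T).symm
    refine ⟨⟨fun i => e i, fun i j hij => e.injective (Subtype.ext hij)⟩, ?_⟩
    have h1 : ∀ i : Fin 3, v (e i) = c := fun i => (mem_filter.1 (hT (e i).2)).2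
    exact fun i => (h1 i).trans (h1 0).symm

/-- A power of a sum is dominated by the tuples having `r` distinct entries together with
those having three equal entries. -/
lemma conditioning_mem_posTrig {k : ℕ} {V : AddSubgroup (Fin k → ℤ)} {ι : Type*} [Fintype ι]
    {g : ι → (Fin k → ℝ) → ℂ} (hg : ∀ c, g c ∈ posTrig V) {r s : ℕ} (hs : 2 * r ≤ s) :
    (Fintype.card (Fin r ↪ Fin s) •
        ((∑ u : Fin r → ι, if Function.Injective u then ∏ i, g (u i) else 0) *
          (∑ c, g c) ^ (s - r)) +
      Fintype.card (Fin 3 ↪ Fin s) • ((∑ c, g c ^ 3) * (∑ c, g c) ^ (s - 3))) -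
      (∑ c, g c) ^ s ∈ posTrig V := by
  have h1 : Fintype.card (Fin r ↪ Fin s) •
        ((∑ u : Fin r → ι, if Function.Injective u then ∏ i, g (u i) else 0) *
          (∑ c, g c) ^ (s - r)) =
      ∑ v : Fin s → ι, ∑ σ : Fin r ↪ Fin s,
        if Function.Injective (v ∘ σ) then ∏ i, g (v i) else 0 := by
    rw [sum_comm]
    have : ∀ σ : Fin r ↪ Fin s, ∑ v : Fin s → ι,
        (if Function.Injective (v ∘ σ) then ∏ i, g (v i) else 0) =
        (∑ u : Fin r → ι, if Function.Injective u then ∏ i, g (u i) else 0) *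
          (∑ c, g c) ^ (s - r) := fun σ => by
      have := sum_ite_comp_prod_eq σ (fun u : Fin r → ι => Function.Injective u) g
      rw [Fintype.card_fin] at this
      convert this
    simp only [this, sum_const, card_univ]
  have hcub : ∑ u : Fin 3 → ι, (if ∀ i, u i = u 0 then ∏ i, g (u i) else 0) = ∑ c, g c ^ 3 := by
    rw [← sum_filter]
    refine (sum_nbij' (fun c _ => c) (fun u => u 0) ?_ ?_ ?_ ?_ ?_).symm
    · intro c _
      simp
    · intro u _
      simp
    · intro c _
      rfl
    · intro u hu
      funext i
      exact ((mem_filter.1 hu).2 i).symm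
    · intro c _
      simp
  have h2 : Fintype.card (Fin 3 ↪ Fin s) • ((∑ c, g c ^ 3) * (∑ c, g c) ^ (s - 3)) =
      ∑ v : Fin s → ι, ∑ σ : Fin 3 ↪ Fin s,
        if ∀ i, (v ∘ σ) i = (v ∘ σ) 0 then ∏ i, g (v i) else 0 := by
    rw [sum_comm]
    have : ∀ σ : Fin 3 ↪ Fin s, ∑ v : Fin s → ι,
        (if ∀ i, (v ∘ σ) i = (v ∘ σ) 0 then ∏ i, g (v i) else 0) =
        (∑ c, g c ^ 3) * (∑ c, g c) ^ (s - 3) := fun σ => by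
      have := sum_ite_comp_prod_eq σ (fun u : Fin 3 → ι => ∀ i, u i = u 0) g
      rw [Fintype.card_fin] at this
      rw [← hcub]
      convert this
    simp only [this, sum_const, card_univ]
  have h3 : (∑ c, g c) ^ s = ∑ v : Fin s → ι, ∏ i, g (v i) := by
    conv_lhs => rw [← Fintype.card_fin s, ← card_univ, ← prod_const, prod_univ_sum,
      Fintype.piFinset_univ]
  rw [h1, h2, h3, ← sum_add_distrib, ← sum_sub_distrib]
  refine sum_mem fun v _ => ?_
  have hv : ∏ i, g (v i) ∈ posTrig V := prod_mem fun i _ => hg _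
  rw [← sum_filter, ← sum_filter, sum_const, sum_const, ← add_nsmul]
  have hpos : 1 ≤ #{σ : Fin r ↪ Fin s | Function.Injective (v ∘ σ)} +
      #{σ : Fin 3 ↪ Fin s | ∀ i, (v ∘ σ) i = (v ∘ σ) 0} := by
    rcases exists_injective_comp_or_const_comp hs v with ⟨σ, hσ⟩ | ⟨σ, hσ⟩
    · have : 0 < #{σ : Fin r ↪ Fin s | Function.Injective (v ∘ σ)} :=
        card_pos.2 ⟨σ, by simpa using hσ⟩
      omega
    · have : 0 < #{σ : Fin 3 ↪ Fin s | ∀ i, (v ∘ σ) i = (v ∘ σ) 0} :=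
        card_pos.2 ⟨σ, by simpa using hσ⟩
      omega
  obtain ⟨n, hn⟩ := Nat.exists_eq_add_of_le' hpos
  rw [hn, succ_nsmul, add_sub_cancel_right]
  exact nsmul_mem hv n

/-- The vector of powers `(x, x², …, x^k)`. -/
def powVec (k : ℕ) (x : ℤ) : Fin k → ℤ := fun j => x ^ ((j : ℕ) + 1)

/-- The integers in `[1, X]` congruent to `ξ` modulo `p ^ c`. -/
def prog (p : ℕ) (X : ℝ) (c : ℕ) (ξ : ℤ) : Finset ℤ :=
  (Icc (1 : ℤ) ⌊X⌋).filter fun x => x ≡ ξ [ZMOD (p : ℤ) ^ c]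

/-- Representatives modulo `p ^ (c + 1)` of the classes refining `ξ` modulo `p ^ c`. -/
def refinements (p c : ℕ) (ξ : ℤ) : Finset ℤ :=
  (Icc (1 : ℤ) ((p : ℤ) ^ (c + 1))).filter fun x => x ≡ ξ [ZMOD (p : ℤ) ^ c]

section fexp

variable {k p r : ℕ} {X : ℝ} {c : ℕ} {ξ η : ℤ}

lemma mem_prog {x : ℤ} : x ∈ prog p X c ξ ↔ (1 ≤ x ∧ x ≤ ⌊X⌋) ∧ x ≡ ξ [ZMOD (p : ℤ) ^ c] := by
  rw [prog, mem_filter, mem_Icc]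

lemma mem_refinements {x : ℤ} :
    x ∈ refinements p c ξ ↔ (1 ≤ x ∧ x ≤ (p : ℤ) ^ (c + 1)) ∧ x ≡ ξ [ZMOD (p : ℤ) ^ c] := by
  rw [refinements, mem_filter, mem_Icc]

lemma fexp_eq_sum : fexp k p X c ξ = ∑ x ∈ prog p X c ξ, chi (powVec k x) := by
  funext α
  simp only [fexp, Finset.sum_apply, prog, chi, powVec]
  push_cast
  rfl

lemma fexp_mem : fexp k p X c ξ ∈ posTrig ⊤ := by
  rw [fexp_eq_sum]
  exact sum_mem fun x _ => chi_mem_posTrig (AddSubgroup.mem_top _)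

lemma continuous_fexp : Continuous (fexp k p X c ξ) := continuous_of_mem_posTrig fexp_mem

lemma eq_of_modEq_of_mem_Icc {n x y : ℤ} (hx : 1 ≤ x ∧ x ≤ n) (hy : 1 ≤ y ∧ y ≤ n)
    (h : x ≡ y [ZMOD n]) : x = y := by
  have h1 : x - 1 ≡ y - 1 [ZMOD n] := h.sub_right 1
  rw [Int.ModEq, Int.emod_eq_of_lt (by omega) (by omega), Int.emod_eq_of_lt (by omega)
    (by omega)] at h1
  omega

lemma exists_mem_Icc_modEq {n : ℤ} (hn : 0 < n) (x : ℤ) :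
    ∃ y, (1 ≤ y ∧ y ≤ n) ∧ y ≡ x [ZMOD n] := by
  refine ⟨(x - 1) % n + 1, ⟨?_, ?_⟩, ?_⟩
  · have := Int.emod_nonneg (x - 1) hn.ne'
    omega
  · have := Int.emod_lt_of_pos (x - 1) hn
    omega
  · have := (Int.mod_modEq (x - 1) n).add_right 1
    simpa using this

lemma card_refinements_le (hp : 0 < p) : (refinements p c ξ).card ≤ p := by
  have hpz : (0 : ℤ) < p := by exact_mod_cast hp
  have hmap : ∀ x ∈ refinements p c ξ, (x - 1) / (p : ℤ) ^ c ∈ Ico (0 : ℤ) p := by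
    intro x hx
    obtain ⟨⟨h1, h2⟩, -⟩ := mem_refinements.1 hx
    rw [mem_Ico]
    refine ⟨Int.ediv_nonneg (by omega) (by positivity), ?_⟩
    apply Int.ediv_lt_of_lt_mul (by positivity)
    rw [pow_succ'] at h2
    omega
  have hinj : Set.InjOn (fun x : ℤ => (x - 1) / (p : ℤ) ^ c) (refinements p c ξ) := by
    intro x hx y hy hxy
    have hx' := (mem_refinements.1 hx).2
    have hy' := (mem_refinements.1 hy).2
    have h : x - 1 ≡ y - 1 [ZMOD (p : ℤ) ^ c] := (hx'.trans hy'.symm).sub_right 1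
    have hxy' : (x - 1) / (p : ℤ) ^ c = (y - 1) / (p : ℤ) ^ c := hxy
    have e1 := Int.mul_ediv_add_emod (x - 1) ((p : ℤ) ^ c)
    have e2 := Int.mul_ediv_add_emod (y - 1) ((p : ℤ) ^ c)
    rw [hxy', h] at e1
    linarith
  calc _ ≤ (Ico (0 : ℤ) p).card := card_le_card_of_injOn _ hmap hinj
    _ = p := by simp

lemma fexp_eq_sum_refinements (hp : 0 < p) :
    fexp k p X c ξ = ∑ v ∈ refinements p c ξ, fexp k p X (c + 1) v := by
  simp only [fexp_eq_sum]
  rw [← sum_biUnion]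
  · congr 1
    ext x
    rw [mem_biUnion, mem_prog]
    constructor
    · rintro ⟨h1, h2⟩
      obtain ⟨y, hy, hyx⟩ := exists_mem_Icc_modEq (n := (p : ℤ) ^ (c + 1)) (by positivity) x
      refine ⟨y, mem_refinements.2 ⟨hy, ?_⟩, mem_prog.2 ⟨h1, hyx.symm⟩⟩
      exact (hyx.of_dvd (pow_dvd_pow _ (Nat.le_succ c))).trans h2
    · rintro ⟨y, hy, hx⟩
      rw [mem_prog] at hx
      rw [mem_refinements] at hy
      exact ⟨hx.1, (hx.2.of_dvd (pow_dvd_pow _ (Nat.le_succ c))).trans hy.2⟩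
  · intro v hv w hw hvw
    rw [Function.onFun, disjoint_left]
    intro x hx hx'
    rw [mem_prog] at hx hx'
    exact hvw (eq_of_modEq_of_mem_Icc (mem_refinements.1 hv).1 (mem_refinements.1 hw).1
      (hx.2.symm.trans hx'.2))

lemma mem_XiSet_iff {v : Fin r → ℤ} :
    v ∈ XiSet p r c ξ ↔ (∀ i, v i ∈ refinements p c ξ) ∧ Function.Injective v := by
  have hcast : ∀ x y : ℤ, ((x : ZMod (p ^ (c + 1))) = y) ↔ x ≡ y [ZMOD (p : ℤ) ^ (c + 1)] := by
    intro x y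
    rw [ZMod.intCast_eq_intCast_iff]
    push_cast
    rfl
  simp only [XiSet, Set.mem_ofPred_eq, mem_refinements]
  constructor
  · rintro ⟨h1, h2, h3⟩
    refine ⟨fun i => ⟨h1 i, h2 i⟩, fun i j hij => h3 ?_⟩
    simp [hij]
  · rintro ⟨h1, h2⟩
    refine ⟨fun i => (h1 i).1, fun i => (h1 i).2, fun i j hij => h2 ?_⟩
    exact eq_of_modEq_of_mem_Icc (h1 i).1 (h1 j).1 ((hcast _ _).1 hij)

lemma XiSet_eq_coe : XiSet p r c ξ =
    ((Fintype.piFinset fun _ : Fin r => refinements p c ξ).filter Function.Injective : Finset _) := by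
  ext v
  rw [mem_XiSet_iff]
  simp [Fintype.mem_piFinset]

lemma Fexp_eq_sum : Fexp k p r X c ξ =
    ∑ v ∈ (Fintype.piFinset fun _ : Fin r => refinements p c ξ).filter Function.Injective,
      ∏ i, fexp k p X (c + 1) (v i) := by
  funext α
  rw [Fexp, XiSet_eq_coe, finsum_mem_coe_finset]
  simp

lemma Fexp_mem : Fexp k p r X c ξ ∈ posTrig ⊤ := by
  rw [Fexp_eq_sum]
  exact sum_mem fun v _ => prod_mem fun i _ => fexp_mem

lemma continuous_Fexp : Continuous (Fexp k p r X c ξ) := continuous_of_mem_posTrig Fexp_mem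

lemma fexp_pow_sub_Fexp_mem (hp : 0 < p) :
    fexp k p X c ξ ^ r - Fexp k p r X c ξ ∈ posTrig ⊤ := by
  have h1 : fexp k p X c ξ ^ r =
      ∑ v ∈ Fintype.piFinset fun _ : Fin r => refinements p c ξ,
        ∏ i, fexp k p X (c + 1) (v i) := by
    rw [fexp_eq_sum_refinements hp]
    conv_lhs => rw [← Fintype.card_fin r, ← card_univ, ← prod_const, prod_univ_sum]
  rw [h1, Fexp_eq_sum, ← sum_filter_add_sum_filter_not _ Function.Injective, add_sub_cancel_left]
  exact sum_mem fun v _ => prod_mem fun i _ => fexp_mem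

lemma Fexp_eq_sum_subtype : Fexp k p r X c ξ =
    ∑ u : Fin r → refinements p c ξ,
      if Function.Injective u then ∏ i, fexp k p X (c + 1) (u i) else 0 := by
  rw [Fexp_eq_sum, ← sum_filter]
  refine sum_bij' (fun v hv i => ⟨v i, ?_⟩) (fun u _ i => (u i : ℤ)) ?_ ?_ ?_ ?_ ?_
  · exact Fintype.mem_piFinset.1 (mem_filter.1 hv).1 i
  · intro v hv
    refine mem_filter.2 ⟨mem_univ _, fun i j hij => (mem_filter.1 hv).2 ?_⟩
    exact congrArg Subtype.val hij
  · intro u hu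
    refine mem_filter.2 ⟨Fintype.mem_piFinset.2 fun i => (u i).2, fun i j hij => ?_⟩
    exact (mem_filter.1 hu).2 (Subtype.ext hij)
  · intro v hv
    rfl
  · intro u hu
    rfl
  · intro v hv
    rfl

lemma conditioning_fexp (hp : 0 < p) {s : ℕ} (hs : 2 * r ≤ s) :
    (Fintype.card (Fin r ↪ Fin s) • (Fexp k p r X c ξ * fexp k p X c ξ ^ (s - r)) +
      Fintype.card (Fin 3 ↪ Fin s) •
        ((∑ v ∈ refinements p c ξ, fexp k p X (c + 1) v ^ 3) * fexp k p X c ξ ^ (s - 3))) -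
      fexp k p X c ξ ^ s ∈ posTrig ⊤ := by
  have h := conditioning_mem_posTrig (V := (⊤ : AddSubgroup (Fin k → ℤ)))
    (g := fun v : refinements p c ξ => fexp k p X (c + 1) v) (fun _ => fexp_mem) hs
  have h1 : ∑ v : refinements p c ξ, fexp k p X (c + 1) v = fexp k p X c ξ := by
    rw [fexp_eq_sum_refinements hp, sum_coe_sort]
  have h2 : ∑ v : refinements p c ξ, fexp k p X (c + 1) v ^ 3 =
      ∑ v ∈ refinements p c ξ, fexp k p X (c + 1) v ^ 3 := by
    rw [← sum_coe_sort (refinements p c ξ)]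
  rw [h1, h2] at h
  rw [Fexp_eq_sum_subtype]
  convert h

end fexp

lemma Iab_nonneg (k p r s : ℕ) (X : ℝ) (a b : ℕ) (ξ η : ℤ) : 0 ≤ Iab k p r s X a b ξ η :=
  integral_nonneg fun _ => by positivity

lemma Kab_nonneg (k p r t : ℕ) (X : ℝ) (a b : ℕ) (ξ η : ℤ) : 0 ≤ Kab k p r t X a b ξ η :=
  integral_nonneg fun _ => by positivity

lemma Ktilde_nonneg (k p r t : ℕ) (X : ℝ) (b : ℕ) (η : ℤ) : 0 ≤ Ktilde k p r t X b η :=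
  integral_nonneg fun _ => by positivity

lemma Imax_nonneg (k p r s : ℕ) (X : ℝ) (a b : ℕ) : 0 ≤ Imax k p r s X a b := by
  refine Real.sSup_nonneg ?_
  rintro _ ⟨ξ, η, -, -, -, -, -, rfl⟩
  exact Iab_nonneg ..

lemma Kmax_nonneg (k p r t : ℕ) (X : ℝ) (a b : ℕ) : 0 ≤ Kmax k p r t X a b := by
  rw [Kmax]
  split_ifs
  · refine Real.sSup_nonneg ?_
    rintro _ ⟨η, -, -, rfl⟩
    exact Ktilde_nonneg ..
  · refine Real.sSup_nonneg ?_
    rintro _ ⟨ξ, η, -, -, -, -, -, rfl⟩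
    exact Kab_nonneg ..

lemma bddAbove_admissible (p a b : ℕ) (Φ : ℤ → ℤ → ℝ) :
    BddAbove {v : ℝ | ∃ ξ η : ℤ, 1 ≤ ξ ∧ ξ ≤ (p : ℤ) ^ a ∧ 1 ≤ η ∧ η ≤ (p : ℤ) ^ b ∧
      ¬ Int.ModEq (p : ℤ) η ξ ∧ v = Φ ξ η} := by
  refine (((Set.finite_Icc (1 : ℤ) (p ^ a)).prod (Set.finite_Icc (1 : ℤ) (p ^ b))).image
    fun z => Φ z.1 z.2).subset ?_ |>.bddAbove
  rintro _ ⟨ξ, η, h1, h2, h3, h4, -, rfl⟩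
  exact ⟨(ξ, η), ⟨⟨h1, h2⟩, ⟨h3, h4⟩⟩, rfl⟩

lemma Iab_le_Imax {k p r s : ℕ} {X : ℝ} {a b : ℕ} {ξ η : ℤ} (h1 : 1 ≤ ξ) (h2 : ξ ≤ (p : ℤ) ^ a)
    (h3 : 1 ≤ η) (h4 : η ≤ (p : ℤ) ^ b) (h5 : ¬ η ≡ ξ [ZMOD p]) :
    Iab k p r s X a b ξ η ≤ Imax k p r s X a b :=
  le_csSup (bddAbove_admissible p a b fun ξ η => Iab k p r s X a b ξ η)
    ⟨ξ, η, h1, h2, h3, h4, h5, rfl⟩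

lemma Kab_le_Kmax {k p r t : ℕ} {X : ℝ} {a b : ℕ} {ξ η : ℤ} (ha : a ≠ 0) (h1 : 1 ≤ ξ)
    (h2 : ξ ≤ (p : ℤ) ^ a) (h3 : 1 ≤ η) (h4 : η ≤ (p : ℤ) ^ b) (h5 : ¬ η ≡ ξ [ZMOD p]) :
    Kab k p r t X a b ξ η ≤ Kmax k p r t X a b := by
  rw [Kmax, if_neg ha]
  exact le_csSup (bddAbove_admissible p a b fun ξ η => Kab k p r t X a b ξ η)
    ⟨ξ, η, h1, h2, h3, h4, h5, rfl⟩

lemma integral_re_eq {k : ℕ} {G : (Fin k → ℝ) → ℂ} {g : (Fin k → ℝ) → ℝ}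
    (h : ∀ α, G α = (g α : ℂ)) : (∫ α in box k, G α).re = ∫ α in box k, g α := by
  simp only [h]
  rw [integral_complex_ofReal, Complex.ofReal_re]

lemma integral_re_le_integral_norm {k : ℕ} (G : (Fin k → ℝ) → ℂ) :
    (∫ α in box k, G α).re ≤ ∫ α in box k, ‖G α‖ :=
  (Complex.re_le_norm _).trans (norm_integral_le_integral_norm _)

/-- Domination among trigonometric polynomials passes to weighted even moments. -/
lemma integral_mul_norm_pow_le_of_sub_mem {k : ℕ} {A B W : (Fin k → ℝ) → ℂ}
    (hA : A ∈ posTrig ⊤) (hB : B ∈ posTrig ⊤) (hW : W ∈ posTrig ⊤) (h : B - A ∈ posTrig ⊤)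
    {w : (Fin k → ℝ) → ℝ} (hw : ∀ α, W α = (w α : ℂ)) (n : ℕ) :
    ∫ α in box k, w α * ‖A α‖ ^ (2 * n) ≤ ∫ α in box k, w α * ‖B α‖ ^ (2 * n) := by
  have hA2 : (A * star A) ∈ posTrig ⊤ := mul_mem hA (star_mem_posTrig hA)
  have hB2 : (B * star B) ∈ posTrig ⊤ := mul_mem hB (star_mem_posTrig hB)
  have h1 : W * (B * star B) ^ n - W * (A * star A) ^ n ∈ posTrig ⊤ := by
    rw [← mul_sub]
    exact mul_mem hW (pow_sub_pow_mem hA2 hB2 (mul_star_sub_mul_star_mem hA hB h) n)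
  have h2 : ∀ (D : (Fin k → ℝ) → ℂ) α,
      (W * (D * star D) ^ n) α = ((w α * ‖D α‖ ^ (2 * n) : ℝ) : ℂ) := by
    intro D α
    rw [Pi.mul_apply, Pi.pow_apply, mul_star_apply, hw, pow_mul]
    push_cast
    rfl
  rw [← integral_re_eq (h2 A), ← integral_re_eq (h2 B)]
  exact integral_re_le_of_sub_mem (continuous_of_mem_posTrig (mul_mem hW (pow_mem hA2 n)))
    (continuous_of_mem_posTrig (mul_mem hW (pow_mem hB2 n))) h1

lemma le_of_le_mul_rpow_mul_rpow {x y A e : ℝ} (hx : 0 ≤ x) (hy : 0 ≤ y) (hA : 0 ≤ A)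
    (he : 0 < e) (h : x ≤ A * (y ^ e * x ^ (1 - e))) : x ≤ A ^ e⁻¹ * y := by
  rcases hx.eq_or_lt with rfl | hx0
  · positivity
  have h1 : x ^ e ≤ A * y ^ e := by
    have h2 : x = x ^ e * x ^ (1 - e) := by
      rw [← Real.rpow_add hx0]
      simp
    have h3 : 0 < x ^ (1 - e) := Real.rpow_pos_of_pos hx0 _
    rw [← mul_assoc] at h
    nth_rewrite 1 [h2] at h
    exact le_of_mul_le_mul_right h h3
  have h4 := Real.rpow_le_rpow (by positivity) h1 (inv_nonneg.2 he.le)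
  rwa [Real.mul_rpow hA (by positivity), ← Real.rpow_mul hx, ← Real.rpow_mul hy,
    mul_inv_cancel₀ he.ne', Real.rpow_one, Real.rpow_one] at h4

/-- The constant in the conditioning step. -/
def condConst (r t : ℕ) : ℝ :=
  max 1 (max ((2 * (Fintype.card (Fin r ↪ Fin (r * t)) : ℝ)) ^ (2 * (t : ℝ)))
    ((2 * (Fintype.card (Fin 3 ↪ Fin (r * t)) : ℝ)) ^ (2 * ((r * t : ℕ) : ℝ) / 3)))

lemma one_le_condConst (r t : ℕ) : 1 ≤ condConst r t := le_max_left _ _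

section conditioning

variable {k p r t : ℕ} {X : ℝ} {a c : ℕ} {ξ η : ℤ}

lemma Iab_le_moments (hp : 0 < p) (hs : 2 * r ≤ r * t) :
    Iab k p r (r * t) X a c ξ η ≤
      Fintype.card (Fin r ↪ Fin (r * t)) *
        (∫ α in box k, ‖Fexp k p r X a ξ α‖ ^ 2 * ‖Fexp k p r X c η α‖ ^ 1 *
          (‖fexp k p X c η α‖ ^ r) ^ (2 * t - 1)) +
      Fintype.card (Fin 3 ↪ Fin (r * t)) * ∑ v ∈ refinements p c η,
        (∫ α in box k, ‖Fexp k p r X a ξ α‖ ^ 2 * ‖fexp k p X (c + 1) v α‖ ^ 3 *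
          ‖fexp k p X c η α‖ ^ (2 * (r * t) - 3)) := by
  set n₁ := Fintype.card (Fin r ↪ Fin (r * t)) with hn₁
  set n₂ := Fintype.card (Fin 3 ↪ Fin (r * t)) with hn₂
  set s := r * t with hsdef
  set A := Fexp k p r X a ξ
  set f := fexp k p X c η
  set F := Fexp k p r X c η
  have hA : A ∈ posTrig ⊤ := Fexp_mem
  have hf : f ∈ posTrig ⊤ := fexp_mem
  have hF : F ∈ posTrig ⊤ := Fexp_mem
  have hAc : Continuous A := continuous_Fexp
  have hfc : Continuous f := continuous_fexp
  have hFc : Continuous F := continuous_Fexp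
  have hgc : ∀ v, Continuous (fexp k p X (c + 1) v) := fun v => continuous_fexp
  set D : (Fin k → ℝ) → ℂ := n₁ • (F * f ^ (s - r)) +
      n₂ • ((∑ v ∈ refinements p c η, fexp k p X (c + 1) v ^ 3) * f ^ (s - 3)) with hD
  have hDf : D - f ^ s ∈ posTrig ⊤ := conditioning_fexp hp hs
  set W := A * star A * star f ^ s with hW
  have hWm : W ∈ posTrig ⊤ :=
    mul_mem (mul_mem hA (star_mem_posTrig hA)) (pow_mem (star_mem_posTrig hf) s)
  have hDm : D ∈ posTrig ⊤ := add_mem (nsmul_mem (mul_mem hF (pow_mem hf _)) _)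
    (nsmul_mem (mul_mem (sum_mem fun v _ => pow_mem fexp_mem 3) (pow_mem hf _)) _)
  have h1 : Iab k p r s X a c ξ η = (∫ α in box k, (f ^ s * W) α).re := by
    symm
    apply integral_re_eq
    intro α
    have e1 : (f ^ s * W) α = (A * star A) α * ((f * star f) α) ^ s := by
      simp only [hW, Pi.mul_apply, Pi.pow_apply, Pi.star_apply]
      ring
    rw [e1, mul_star_apply, mul_star_apply, pow_mul _ 2 s, ← Complex.ofReal_pow,
      ← Complex.ofReal_mul]
  have h2 : (∫ α in box k, (f ^ s * W) α).re ≤ (∫ α in box k, (D * W) α).re := by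
    refine integral_re_le_of_sub_mem (V := ⊤)
      (continuous_of_mem_posTrig (mul_mem (pow_mem hf s) hWm))
      (continuous_of_mem_posTrig (mul_mem hDm hWm)) ?_
    rw [← sub_mul]
    exact mul_mem hDf hWm
  have hnW : ∀ α, ‖W α‖ = ‖A α‖ ^ 2 * ‖f α‖ ^ s := by
    intro α
    simp only [hW, Pi.mul_apply, Pi.pow_apply, Pi.star_apply, norm_mul, norm_pow, norm_star]
    ring
  have h3 : ∀ α, ‖(D * W) α‖ ≤ n₁ * (‖A α‖ ^ 2 * ‖F α‖ ^ 1 * (‖f α‖ ^ r) ^ (2 * t - 1)) +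
      n₂ * ∑ v ∈ refinements p c η, ‖A α‖ ^ 2 * ‖fexp k p X (c + 1) v α‖ ^ 3 *
        ‖f α‖ ^ (2 * s - 3) := by
    intro α
    rw [Pi.mul_apply, norm_mul, hnW]
    have e1 : ‖D α‖ ≤ n₁ * (‖F α‖ * ‖f α‖ ^ (s - r)) +
        n₂ * ((∑ v ∈ refinements p c η, ‖fexp k p X (c + 1) v α‖ ^ 3) * ‖f α‖ ^ (s - 3)) := by
      have e0 : D α = n₁ * (F α * f α ^ (s - r)) + n₂ *
          ((∑ v ∈ refinements p c η, fexp k p X (c + 1) v α ^ 3) * f α ^ (s - 3)) := by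
        simp [hD]
      rw [e0]
      refine (norm_add_le _ _).trans (add_le_add ?_ ?_)
      · simp
      · rw [norm_mul, norm_mul, norm_pow, Complex.norm_natCast]
        gcongr
        refine (norm_sum_le _ _).trans (le_of_eq ?_)
        simp
    refine (mul_le_mul_of_nonneg_right e1 (by positivity)).trans ?_
    rw [add_mul]
    refine add_le_add (le_of_eq ?_) ?_
    · have e2 : (‖f α‖ ^ r) ^ (2 * t - 1) = ‖f α‖ ^ (s - r) * ‖f α‖ ^ s := by
        rw [← pow_mul, ← pow_add]
        congr 1
        rw [Nat.mul_sub, ← hsdef.symm.trans rfl]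
        have : r * (2 * t) = 2 * s := by rw [hsdef]; ring
        omega
      rw [e2]
      ring
    · by_cases h3s : 3 ≤ s
      · refine le_of_eq ?_
        have e2 : ‖f α‖ ^ (2 * s - 3) = ‖f α‖ ^ (s - 3) * ‖f α‖ ^ s := by
          rw [← pow_add]
          congr 1
          omega
        rw [e2, ← sum_mul, ← mul_sum]
        ring
      · have : n₂ = 0 := by
          rw [hn₂, Fintype.card_eq_zero_iff]
          refine ⟨fun σ => h3s ?_⟩
          simpa using Fintype.card_le_of_embedding σ
        simp [this]
  have hcont₁ : Continuous fun α => ‖A α‖ ^ 2 * ‖F α‖ ^ 1 * (‖f α‖ ^ r) ^ (2 * t - 1) := by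
    fun_prop
  have hcont₂ : ∀ v, Continuous fun α =>
      ‖A α‖ ^ 2 * ‖fexp k p X (c + 1) v α‖ ^ 3 * ‖f α‖ ^ (2 * s - 3) := by
    intro v
    have := hgc v
    fun_prop
  rw [h1]
  refine h2.trans ((integral_re_le_integral_norm _).trans ?_)
  refine (integral_box_mono (continuous_of_mem_posTrig (mul_mem hDm hWm)).norm ?_ h3).trans ?_
  · exact (hcont₁.const_mul _).add ((continuous_finsetSum _ fun v _ => hcont₂ v).const_mul _)
  · rw [integral_add (integrableOn_box (hcont₁.const_mul _))
      (integrableOn_box ((continuous_finsetSum _ fun v _ => hcont₂ v).const_mul _)),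
      integral_const_mul, integral_const_mul, integral_finsetSum]
    exact fun v _ => integrableOn_box (hcont₂ v)

lemma Iab_le_of_conditioning (hp : 0 < p) (ht : 2 ≤ t) (hr : 1 ≤ r) (ha : 1 ≤ a) (hc : 1 ≤ c)
    (h1 : 1 ≤ ξ) (h2 : ξ ≤ (p : ℤ) ^ a) (h3 : 1 ≤ η) (h4 : η ≤ (p : ℤ) ^ c)
    (h5 : ¬ η ≡ ξ [ZMOD p]) :
    Iab k p r (r * t) X a c ξ η ≤ condConst r t * max (Kmax k p r t X a c)
      ((p : ℝ) ^ (2 * ((r * t : ℕ) : ℝ) / 3) * Imax k p r (r * t) X a (c + 1)) := by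
  have hs : 2 * r ≤ r * t := by nlinarith
  have hs2 : 2 ≤ r * t := by nlinarith
  have hmom := Iab_le_moments (k := k) (X := X) (a := a) (c := c) (ξ := ξ) (η := η) hp hs
  set n₁ : ℝ := (Fintype.card (Fin r ↪ Fin (r * t)) : ℝ) with hn₁
  set n₂ : ℝ := (Fintype.card (Fin 3 ↪ Fin (r * t)) : ℝ) with hn₂
  set s := r * t with hsdef
  set I := Iab k p r s X a c ξ η with hI
  set K := Kmax k p r t X a c
  set I' := Imax k p r s X a (c + 1)
  have hI0 : 0 ≤ I := Iab_nonneg ..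
  have hK0 : 0 ≤ K := Kmax_nonneg ..
  have hI'0 : 0 ≤ I' := Imax_nonneg ..
  have hn₁0 : 0 ≤ n₁ := by positivity
  have hn₂0 : 0 ≤ n₂ := by positivity
  have ht0 : (0 : ℝ) < t := by positivity
  have hs0 : (0 : ℝ) < s := by positivity
  have hA : Continuous (Fexp k p r X a ξ) := continuous_Fexp
  have hF : Continuous (Fexp k p r X c η) := continuous_Fexp
  have hf : Continuous (fexp k p X c η) := continuous_fexp
  have hI1 : ∫ α in box k, ‖Fexp k p r X a ξ α‖ ^ 2 * ‖Fexp k p r X c η α‖ ^ 1 *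
      (‖fexp k p X c η α‖ ^ r) ^ (2 * t - 1) ≤
      K ^ (2 * (t : ℝ))⁻¹ * I ^ (1 - (2 * (t : ℝ))⁻¹) := by
    have h := integral_mul_pow_mul_pow_le (k := k) (w := fun α => ‖Fexp k p r X a ξ α‖ ^ 2)
      (u := fun α => ‖Fexp k p r X c η α‖) (v := fun α => ‖fexp k p X c η α‖ ^ r)
      (by fun_prop) (by fun_prop) (by fun_prop) (fun _ => by positivity)
      (fun _ => by positivity) (fun _ => by positivity) (m := 1) (n := 2 * t - 1) one_pos
      (by omega)
    have e1 : 1 + (2 * t - 1) = 2 * t := by omega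
    have e2 : ((1 : ℕ) : ℝ) + ((2 * t - 1 : ℕ) : ℝ) = 2 * t := by
      rw [← Nat.cast_add, e1]
      push_cast
      rfl
    rw [e1, e2] at h
    have e3 : ((2 * t - 1 : ℕ) : ℝ) / (2 * t) = 1 - (2 * (t : ℝ))⁻¹ := by
      rw [Nat.cast_sub (by omega)]
      push_cast
      field_simp
    rw [e3, Nat.cast_one, one_div] at h
    refine h.trans ?_
    have e4 : ∫ α in box k, ‖Fexp k p r X a ξ α‖ ^ 2 * (‖fexp k p X c η α‖ ^ r) ^ (2 * t) = I := by
      rw [hI, Iab]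
      congr 1
      funext α
      rw [← pow_mul, hsdef]
      ring_nf
    rw [e4]
    gcongr
    exact Kab_le_Kmax (by omega) h1 h2 h3 h4 h5
  have hI2 : ∀ v ∈ refinements p c η,
      ∫ α in box k, ‖Fexp k p r X a ξ α‖ ^ 2 * ‖fexp k p X (c + 1) v α‖ ^ 3 *
        ‖fexp k p X c η α‖ ^ (2 * s - 3) ≤
      I' ^ (2 * (s : ℝ) / 3)⁻¹ * I ^ (1 - (2 * (s : ℝ) / 3)⁻¹) := by
    intro v hv
    obtain ⟨⟨hv1, hv2⟩, hv3⟩ := mem_refinements.1 hv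
    have hg : Continuous (fexp k p X (c + 1) v) := continuous_fexp
    have h := integral_mul_pow_mul_pow_le (k := k) (w := fun α => ‖Fexp k p r X a ξ α‖ ^ 2)
      (u := fun α => ‖fexp k p X (c + 1) v α‖) (v := fun α => ‖fexp k p X c η α‖)
      (by fun_prop) (by fun_prop) (by fun_prop) (fun _ => by positivity)
      (fun _ => by positivity) (fun _ => by positivity) (m := 3) (n := 2 * s - 3) (by norm_num)
      (by omega)
    have e1 : 3 + (2 * s - 3) = 2 * s := by omega
    have e2 : ((3 : ℕ) : ℝ) + ((2 * s - 3 : ℕ) : ℝ) = 2 * s := by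
      rw [← Nat.cast_add, e1]
      push_cast
      rfl
    rw [e1, e2] at h
    have e3 : ((2 * s - 3 : ℕ) : ℝ) / (2 * s) = 1 - (2 * (s : ℝ) / 3)⁻¹ := by
      rw [Nat.cast_sub (by omega)]
      push_cast
      field_simp
    have e4 : ((3 : ℕ) : ℝ) / (2 * s) = (2 * (s : ℝ) / 3)⁻¹ := by
      rw [inv_div]
      rfl
    rw [e3, e4] at h
    refine h.trans ?_
    have e5 : ∫ α in box k, ‖Fexp k p r X a ξ α‖ ^ 2 * ‖fexp k p X (c + 1) v α‖ ^ (2 * s) ≤ I' := by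
      refine Iab_le_Imax h1 h2 hv1 hv2 fun hcon => h5 ?_
      exact (hv3.of_dvd (dvd_pow_self _ (by omega))).symm.trans hcon
    exact mul_le_mul_of_nonneg_right (Real.rpow_le_rpow (Iab_nonneg ..) e5 (by positivity))
      (Real.rpow_nonneg hI0 _)
  have hcard : ((refinements p c η).card : ℝ) ≤ p := by exact_mod_cast card_refinements_le hp
  have hsum := sum_le_card_nsmul _ _ _ hI2
  rw [nsmul_eq_mul] at hsum
  have hmain : I ≤ n₁ * (K ^ (2 * (t : ℝ))⁻¹ * I ^ (1 - (2 * (t : ℝ))⁻¹)) +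
      n₂ * (p * (I' ^ (2 * (s : ℝ) / 3)⁻¹ * I ^ (1 - (2 * (s : ℝ) / 3)⁻¹))) := by
    refine hmom.trans ?_
    gcongr
    refine hsum.trans ?_
    gcongr
  rcases le_total (n₁ * (K ^ (2 * (t : ℝ))⁻¹ * I ^ (1 - (2 * (t : ℝ))⁻¹)))
      (n₂ * (p * (I' ^ (2 * (s : ℝ) / 3)⁻¹ * I ^ (1 - (2 * (s : ℝ) / 3)⁻¹)))) with hle | hle
  · have hb : I ≤ (2 * n₂ * p) * (I' ^ (2 * (s : ℝ) / 3)⁻¹ * I ^ (1 - (2 * (s : ℝ) / 3)⁻¹)) := by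
      linarith
    have := le_of_le_mul_rpow_mul_rpow hI0 hI'0 (by positivity) (by positivity) hb
    rw [inv_inv, Real.mul_rpow (by positivity) (by positivity), mul_assoc] at this
    refine this.trans (mul_le_mul ?_ (le_max_right _ _) (by positivity)
      (zero_le_one.trans (one_le_condConst r t)))
    exact (le_max_right _ _).trans (le_max_right _ _)
  · have hb : I ≤ (2 * n₁) * (K ^ (2 * (t : ℝ))⁻¹ * I ^ (1 - (2 * (t : ℝ))⁻¹)) := by
      linarith
    have := le_of_le_mul_rpow_mul_rpow hI0 hK0 (by positivity) (by positivity) hb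
    rw [inv_inv] at this
    refine this.trans (mul_le_mul ?_ (le_max_left _ _) hK0
      (zero_le_one.trans (one_le_condConst r t)))
    exact (le_max_left _ _).trans (le_max_right _ _)

lemma Imax_le_of_conditioning (hp : 0 < p) (ht : 2 ≤ t) (hr : 1 ≤ r) (ha : 1 ≤ a) (hc : 1 ≤ c) :
    Imax k p r (r * t) X a c ≤ condConst r t * max (Kmax k p r t X a c)
      ((p : ℝ) ^ (2 * ((r * t : ℕ) : ℝ) / 3) * Imax k p r (r * t) X a (c + 1)) := by
  refine Real.sSup_le ?_ ?_
  · rintro _ ⟨ξ, η, h1, h2, h3, h4, h5, rfl⟩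
    exact Iab_le_of_conditioning hp ht hr ha hc h1 h2 h3 h4 h5
  · have := Kmax_nonneg k p r t X a c
    exact mul_nonneg (zero_le_one.trans (one_le_condConst r t)) (le_max_of_le_left this)

/-- Iterated conditioning. -/
lemma exists_Imax_le_Kmax_or (hp : 0 < p) (ht : 2 ≤ t) (hr : 1 ≤ r) (ha : 1 ≤ a) (hc : 1 ≤ c)
    (H : ℕ) :
    (∃ h < H, Imax k p r (r * t) X a c ≤ condConst r t ^ (h + 1) *
      ((p : ℝ) ^ (2 * ((r * t : ℕ) : ℝ) / 3)) ^ h * Kmax k p r t X a (c + h)) ∨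
    Imax k p r (r * t) X a c ≤ condConst r t ^ H *
      ((p : ℝ) ^ (2 * ((r * t : ℕ) : ℝ) / 3)) ^ H * Imax k p r (r * t) X a (c + H) := by
  have hC := zero_le_one.trans (one_le_condConst r t)
  induction H with
  | zero => right; simp
  | succ H ih =>
    rcases ih with ⟨h, hh, hle⟩ | hle
    · exact Or.inl ⟨h, by omega, hle⟩
    · have h1 := Imax_le_of_conditioning (k := k) (X := X) hp ht hr ha (show 1 ≤ c + H by omega)
      rcases max_cases (Kmax k p r t X a (c + H))
        ((p : ℝ) ^ (2 * ((r * t : ℕ) : ℝ) / 3) * Imax k p r (r * t) X a (c + H + 1)) with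
        ⟨h2, -⟩ | ⟨h2, -⟩
      · left
        rw [h2] at h1
        refine ⟨H, by omega, hle.trans ?_⟩
        calc _ ≤ condConst r t ^ H * ((p : ℝ) ^ (2 * ((r * t : ℕ) : ℝ) / 3)) ^ H *
              (condConst r t * Kmax k p r t X a (c + H)) := by gcongr
          _ = _ := by ring
      · right
        rw [h2] at h1
        refine hle.trans ?_
        calc _ ≤ condConst r t ^ H * ((p : ℝ) ^ (2 * ((r * t : ℕ) : ℝ) / 3)) ^ H *
              (condConst r t * ((p : ℝ) ^ (2 * ((r * t : ℕ) : ℝ) / 3) *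
                Imax k p r (r * t) X a (c + H + 1))) := by gcongr
          _ = _ := by rw [← add_assoc]; ring

end conditioning

lemma finite_Jcount_set (s k : ℕ) (X : ℝ) :
    {xy : (Fin s → ℤ) × (Fin s → ℤ) |
      (∀ i, 1 ≤ xy.1 i ∧ (xy.1 i : ℝ) ≤ X) ∧
      (∀ i, 1 ≤ xy.2 i ∧ (xy.2 i : ℝ) ≤ X) ∧
      ∀ j ∈ Finset.Icc 1 k, ∑ i, ((xy.1 i) ^ j - (xy.2 i) ^ j) = 0}.Finite := by
  have h : (Set.univ.pi fun _ : Fin s => Set.Icc (1 : ℤ) ⌊X⌋).Finite :=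
    Set.Finite.pi fun _ => Set.finite_Icc _ _
  refine (h.prod h).subset ?_
  rintro ⟨x, y⟩ ⟨h1, h2, -⟩
  exact ⟨fun i _ => ⟨(h1 i).1, Int.le_floor.2 (h1 i).2⟩,
    fun i _ => ⟨(h2 i).1, Int.le_floor.2 (h2 i).2⟩⟩

lemma Jcount_mono (s k : ℕ) {X Y : ℝ} (h : X ≤ Y) : Jcount s k X ≤ Jcount s k Y := by
  refine Set.ncard_le_ncard ?_ (finite_Jcount_set s k Y)
  rintro ⟨x, y⟩ ⟨h1, h2, h3⟩
  exact ⟨fun i => ⟨(h1 i).1, (h1 i).2.trans h⟩, fun i => ⟨(h2 i).1, (h2 i).2.trans h⟩, h3⟩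

lemma floor_pow_le_Jcount (s k : ℕ) (X : ℝ) : ⌊X⌋₊ ^ s ≤ Jcount s k X := by
  let e : (Fin s → Fin ⌊X⌋₊) → (Fin s → ℤ) × (Fin s → ℤ) :=
    fun v => (fun i => (v i : ℤ) + 1, fun i => (v i : ℤ) + 1)
  have he : Function.Injective e := by
    intro v w h
    funext i
    have h1 := congrFun (congrArg Prod.fst h) i
    simp only [e] at h1
    exact Fin.ext (by omega)
  have hcard : (Set.range e).ncard = ⌊X⌋₊ ^ s := by
    rw [← Set.image_univ, Set.ncard_image_of_injective _ he, Set.ncard_univ]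
    simp
  rw [← hcard]
  refine Set.ncard_le_ncard ?_ (finite_Jcount_set s k X)
  rintro _ ⟨v, rfl⟩
  have h1 : ∀ i, 1 ≤ ((v i : ℕ) : ℤ) + 1 ∧ ((((v i : ℕ) : ℤ) + 1 : ℤ) : ℝ) ≤ X := by
    intro i
    have hv : (v i : ℕ) + 1 ≤ ⌊X⌋₊ := (v i).2
    refine ⟨by omega, ?_⟩
    have h3 : (((v i : ℕ) + 1 : ℕ) : ℝ) ≤ X :=
      (Nat.le_floor_iff' (Nat.succ_ne_zero _)).1 hv
    push_cast at h3 ⊢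
    exact h3
  exact ⟨h1, h1, fun j _ => by simp [e]⟩

lemma sum_add_pow_eq_of_sum_pow_eq {ι : Type*} [Fintype ι] {k : ℕ} {x y : ι → ℤ}
    (h : ∀ j, 1 ≤ j → j ≤ k → ∑ i, x i ^ j = ∑ i, y i ^ j) (d : ℤ) {j : ℕ} (hj : j ≤ k) :
    ∑ i, (x i + d) ^ j = ∑ i, (y i + d) ^ j := by
  have h' : ∀ j, j ≤ k → ∑ i, x i ^ j = ∑ i, y i ^ j := by
    intro j hj
    rcases Nat.eq_zero_or_pos j with rfl | hj0
    · simp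
    · exact h j hj0 hj
  simp only [add_pow]
  rw [sum_comm, sum_comm (s := univ (α := ι))]
  refine sum_congr rfl fun m hm => ?_
  rw [← sum_mul, ← sum_mul, ← sum_mul, ← sum_mul, h' m (by have := mem_range.1 hm; omega)]

lemma powVec_sum_apply {ι : Type*} [Fintype ι] {k : ℕ} (x : ι → ℤ) (j : Fin k) :
    (∑ i, powVec k (x i)) j = ∑ i, x i ^ ((j : ℕ) + 1) := by
  simp [powVec, Finset.sum_apply]

lemma integral_fexp_eq_card (k p : ℕ) (X : ℝ) (c : ℕ) (ξ : ℤ) (u : ℕ) :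
    ∫ α in box k, ‖fexp k p X c ξ α‖ ^ (2 * u) =
      (((Fintype.piFinset fun _ : Fin u => prog p X c ξ) ×ˢ
        (Fintype.piFinset fun _ : Fin u => prog p X c ξ)).filter
          fun z => ∑ i, powVec k (z.1 i) = ∑ i, powVec k (z.2 i)).card := by
  set f := fexp k p X c ξ with hf
  have h1 : f ^ u = ∑ x ∈ Fintype.piFinset fun _ : Fin u => prog p X c ξ,
      chi (∑ i, powVec k (x i)) := by
    simp only [chi_sum]
    rw [← prod_univ_sum (fun _ : Fin u => prog p X c ξ) (fun _ x => chi (powVec k x)), prod_const,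
      card_univ, Fintype.card_fin, hf, fexp_eq_sum]
  have h2 : ∀ α, (f ^ u * star (f ^ u)) α = ((‖f α‖ ^ (2 * u) : ℝ) : ℂ) := by
    intro α
    rw [mul_star_apply, Pi.pow_apply, norm_pow, ← pow_mul, mul_comm u]
  have h3 : f ^ u * star (f ^ u) = ∑ z ∈ (Fintype.piFinset fun _ : Fin u => prog p X c ξ) ×ˢ
        (Fintype.piFinset fun _ : Fin u => prog p X c ξ),
      chi (∑ i, powVec k (z.1 i) - ∑ i, powVec k (z.2 i)) := by
    rw [h1, star_sum, sum_mul_sum, sum_product]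
    simp only [star_chi, ← chi_add, ← sub_eq_add_neg]
  rw [← integral_re_eq h2, h3]
  simp only [Finset.sum_apply]
  rw [integral_finsetSum _ fun z _ => integrableOn_box (continuous_chi _)]
  simp only [integral_chi, sub_eq_zero]
  rw [sum_boole]
  simp

lemma integral_fexp_le_Jcount {k p : ℕ} (hp : 0 < p) (X : ℝ) (c : ℕ) (ξ : ℤ) (u : ℕ) :
    ∫ α in box k, ‖fexp k p X c ξ α‖ ^ (2 * u) ≤ Jcount u k (X / (p : ℝ) ^ c + 1) := by
  rw [integral_fexp_eq_card]
  have hq : (0 : ℤ) < (p : ℤ) ^ c := by positivity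
  set q : ℤ := (p : ℤ) ^ c with hqdef
  let e : (Fin u → ℤ) × (Fin u → ℤ) → (Fin u → ℤ) × (Fin u → ℤ) :=
    fun z => (fun i => z.1 i / q + 1, fun i => z.2 i / q + 1)
  have hdecomp : ∀ x ∈ prog p X c ξ, q * (x / q + 1) = x + (q - ξ % q) := by
    intro x hx
    have h1 := Int.mul_ediv_add_emod x q
    rw [(mem_prog.1 hx).2] at h1
    linarith
  have hrange : ∀ x ∈ prog p X c ξ, 1 ≤ x / q + 1 ∧ ((x / q + 1 : ℤ) : ℝ) ≤ X / (p : ℝ) ^ c + 1 := by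
    intro x hx
    obtain ⟨⟨h1, h2⟩, -⟩ := mem_prog.1 hx
    refine ⟨?_, ?_⟩
    · have := Int.ediv_nonneg (show 0 ≤ x by omega) hq.le
      omega
    · push_cast
      have h3 : q * (x / q) ≤ x := Int.mul_ediv_self_le hq.ne'
      have h4 : (x : ℝ) ≤ X := Int.le_floor.1 h2
      have h5 : ((p : ℝ) ^ c) * ((x / q : ℤ) : ℝ) ≤ x := by
        have h6 : ((q * (x / q) : ℤ) : ℝ) ≤ x := by exact_mod_cast h3
        rw [hqdef] at h6 ⊢
        push_cast at h6
        exact h6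
      have h7 : (0 : ℝ) < (p : ℝ) ^ c := by positivity
      have h8 : ((x / q : ℤ) : ℝ) ≤ X / (p : ℝ) ^ c := by
        rw [le_div_iff₀ h7]
        linarith
      linarith
  have hinj : Set.InjOn e ((((Fintype.piFinset fun _ : Fin u => prog p X c ξ) ×ˢ
        (Fintype.piFinset fun _ : Fin u => prog p X c ξ)).filter
          fun z => ∑ i, powVec k (z.1 i) = ∑ i, powVec k (z.2 i) : Finset _) : Set _) := by
    have haux : ∀ x ∈ prog p X c ξ, ∀ y ∈ prog p X c ξ, x / q + 1 = y / q + 1 → x = y := by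
      intro x hx y hy hxy
      have h1 := hdecomp x hx
      have h2 := hdecomp y hy
      rw [hxy] at h1
      linarith
    intro z hz w hw hzw
    simp only [coe_filter, mem_product, Fintype.mem_piFinset, Set.mem_ofPred_eq] at hz hw
    refine Prod.ext (funext fun i => ?_) (funext fun i => ?_)
    · exact haux _ (hz.1.1 i) _ (hw.1.1 i) (congrFun (congrArg Prod.fst hzw) i)
    · exact haux _ (hz.1.2 i) _ (hw.1.2 i) (congrFun (congrArg Prod.snd hzw) i)
  rw [← Set.ncard_coe_finset, ← hinj.ncard_image]
  refine Nat.cast_le.2 (Set.ncard_le_ncard ?_ (finite_Jcount_set u k _))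
  rintro _ ⟨z, hz, rfl⟩
  simp only [coe_filter, mem_product, Fintype.mem_piFinset, Set.mem_ofPred_eq] at hz
  refine ⟨fun i => hrange _ (hz.1.1 i), fun i => hrange _ (hz.1.2 i), fun j hj => ?_⟩
  rw [mem_Icc] at hj
  have hps : ∀ j, 1 ≤ j → j ≤ k → ∑ i, z.1 i ^ j = ∑ i, z.2 i ^ j := by
    intro j hj1 hj2
    have := congrFun hz.2 ⟨j - 1, by omega⟩
    rw [powVec_sum_apply, powVec_sum_apply] at this
    simpa [Nat.sub_add_cancel hj1] using this
  have h1 := sum_add_pow_eq_of_sum_pow_eq hps (q - ξ % q) hj.2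
  have h2 : q ^ j * ∑ i, (z.1 i / q + 1) ^ j = q ^ j * ∑ i, (z.2 i / q + 1) ^ j := by
    rw [mul_sum, mul_sum]
    simp only [← mul_pow]
    simp only [hdecomp _ (hz.1.1 _), hdecomp _ (hz.1.2 _), h1]
  have h3 := mul_left_cancel₀ (pow_ne_zero j hq.ne') h2
  simp only [e]
  rw [sum_sub_distrib, h3, sub_self]

/-- The trigonometric polynomial attached to a finite set of tuples. -/
def tupleSum (k : ℕ) {r : ℕ} (S : Finset (Fin r → ℤ)) : (Fin k → ℝ) → ℂ :=
  ∑ x ∈ S, chi (∑ i, powVec k (x i))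

section tupleSum

variable {k p r : ℕ} {X : ℝ} {c : ℕ} {ξ η : ℤ}

lemma tupleSum_mem (S : Finset (Fin r → ℤ)) : tupleSum k S ∈ posTrig ⊤ :=
  sum_mem fun _ _ => chi_mem_posTrig (AddSubgroup.mem_top _)

lemma prod_fexp_eq_tupleSum (v : Fin r → ℤ) :
    ∏ i, fexp k p X c (v i) = tupleSum k (Fintype.piFinset fun i => prog p X c (v i)) := by
  simp only [fexp_eq_sum, tupleSum, chi_sum]
  rw [← prod_univ_sum (fun i : Fin r => prog p X c (v i)) (fun _ x => chi (powVec k x))]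

lemma tupleSum_sub_mem {S T : Finset (Fin r → ℤ)} (h : S ⊆ T) :
    tupleSum k T - tupleSum k S ∈ posTrig ⊤ := by
  rw [tupleSum, tupleSum, ← sum_sdiff h, add_sub_cancel_right]
  exact tupleSum_mem _

lemma exists_tupleSum_eq_of_refinements {S : Finset (Fin r → ℤ)}
    (hS : ∀ v ∈ S, (∀ i, v i ∈ refinements p c ξ) ∧ Function.Injective v) :
    ∃ T : Finset (Fin r → ℤ),
      ∑ v ∈ S, ∏ i, fexp k p X (c + 1) (v i) = tupleSum k T ∧
      ∀ x ∈ T, (∀ i, x i ∈ prog p X c ξ) ∧ (∀ i j, x i ≡ x j [ZMOD (p : ℤ) ^ (c + 1)] → i = j) ∧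
        ∃ v ∈ S, ∀ i, x i ≡ v i [ZMOD (p : ℤ) ^ (c + 1)] := by
  refine ⟨S.biUnion fun v => Fintype.piFinset fun i => prog p X (c + 1) (v i), ?_, ?_⟩
  · rw [tupleSum, sum_biUnion]
    · exact sum_congr rfl fun v _ => prod_fexp_eq_tupleSum v
    · intro v hv w hw hvw
      rw [Function.onFun, disjoint_left]
      intro x hx hx'
      rw [Fintype.mem_piFinset] at hx hx'
      refine hvw (funext fun i => ?_)
      exact eq_of_modEq_of_mem_Icc (mem_refinements.1 ((hS v hv).1 i)).1
        (mem_refinements.1 ((hS w hw).1 i)).1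
        ((mem_prog.1 (hx i)).2.symm.trans (mem_prog.1 (hx' i)).2)
  · intro x hx
    obtain ⟨v, hv, hxv⟩ := mem_biUnion.1 hx
    have hxv' : ∀ i, x i ∈ prog p X (c + 1) (v i) := Fintype.mem_piFinset.1 hxv
    have hmod : ∀ i, x i ≡ v i [ZMOD (p : ℤ) ^ (c + 1)] := fun i => (mem_prog.1 (hxv' i)).2
    refine ⟨fun i => mem_prog.2 ⟨(mem_prog.1 (hxv' i)).1, ?_⟩, fun i j hij => ?_, v, hv, hmod⟩
    · exact ((hmod i).of_dvd (pow_dvd_pow _ (Nat.le_succ c))).trans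
        (mem_refinements.1 ((hS v hv).1 i)).2
    · refine (hS v hv).2 ?_
      exact eq_of_modEq_of_mem_Icc (mem_refinements.1 ((hS v hv).1 i)).1
        (mem_refinements.1 ((hS v hv).1 j)).1 ((hmod i).symm.trans (hij.trans (hmod j)))

lemma exists_tupleSum_eq_Fexp (k p r : ℕ) (X : ℝ) (c : ℕ) (ξ : ℤ) :
    ∃ T : Finset (Fin r → ℤ), Fexp k p r X c ξ = tupleSum k T ∧
      ∀ x ∈ T, (∀ i, x i ∈ prog p X c ξ) ∧
        ∀ i j, x i ≡ x j [ZMOD (p : ℤ) ^ (c + 1)] → i = j := by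
  obtain ⟨T, hT, hx⟩ := exists_tupleSum_eq_of_refinements (k := k) (p := p) (X := X) (c := c)
    (ξ := ξ) (S := (Fintype.piFinset fun _ : Fin r => refinements p c ξ).filter Function.Injective)
    (fun v hv => ⟨Fintype.mem_piFinset.1 (mem_filter.1 hv).1, (mem_filter.1 hv).2⟩)
  exact ⟨T, Fexp_eq_sum.trans hT, fun x h => ⟨(hx x h).1, (hx x h).2.1⟩⟩

lemma exists_tupleSum_eq_Ftilde (k p r : ℕ) (X : ℝ) (η : ℤ) :
    ∃ T : Finset (Fin r → ℤ), Ftilde k p r X η = tupleSum k T ∧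
      ∀ x ∈ T, (∀ i, x i ∈ prog p X 0 0) ∧ (∀ i, ¬ x i ≡ η [ZMOD p]) ∧
        ∀ i j, x i ≡ x j [ZMOD (p : ℤ) ^ (0 + 1)] → i = j := by
  set S : Finset (Fin r → ℤ) :=
    (Fintype.piFinset fun _ : Fin r => refinements p 0 0).filter fun v =>
      Function.Injective v ∧ ∀ i, ¬ v i ≡ η [ZMOD p] with hSdef
  have hXi : XiTilde p r η = (S : Set (Fin r → ℤ)) := by
    ext v
    simp only [XiTilde, Set.mem_ofPred_eq, mem_XiSet_iff, hSdef, coe_filter,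
      Fintype.mem_piFinset, and_assoc]
  obtain ⟨T, hT, hx⟩ := exists_tupleSum_eq_of_refinements (k := k) (p := p) (X := X) (c := 0)
    (ξ := 0) (S := S)
    (fun v hv => ⟨Fintype.mem_piFinset.1 (mem_filter.1 hv).1, (mem_filter.1 hv).2.1⟩)
  refine ⟨T, ?_, fun x h => ⟨(hx x h).1, fun i hi => ?_, (hx x h).2.1⟩⟩
  · rw [← hT]
    funext α
    rw [Ftilde, hXi, finsum_mem_coe_finset]
    simp
  · obtain ⟨v, hv, hxv⟩ := (hx x h).2.2
    refine (mem_filter.1 hv).2.2 i ?_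
    have := hxv i
    rw [zero_add, pow_one] at this
    exact this.symm.trans hi

end tupleSum

/-- The linear form `n ↦ ∑ l, binom(j+1, l+1) (-η)^(j-l) n_l`, sending the vector of powers of
`x` to `(x - η)^(j+1) - (-η)^(j+1)`. -/
def shiftForm (k : ℕ) (η : ℤ) (j : ℕ) (n : Fin k → ℤ) : ℤ :=
  ∑ l : Fin k, ((j + 1).choose ((l : ℕ) + 1) : ℤ) * (-η) ^ (j - (l : ℕ)) * n l

lemma shiftForm_add (k : ℕ) (η : ℤ) (j : ℕ) (m n : Fin k → ℤ) :
    shiftForm k η j (m + n) = shiftForm k η j m + shiftForm k η j n := by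
  simp only [shiftForm, Pi.add_apply, mul_add, sum_add_distrib]

lemma shiftForm_neg (k : ℕ) (η : ℤ) (j : ℕ) (n : Fin k → ℤ) :
    shiftForm k η j (-n) = -shiftForm k η j n := by
  simp only [shiftForm, Pi.neg_apply, mul_neg, sum_neg_distrib]

lemma shiftForm_powVec {k : ℕ} (η : ℤ) {j : ℕ} (hj : j < k) (x : ℤ) :
    shiftForm k η j (powVec k x) = (x - η) ^ (j + 1) - (-η) ^ (j + 1) := by
  have h1 : shiftForm k η j (powVec k x) = ∑ l ∈ range k,
      ((j + 1).choose (l + 1) : ℤ) * (-η) ^ (j - l) * x ^ (l + 1) :=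
    Fin.sum_univ_eq_sum_range
      (fun l => ((j + 1).choose (l + 1) : ℤ) * (-η) ^ (j - l) * x ^ (l + 1)) k
  have h2 : ∑ l ∈ range k, ((j + 1).choose (l + 1) : ℤ) * (-η) ^ (j - l) * x ^ (l + 1) =
      ∑ l ∈ range (j + 1), ((j + 1).choose (l + 1) : ℤ) * (-η) ^ (j - l) * x ^ (l + 1) := by
    symm
    refine sum_subset (range_mono (by omega)) fun l _ hl => ?_
    rw [mem_range, not_lt] at hl
    rw [Nat.choose_eq_zero_of_lt (by omega)]
    simp
  rw [h1, h2, sub_eq_add_neg x η, add_pow, sum_range_succ' _ (j + 1)]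
  simp only [pow_zero, one_mul, Nat.choose_zero_right, Nat.cast_one, mul_one, Nat.sub_zero,
    add_sub_cancel_right]
  refine sum_congr rfl fun l _ => ?_
  rw [Nat.add_sub_add_right]
  ring

lemma shiftForm_sum {k r : ℕ} (η : ℤ) {j : ℕ} (hj : j < k) (x y : Fin r → ℤ) :
    shiftForm k η j (∑ i, powVec k (x i) + -∑ i, powVec k (y i)) =
      ∑ i, (x i - η) ^ (j + 1) - ∑ i, (y i - η) ^ (j + 1) := by
  have h : ∀ z : Fin r → ℤ, shiftForm k η j (∑ i, powVec k (z i)) =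
      ∑ i, ((z i - η) ^ (j + 1) - (-η) ^ (j + 1)) := by
    intro z
    simp only [← shiftForm_powVec η hj]
    exact map_sum (AddMonoidHom.mk' (shiftForm k η j) (shiftForm_add k η j)) _ _
  rw [shiftForm_add, shiftForm_neg, h, h]
  simp only [sum_sub_distrib]
  ring

/-- The frequencies whose shifted coordinates of index `j` are divisible by `p ^ (j b)`. -/
def shiftLattice (k p b : ℕ) (η : ℤ) : AddSubgroup (Fin k → ℤ) where
  carrier := {n | ∀ j < k, (p : ℤ) ^ ((j + 1) * b) ∣ shiftForm k η j n}
  add_mem' := fun {m n} hm hn j hj => by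
    rw [shiftForm_add]
    exact dvd_add (hm j hj) (hn j hj)
  zero_mem' := fun j _ => by simp [shiftForm]
  neg_mem' := fun {n} hn j hj => by
    rw [shiftForm_neg]
    exact (hn j hj).neg_right

lemma Fexp_mul_star_mem (k p r : ℕ) (X : ℝ) (b : ℕ) (η : ℤ) :
    Fexp k p r X b η * star (Fexp k p r X b η) ∈ posTrig (shiftLattice k p b η) := by
  obtain ⟨T, hT, hx⟩ := exists_tupleSum_eq_Fexp k p r X b η
  rw [hT, tupleSum, star_sum, sum_mul_sum]
  refine sum_mem fun x hxT => sum_mem fun y hyT => ?_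
  rw [star_chi, ← chi_add]
  refine chi_mem_posTrig fun j hj => ?_
  rw [shiftForm_sum η hj]
  have h : ∀ z ∈ T, (p : ℤ) ^ ((j + 1) * b) ∣ ∑ i, (z i - η) ^ (j + 1) := by
    intro z hz
    refine dvd_sum fun i _ => ?_
    rw [mul_comm, pow_mul]
    exact pow_dvd_pow_of_dvd (mem_prog.1 ((hx z hz).1 i)).2.symm.dvd _
  exact dvd_sub (h x hxT) (h y hyT)

/-- The representative in `[1, n]` of the class of `x` modulo `n`. -/
def resRep (n x : ℤ) : ℤ := (x - 1) % n + 1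

lemma resRep_modEq (n x : ℤ) : resRep n x ≡ x [ZMOD n] := by
  have := (Int.mod_modEq (x - 1) n).add_right 1
  simpa [resRep] using this

lemma resRep_mem {n : ℤ} (hn : 0 < n) (x : ℤ) : 1 ≤ resRep n x ∧ resRep n x ≤ n := by
  have h1 := Int.emod_nonneg (x - 1) hn.ne'
  have h2 := Int.emod_lt_of_pos (x - 1) hn
  unfold resRep
  omega

lemma norm_sum_sq_le_card_mul {ι : Type*} (S : Finset ι) (z : ι → ℂ) :
    ‖∑ i ∈ S, z i‖ ^ 2 ≤ S.card * ∑ i ∈ S, ‖z i‖ ^ 2 :=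
  (pow_le_pow_left₀ (norm_nonneg _) (norm_sum_le _ _) 2).trans sq_sum_le_card_mul_sum_sq

section congruencing

variable {k r : ℕ} {β : Type*} [DecidableEq β]

lemma tupleSum_eq_sum_fiber (S : Finset (Fin r → ℤ)) (m : (Fin r → ℤ) → β) {B : Finset β}
    (hB : ∀ x ∈ S, m x ∈ B) :
    tupleSum k S = ∑ y ∈ B, tupleSum k (S.filter fun x => m x = y) := by
  simp only [tupleSum]
  exact (sum_fiberwise_of_maps_to hB _).symm

/-- Tuples in distinct cosets of `V` are orthogonal with respect to a weight with frequencies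
in `V`. -/
lemma integral_mul_norm_tupleSum_sq {V : AddSubgroup (Fin k → ℤ)} {W : (Fin k → ℝ) → ℂ}
    (hW : W ∈ posTrig V) {w : (Fin k → ℝ) → ℝ} (hw : ∀ α, W α = (w α : ℂ))
    (S : Finset (Fin r → ℤ)) (m : (Fin r → ℤ) → β) {B : Finset β} (hB : ∀ x ∈ S, m x ∈ B)
    (hm : ∀ x ∈ S, ∀ y ∈ S, ∑ i, powVec k (x i) + -∑ i, powVec k (y i) ∈ V → m x = m y) :
    ∫ α in box k, w α * ‖tupleSum k S α‖ ^ 2 =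
      ∑ y ∈ B, ∫ α in box k, w α * ‖tupleSum k (S.filter fun x => m x = y) α‖ ^ 2 := by
  have hWc := continuous_of_mem_posTrig hW
  have key : ∀ S : Finset (Fin r → ℤ), ∫ α in box k, w α * ‖tupleSum k S α‖ ^ 2 =
      ∑ x ∈ S, ∑ y ∈ S,
        (∫ α in box k, chi (∑ i, powVec k (x i) + -∑ i, powVec k (y i)) α * W α).re := by
    intro S
    have h1 : ∀ α, (tupleSum k S * star (tupleSum k S) * W) α =
        ((w α * ‖tupleSum k S α‖ ^ 2 : ℝ) : ℂ) := by
      intro α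
      rw [Pi.mul_apply, mul_star_apply, hw]
      push_cast
      ring
    have h2 : tupleSum k S * star (tupleSum k S) * W = ∑ x ∈ S, ∑ y ∈ S,
        chi (∑ i, powVec k (x i) + -∑ i, powVec k (y i)) * W := by
      rw [tupleSum, star_sum, sum_mul_sum, sum_mul]
      simp only [sum_mul, star_chi, ← chi_add]
    have hc : ∀ n : Fin k → ℤ, Continuous fun α => chi n α * W α :=
      fun n => (continuous_chi n).mul hWc
    rw [← integral_re_eq h1, h2]
    simp only [Finset.sum_apply, Pi.mul_apply]
    rw [integral_finsetSum _ fun x _ => integrableOn_box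
      (continuous_finsetSum _ fun y _ => hc _), Complex.re_sum]
    refine sum_congr rfl fun x _ => ?_
    rw [integral_finsetSum _ fun y _ => integrableOn_box (hc _), Complex.re_sum]
  simp only [key]
  rw [← sum_fiberwise_of_maps_to hB]
  refine sum_congr rfl fun y _ => sum_congr rfl fun x hx => ?_
  rw [mem_filter] at hx
  symm
  refine sum_subset (filter_subset _ _) fun z hz hz' => ?_
  rw [integral_chi_mul_eq_zero (fun hV => hz' ?_) hW, Complex.zero_re]
  rw [mem_filter]
  exact ⟨hz, (hm x hx.1 z hz hV).symm.trans hx.2⟩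

/-- The squares of the pieces of a sum of tuples are jointly dominated by the square of any
sum over a larger set of tuples. -/
lemma sum_integral_mul_norm_sq_le {W : (Fin k → ℝ) → ℂ} (hW : W ∈ posTrig ⊤)
    {w : (Fin k → ℝ) → ℝ} (hw : ∀ α, W α = (w α : ℂ)) (S T : Finset (Fin r → ℤ)) (hST : S ⊆ T)
    (m : (Fin r → ℤ) → β) (B : Finset β) (hB : ∀ x ∈ S, m x ∈ B) :
    ∑ y ∈ B, ∫ α in box k, w α * ‖tupleSum k (S.filter fun x => m x = y) α‖ ^ 2 ≤
      ∫ α in box k, w α * ‖tupleSum k T α‖ ^ 2 := by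
  set G : β → (Fin k → ℝ) → ℂ := fun y => tupleSum k (S.filter fun x => m x = y) with hG
  have hGm : ∀ y, G y ∈ posTrig ⊤ := fun y => tupleSum_mem _
  have h1 : tupleSum k S * star (tupleSum k S) - ∑ y ∈ B, G y * star (G y) ∈ posTrig ⊤ := by
    rw [tupleSum_eq_sum_fiber S m hB, star_sum, sum_mul_sum, ← sum_sub_distrib]
    refine sum_mem fun y hy => ?_
    rw [← add_sum_erase B (fun z => G y * star (G z)) hy, add_sub_cancel_left]
    exact sum_mem fun z _ => mul_mem (hGm y) (star_mem_posTrig (hGm z))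
  have h2 : tupleSum k T * star (tupleSum k T) - tupleSum k S * star (tupleSum k S) ∈ posTrig ⊤ :=
    mul_star_sub_mul_star_mem (tupleSum_mem S) (tupleSum_mem T) (tupleSum_sub_mem hST)
  have h3 : W * (tupleSum k T * star (tupleSum k T)) - ∑ y ∈ B, W * (G y * star (G y)) ∈
      posTrig ⊤ := by
    rw [← mul_sum, ← mul_sub]
    refine mul_mem hW ?_
    have := add_mem h2 h1
    rwa [sub_add_sub_cancel] at this
  have hval : ∀ (F : (Fin k → ℝ) → ℂ) α, (W * (F * star F)) α = ((w α * ‖F α‖ ^ 2 : ℝ) : ℂ) := by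
    intro F α
    rw [Pi.mul_apply, mul_star_apply, hw]
    push_cast
    rfl
  have hcG : ∀ y, Continuous (W * (G y * star (G y))) := fun y =>
    continuous_of_mem_posTrig (mul_mem hW (mul_mem (hGm y) (star_mem_posTrig (hGm y))))
  have hcT : Continuous (W * (tupleSum k T * star (tupleSum k T))) := continuous_of_mem_posTrig
    (mul_mem hW (mul_mem (tupleSum_mem T) (star_mem_posTrig (tupleSum_mem T))))
  have hcS : Continuous (∑ y ∈ B, W * (G y * star (G y))) :=
    continuous_of_mem_posTrig (V := ⊤) (sum_mem fun y _ =>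
      mul_mem hW (mul_mem (hGm y) (star_mem_posTrig (hGm y))))
  have h4 := integral_re_le_of_sub_mem hcS hcT h3
  simp only [Finset.sum_apply] at h4
  rw [integral_finsetSum _ fun y _ => integrableOn_box (hcG y), Complex.re_sum,
    integral_re_eq (hval _)] at h4
  simpa only [integral_re_eq (hval _)] using h4

lemma integral_mul_norm_tupleSum_sq_le_card {w : (Fin k → ℝ) → ℝ} (hw0 : ∀ α, 0 ≤ w α)
    (hwc : Continuous w) (S : Finset (Fin r → ℤ)) (m : (Fin r → ℤ) → β)
    {B : Finset β} (hB : ∀ x ∈ S, m x ∈ B) :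
    ∫ α in box k, w α * ‖tupleSum k S α‖ ^ 2 ≤ B.card *
      ∑ y ∈ B, ∫ α in box k, w α * ‖tupleSum k (S.filter fun x => m x = y) α‖ ^ 2 := by
  have hcont : ∀ S : Finset (Fin r → ℤ), Continuous fun α => w α * ‖tupleSum k S α‖ ^ 2 :=
    fun S => by have := continuous_of_mem_posTrig (tupleSum_mem (k := k) S); fun_prop
  rw [mul_sum]
  simp only [← integral_const_mul]
  rw [← integral_finsetSum _ fun y _ => integrableOn_box ((hcont _).const_mul _)]
  refine integral_box_mono (hcont S)
    (continuous_finsetSum _ fun y _ => (hcont _).const_mul _) fun α => ?_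
  rw [tupleSum_eq_sum_fiber S m hB,
    Finset.sum_apply, ← mul_sum, ← mul_sum, mul_left_comm]
  exact mul_le_mul_of_nonneg_left (norm_sum_sq_le_card_mul _ _) (hw0 α)

variable {p t a b : ℕ} {X : ℝ} {ξ η : ℤ}

lemma card_image_resRep_le [Fact p.Prime] (hkp : k < p) (ht1 : k ≤ 2 * t + 1) (ht2 : t ≤ k)
    (ht : 1 ≤ t) (hr1 : 1 ≤ r) (hr2 : r ≤ k) (hrt : k ≤ r + t) (hab : a < b) (hta : t * a ≤ b)
    (S : Finset (Fin r → ℤ)) (h1 : ∀ x ∈ S, ∀ i, x i ≡ ξ [ZMOD (p : ℤ) ^ a])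
    (h2 : ∀ x ∈ S, ∀ i j, x i ≡ x j [ZMOD (p : ℤ) ^ (a + 1)] → i = j)
    (h3 : ∀ x ∈ S, ∀ i, ¬ x i ≡ η [ZMOD p])
    (h4 : ∀ x ∈ S, ∀ y ∈ S, ∀ j, 1 ≤ j → j ≤ k →
      ∑ i, (x i - η) ^ j ≡ ∑ i, (y i - η) ^ j [ZMOD (p : ℤ) ^ (j * b)]) :
    (S.image fun x i => resRep ((p : ℤ) ^ (t * b)) (x i)).card ≤
      r ^ r * p ^ (muN k r t * b + nuN k r t * a) := by
  obtain ⟨U, hUS, hinj, himg⟩ := Finset.exists_subset_injOn_image_eq_of_surjOn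
    (f := fun (x : Fin r → ℤ) i => resRep ((p : ℤ) ^ (t * b)) (x i)) S
    (S.image fun x i => resRep ((p : ℤ) ^ (t * b)) (x i)) (by
      intro y hy
      obtain ⟨x, hx, rfl⟩ := mem_image.1 hy
      exact ⟨x, hx, rfl⟩)
  rw [← himg, card_image_of_injOn hinj]
  have hU : ∀ x ∈ U, x ∈ S := fun x hx => hUS hx
  refine card_le_of_congruences hkp ht1 ht2 ht hr1 hr2 hrt hab hta ξ η U
    (fun x hx => h1 x (hU x hx)) (fun x hx => h2 x (hU x hx)) (fun x hx => h3 x (hU x hx))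
    (fun x hx y hy => h4 x (hU x hx) y (hU y hy)) fun x hx y hy hxy => hinj hx hy ?_
  funext i
  simp only [resRep]
  rw [(hxy i).sub_right 1]

/-- The heart of efficient congruencing: a mean square over tuples is bounded by averages over
residue classes modulo `p ^ (t b)`. -/
lemma integral_mul_norm_tupleSum_sq_le [Fact p.Prime] (hkp : k < p) (ht1 : k ≤ 2 * t + 1)
    (ht2 : t ≤ k) (ht : 1 ≤ t) (hr1 : 1 ≤ r) (hr2 : r ≤ k) (hrt : k ≤ r + t) (hab : a < b)
    (hta : t * a ≤ b) (S : Finset (Fin r → ℤ)) (h0 : ∀ x ∈ S, ∀ i, x i ∈ prog p X a ξ)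
    (h2 : ∀ x ∈ S, ∀ i j, x i ≡ x j [ZMOD (p : ℤ) ^ (a + 1)] → i = j)
    (h3 : ∀ x ∈ S, ∀ i, ¬ x i ≡ η [ZMOD p]) {W : (Fin k → ℝ) → ℂ}
    (hW : W ∈ posTrig (shiftLattice k p b η)) {w : (Fin k → ℝ) → ℝ}
    (hw : ∀ α, W α = (w α : ℂ)) (hw0 : ∀ α, 0 ≤ w α) (hwc : Continuous w) :
    ∫ α in box k, w α * ‖tupleSum k S α‖ ^ 2 ≤
      (r ^ r * p ^ (muN k r t * b + nuN k r t * a) : ℕ) *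
      ∑ ω ∈ S.image fun x i => resRep ((p : ℤ) ^ (t * b)) (x i),
        ∫ α in box k, w α * ‖∏ i, fexp k p X (t * b) (ω i) α‖ ^ 2 := by
  set R : (Fin r → ℤ) → Fin r → ℤ := fun x i => resRep ((p : ℤ) ^ (t * b)) (x i) with hR
  let m : (Fin r → ℤ) → Fin k → ℤ := fun x j =>
    (∑ i, (x i - η) ^ ((j : ℕ) + 1)) % (p : ℤ) ^ (((j : ℕ) + 1) * b)
  set L : ℕ := r ^ r * p ^ (muN k r t * b + nuN k r t * a)
  have hnn : ∀ S : Finset (Fin r → ℤ), 0 ≤ ∫ α in box k, w α * ‖tupleSum k S α‖ ^ 2 :=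
    fun S => integral_nonneg fun α => mul_nonneg (hw0 α) (by positivity)
  rw [integral_mul_norm_tupleSum_sq hW hw S m (B := S.image m) (fun x hx => mem_image_of_mem m hx)
    (by
      intro x _ y _ hxy
      funext j
      have hdvd := hxy j j.2
      rw [shiftForm_sum η j.2] at hdvd
      exact ((Int.modEq_iff_dvd.2 hdvd).symm))]
  have hstep : ∀ y ∈ S.image m,
      ∫ α in box k, w α * ‖tupleSum k (S.filter fun x => m x = y) α‖ ^ 2 ≤
      L * ∑ ω ∈ S.image R, ∫ α in box k,
        w α * ‖tupleSum k ((S.filter fun x => R x = ω).filter fun x => m x = y) α‖ ^ 2 := by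
    intro y _
    set Sy := S.filter fun x => m x = y with hSy
    have hcard : (Sy.image R).card ≤ L := by
      refine card_image_resRep_le (ξ := ξ) (η := η) hkp ht1 ht2 ht hr1 hr2 hrt hab hta Sy ?_ ?_ ?_ ?_
      · exact fun x hx i => (mem_prog.1 (h0 x (filter_subset _ _ hx) i)).2
      · exact fun x hx => h2 x (filter_subset _ _ hx)
      · exact fun x hx => h3 x (filter_subset _ _ hx)
      · intro x hx z hz j hj1 hj2
        have h := congrFun ((mem_filter.1 hx).2.trans (mem_filter.1 hz).2.symm) ⟨j - 1, by omega⟩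
        simp only [m, Nat.sub_add_cancel hj1] at h
        exact h
    have hcomm : ∀ ω, (S.filter fun x => R x = ω).filter (fun x => m x = y) =
        Sy.filter fun x => R x = ω := fun ω => by
      rw [hSy, filter_filter, filter_filter]
      simp only [and_comm]
    simp only [hcomm]
    refine (integral_mul_norm_tupleSum_sq_le_card hw0 hwc Sy R (B := Sy.image R)
      fun x hx => mem_image_of_mem R hx).trans ?_
    refine mul_le_mul (by exact_mod_cast hcard) ?_ (sum_nonneg fun _ _ => hnn _) (by positivity)
    exact sum_le_sum_of_subset_of_nonneg (image_subset_image (hSy ▸ filter_subset _ S))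
      fun ω _ _ => hnn _
  refine (sum_le_sum hstep).trans ?_
  rw [← mul_sum, sum_comm]
  refine mul_le_mul_of_nonneg_left (sum_le_sum fun ω _ => ?_) (by positivity)
  have hprod : ∀ α, ∏ i, fexp k p X (t * b) (ω i) α =
      tupleSum k (Fintype.piFinset fun i => prog p X (t * b) (ω i)) α := by
    intro α
    rw [← prod_fexp_eq_tupleSum, Finset.prod_apply]
  simp only [hprod]
  refine sum_integral_mul_norm_sq_le (posTrig_le_top hW) hw _ _ ?_ m _ ?_
  · intro x hx
    obtain ⟨hxS, hxω⟩ := mem_filter.1 hx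
    refine Fintype.mem_piFinset.2 fun i => mem_prog.2 ⟨(mem_prog.1 (h0 x hxS i)).1, ?_⟩
    rw [← hxω]
    exact (resRep_modEq _ _).symm
  · exact fun x hx => mem_image_of_mem m (filter_subset _ _ hx)

end congruencing

lemma card_filter_Icc_modEq_le {p a n : ℕ} (hp : 0 < p) (han : a ≤ n) (ξ : ℤ) :
    ((Icc (1 : ℤ) ((p : ℤ) ^ n)).filter fun x => x ≡ ξ [ZMOD (p : ℤ) ^ a]).card ≤
      p ^ (n - a) := by
  have hpz : (0 : ℤ) < p := by exact_mod_cast hp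
  have hpow : (p : ℤ) ^ n = (p : ℤ) ^ (n - a) * (p : ℤ) ^ a := by
    rw [← pow_add, Nat.sub_add_cancel han]
  have hmap : ∀ x ∈ (Icc (1 : ℤ) ((p : ℤ) ^ n)).filter fun x => x ≡ ξ [ZMOD (p : ℤ) ^ a],
      (x - 1) / (p : ℤ) ^ a ∈ Ico (0 : ℤ) ((p : ℤ) ^ (n - a)) := by
    intro x hx
    obtain ⟨h1, h2⟩ := mem_Icc.1 (mem_filter.1 hx).1
    rw [mem_Ico]
    refine ⟨Int.ediv_nonneg (by omega) (by positivity), ?_⟩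
    apply Int.ediv_lt_of_lt_mul (by positivity)
    omega
  have hcard := card_le_card_of_injOn _ hmap (by
    intro x hx y hy hxy
    have hx' := (mem_filter.1 hx).2
    have hy' := (mem_filter.1 hy).2
    have h : x - 1 ≡ y - 1 [ZMOD (p : ℤ) ^ a] := (hx'.trans hy'.symm).sub_right 1
    have h1 := Int.mul_ediv_add_emod (x - 1) ((p : ℤ) ^ a)
    have h2 := Int.mul_ediv_add_emod (y - 1) ((p : ℤ) ^ a)
    have h3 : (x - 1) / (p : ℤ) ^ a = (y - 1) / (p : ℤ) ^ a := hxy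
    rw [h3, h.eq, h2] at h1
    omega)
  refine hcard.trans ?_
  rw [Int.card_Ico, sub_zero]
  exact_mod_cast le_rfl

lemma norm_prod_sq_le_sum {r : ℕ} (hr : 1 ≤ r) (z : Fin r → ℂ) :
    ‖∏ i, z i‖ ^ 2 ≤ ∑ i, ‖z i‖ ^ (2 * r) := by
  have : Nonempty (Fin r) := ⟨⟨0, hr⟩⟩
  obtain ⟨j, hj⟩ := Finite.exists_max fun i => ‖z i‖
  have h1 : ‖∏ i, z i‖ ≤ ‖z j‖ ^ r := by
    rw [norm_prod]
    refine (prod_le_prod (fun i _ => norm_nonneg _) fun i _ => hj i).trans_eq ?_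
    simp
  calc ‖∏ i, z i‖ ^ 2 ≤ (‖z j‖ ^ r) ^ 2 := pow_le_pow_left₀ (norm_nonneg _) h1 2
    _ = ‖z j‖ ^ (2 * r) := by rw [← pow_mul, mul_comm]
    _ ≤ _ := single_le_sum (f := fun i => ‖z i‖ ^ (2 * r)) (fun i _ => by positivity)
      (mem_univ j)

section congruencing

variable {k p r t a b : ℕ} {X : ℝ} {ξ η : ℤ}

lemma integral_norm_Fexp_pow_le (hp : 0 < p) (n : ℕ) :
    ∫ α in box k, ‖Fexp k p r X b η α‖ ^ (2 * n) ≤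
      Jcount (r * n) k (X / (p : ℝ) ^ b + 1) := by
  have h := integral_mul_norm_pow_le_of_sub_mem (k := k) (W := 1) (w := fun _ => 1)
    (Fexp_mem (p := p) (r := r) (X := X) (c := b) (ξ := η)) (pow_mem fexp_mem r) (one_mem _)
    (fexp_pow_sub_Fexp_mem hp) (by simp) n
  simp only [one_mul, Pi.pow_apply, norm_pow, ← pow_mul] at h
  refine h.trans ?_
  rw [show r * (2 * n) = 2 * (r * n) by ring]
  exact integral_fexp_le_Jcount hp X b η (r * n)

lemma integral_norm_Fexp_mul_fexp_le (hp : 0 < p) (ht : 2 ≤ t) (c : ℕ) (ζ : ℤ) :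
    ∫ α in box k, ‖Fexp k p r X b η α‖ ^ (2 * t) * ‖fexp k p X c ζ α‖ ^ (2 * r) ≤
      Iab k p r (r * t) X b c η ζ ^ (1 / (t : ℝ)) *
        (Jcount (r * (t + 1)) k (X / (p : ℝ) ^ b + 1) : ℝ) ^ (1 - 1 / (t : ℝ)) := by
  have hF : Continuous fun α => ‖Fexp k p r X b η α‖ ^ 2 := continuous_Fexp.norm.pow 2
  have hf : Continuous fun α => ‖fexp k p X c ζ α‖ ^ (2 * r) := continuous_fexp.norm.pow _
  have h := integral_mul_pow_mul_pow_le hF hf hF (fun _ => by positivity)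
    (fun _ => by positivity) (fun _ => by positivity) (m := 1) (n := t - 1) one_pos (by omega)
  have ht0 : (t : ℝ) ≠ 0 := by positivity
  have e1 : ((1 : ℕ) : ℝ) / ((1 : ℕ) + (t - 1 : ℕ)) = 1 / (t : ℝ) := by
    rw [Nat.cast_sub (by omega : 1 ≤ t)]; push_cast; ring
  have e2 : ((t - 1 : ℕ) : ℝ) / ((1 : ℕ) + (t - 1 : ℕ)) = 1 - 1 / (t : ℝ) := by
    rw [Nat.cast_sub (by omega : 1 ≤ t)]; push_cast; rw [add_sub_cancel]; field_simp
  rw [e1, e2] at h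
  have g0 : ∀ α, ‖Fexp k p r X b η α‖ ^ 2 * (‖fexp k p X c ζ α‖ ^ (2 * r)) ^ 1 *
      (‖Fexp k p r X b η α‖ ^ 2) ^ (t - 1) =
      ‖Fexp k p r X b η α‖ ^ (2 * t) * ‖fexp k p X c ζ α‖ ^ (2 * r) := by
    intro α
    obtain ⟨n, rfl⟩ : ∃ n, t = n + 1 := ⟨t - 1, by omega⟩
    rw [Nat.add_sub_cancel, pow_one, pow_mul, pow_succ]
    ring
  have g1 : ∀ α, ‖Fexp k p r X b η α‖ ^ 2 * (‖fexp k p X c ζ α‖ ^ (2 * r)) ^ (1 + (t - 1)) =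
      ‖Fexp k p r X b η α‖ ^ 2 * ‖fexp k p X c ζ α‖ ^ (2 * (r * t)) := by
    intro α
    rw [← pow_mul, show 2 * r * (1 + (t - 1)) = 2 * (r * t) by
      rw [Nat.add_sub_cancel' (by omega : 1 ≤ t)]; ring]
  have g2 : ∀ α, ‖Fexp k p r X b η α‖ ^ 2 * (‖Fexp k p r X b η α‖ ^ 2) ^ (1 + (t - 1)) =
      ‖Fexp k p r X b η α‖ ^ (2 * (t + 1)) := by
    intro α
    rw [Nat.add_sub_cancel' (by omega : 1 ≤ t), pow_mul, pow_succ]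
    ring
  simp only [g0, g1, g2] at h
  refine h.trans (mul_le_mul_of_nonneg_left ?_ (Real.rpow_nonneg (Iab_nonneg ..) _))
  refine Real.rpow_le_rpow (integral_nonneg fun _ => by positivity)
    (integral_norm_Fexp_pow_le hp _) ?_
  rw [← e2]
  positivity

lemma integral_tupleSum_mul_Fexp_le [Fact p.Prime] (hkp : k < p) (ht1 : k ≤ 2 * t + 1)
    (ht2 : t ≤ k) (ht : 2 ≤ t) (hr1 : 1 ≤ r) (hr2 : r ≤ k) (hrt : k ≤ r + t) (hab : a < b)
    (hta : t * a ≤ b) (hη1 : 1 ≤ η) (hη2 : η ≤ (p : ℤ) ^ b) (S : Finset (Fin r → ℤ))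
    (h0 : ∀ x ∈ S, ∀ i, x i ∈ prog p X a ξ)
    (h2 : ∀ x ∈ S, ∀ i j, x i ≡ x j [ZMOD (p : ℤ) ^ (a + 1)] → i = j)
    (h3 : ∀ x ∈ S, ∀ i, ¬ x i ≡ η [ZMOD p]) :
    ∫ α in box k, ‖tupleSum k S α‖ ^ 2 * ‖Fexp k p r X b η α‖ ^ (2 * t) ≤
      (r ^ r * p ^ (muN k r t * b + nuN k r t * a) : ℕ) * ((p ^ (t * b - a)) ^ r : ℕ) *
      (r * (Imax k p r (r * t) X b (t * b) ^ (1 / (t : ℝ)) *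
        (Jcount (r * (t + 1)) k (X / (p : ℝ) ^ b + 1) : ℝ) ^ (1 - 1 / (t : ℝ)))) := by
  have hp : 0 < p := by omega
  have hb : 1 ≤ t * b := Nat.mul_pos (by omega) (by omega)
  have hatb : a ≤ t * b := by nlinarith
  set J : ℝ := (Jcount (r * (t + 1)) k (X / (p : ℝ) ^ b + 1) : ℝ) ^ (1 - 1 / (t : ℝ))
  have hJ : 0 ≤ J := by positivity
  set B := Imax k p r (r * t) X b (t * b) ^ (1 / (t : ℝ)) * J
  have hB : 0 ≤ B := mul_nonneg (Real.rpow_nonneg (Imax_nonneg ..) _) hJ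
  have hwc : Continuous fun α => ‖Fexp k p r X b η α‖ ^ (2 * t) := continuous_Fexp.norm.pow _
  have hmain := integral_mul_norm_tupleSum_sq_le (X := X) (ξ := ξ) (η := η) hkp ht1 ht2
    (by omega) hr1 hr2 hrt hab hta S h0 h2 h3
    (pow_mem (Fexp_mul_star_mem k p r X b η) t) (w := fun α => ‖Fexp k p r X b η α‖ ^ (2 * t))
    (fun α => by
      rw [Pi.pow_apply, mul_star_apply, pow_mul]
      push_cast
      rfl) (fun α => by positivity) hwc
  simp only [mul_comm (‖tupleSum k S _‖ ^ 2)]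
  refine hmain.trans ?_
  rw [mul_assoc]
  refine mul_le_mul_of_nonneg_left ?_ (by positivity)
  have hterm : ∀ ω ∈ S.image fun x i => resRep ((p : ℤ) ^ (t * b)) (x i),
      ∫ α in box k, ‖Fexp k p r X b η α‖ ^ (2 * t) *
        ‖∏ i, fexp k p X (t * b) (ω i) α‖ ^ 2 ≤ r * B := by
    intro ω hω
    obtain ⟨x, hx, rfl⟩ := mem_image.1 hω
    have hc : ∀ i, Continuous fun α => ‖Fexp k p r X b η α‖ ^ (2 * t) *
        ‖fexp k p X (t * b) (resRep ((p : ℤ) ^ (t * b)) (x i)) α‖ ^ (2 * r) :=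
      fun i => hwc.mul (continuous_fexp.norm.pow _)
    calc ∫ α in box k, ‖Fexp k p r X b η α‖ ^ (2 * t) *
          ‖∏ i, fexp k p X (t * b) (resRep ((p : ℤ) ^ (t * b)) (x i)) α‖ ^ 2
        ≤ ∫ α in box k, ∑ i, ‖Fexp k p r X b η α‖ ^ (2 * t) *
          ‖fexp k p X (t * b) (resRep ((p : ℤ) ^ (t * b)) (x i)) α‖ ^ (2 * r) := by
          refine integral_box_mono ?_ (continuous_finsetSum _ fun i _ => hc i) fun α => ?_
          · exact hwc.mul ((continuous_finsetProd _ fun i _ => continuous_fexp).norm.pow 2)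
          · rw [← mul_sum]
            exact mul_le_mul_of_nonneg_left (norm_prod_sq_le_sum hr1 _) (by positivity)
      _ = ∑ i, ∫ α in box k, ‖Fexp k p r X b η α‖ ^ (2 * t) *
          ‖fexp k p X (t * b) (resRep ((p : ℤ) ^ (t * b)) (x i)) α‖ ^ (2 * r) :=
          integral_finsetSum _ fun i _ => integrableOn_box (hc i)
      _ ≤ ∑ _i : Fin r, B := by
          refine sum_le_sum fun i _ => ?_
          refine (integral_norm_Fexp_mul_fexp_le hp ht _ _).trans
            (mul_le_mul_of_nonneg_right ?_ hJ)
          have hres := resRep_mem (n := (p : ℤ) ^ (t * b)) (by positivity) (x i)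
          refine Real.rpow_le_rpow (Iab_nonneg ..)
            (Iab_le_Imax hη1 hη2 hres.1 hres.2 fun hmod => h3 x hx i ?_) (by positivity)
          exact ((resRep_modEq _ (x i)).of_dvd (dvd_pow_self _ (by omega))).symm.trans hmod
      _ = r * B := by simp
  refine (sum_le_card_nsmul _ _ _ hterm).trans ?_
  rw [nsmul_eq_mul]
  refine mul_le_mul_of_nonneg_right ?_ (by positivity)
  have hsub : (S.image fun x i => resRep ((p : ℤ) ^ (t * b)) (x i)) ⊆
      Fintype.piFinset fun _ : Fin r =>
        (Icc (1 : ℤ) ((p : ℤ) ^ (t * b))).filter fun x => x ≡ ξ [ZMOD (p : ℤ) ^ a] := by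
    intro ω hω
    obtain ⟨x, hx, rfl⟩ := mem_image.1 hω
    refine Fintype.mem_piFinset.2 fun i => mem_filter.2 ⟨mem_Icc.2 (resRep_mem (by positivity) _),
      ((resRep_modEq _ (x i)).of_dvd (pow_dvd_pow _ hatb)).trans (mem_prog.1 (h0 x hx i)).2⟩
  have hcard := card_le_card hsub
  rw [Fintype.card_piFinset, prod_const, card_univ, Fintype.card_fin] at hcard
  exact_mod_cast hcard.trans (Nat.pow_le_pow_left (card_filter_Icc_modEq_le hp hatb ξ) r)

/-- One efficient congruencing step. -/
lemma Kmax_le_Imax [Fact p.Prime] (hkp : k < p) (ht1 : k ≤ 2 * t + 1) (ht2 : t ≤ k) (ht : 2 ≤ t)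
    (hr1 : 1 ≤ r) (hr2 : r ≤ k) (hrt : k ≤ r + t) (hab : a < b) (hta : t * a ≤ b) :
    Kmax k p r t X a b ≤
      (r ^ r * p ^ (muN k r t * b + nuN k r t * a) : ℕ) * ((p ^ (t * b - a)) ^ r : ℕ) *
      (r * (Imax k p r (r * t) X b (t * b) ^ (1 / (t : ℝ)) *
        (Jcount (r * (t + 1)) k (X / (p : ℝ) ^ b + 1) : ℝ) ^ (1 - 1 / (t : ℝ)))) := by
  have hnn : 0 ≤ (r ^ r * p ^ (muN k r t * b + nuN k r t * a) : ℕ) *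
      ((p ^ (t * b - a)) ^ r : ℕ) *
      (r * (Imax k p r (r * t) X b (t * b) ^ (1 / (t : ℝ)) *
        (Jcount (r * (t + 1)) k (X / (p : ℝ) ^ b + 1) : ℝ) ^ (1 - 1 / (t : ℝ)))) := by
    have := Real.rpow_nonneg (Imax_nonneg k p r (r * t) X b (t * b)) (1 / (t : ℝ))
    positivity
  rw [Kmax]
  split_ifs with ha
  · subst ha
    refine Real.sSup_le ?_ hnn
    rintro _ ⟨η, hη1, hη2, rfl⟩
    obtain ⟨T, hT, hx⟩ := exists_tupleSum_eq_Ftilde k p r X η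
    rw [Ktilde, hT]
    exact integral_tupleSum_mul_Fexp_le hkp ht1 ht2 ht hr1 hr2 hrt hab hta hη1 hη2 T
      (fun x h => (hx x h).1) (fun x h => (hx x h).2.2) fun x h => (hx x h).2.1
  · refine Real.sSup_le ?_ hnn
    rintro _ ⟨ξ, η, -, -, hη1, hη2, hne, rfl⟩
    obtain ⟨T, hT, hx⟩ := exists_tupleSum_eq_Fexp k p r X a ξ
    rw [Kab, hT]
    refine integral_tupleSum_mul_Fexp_le hkp ht1 ht2 ht hr1 hr2 hrt hab hta hη1 hη2 T
      (fun x h => (hx x h).1) (fun x h => (hx x h).2) fun x h i hmod => hne ?_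
    exact hmod.symm.trans ((mem_prog.1 ((hx x h).1 i)).2.of_dvd (dvd_pow_self _ ha))

/-- The trivial estimate for the mean value `I_{b,c}`. -/
lemma Imax_le_Jcount (hp : 0 < p) (ht : 1 ≤ t) (c : ℕ) :
    Imax k p r (r * t) X b c ≤
      (Jcount (r * (t + 1)) k (X / (p : ℝ) ^ b + 1) : ℝ) ^ (1 / ((t : ℝ) + 1)) *
      (Jcount (r * (t + 1)) k (X / (p : ℝ) ^ c + 1) : ℝ) ^ ((t : ℝ) / (t + 1)) := by
  refine Real.sSup_le ?_ (by positivity)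
  rintro _ ⟨ξ, η, -, -, -, -, -, rfl⟩
  have h := integral_mul_pow_mul_pow_le (k := k) (w := fun _ => 1)
    (u := fun α => ‖Fexp k p r X b ξ α‖ ^ 2) (v := fun α => ‖fexp k p X c η α‖ ^ (2 * r))
    continuous_const (continuous_Fexp.norm.pow 2) (continuous_fexp.norm.pow _)
    (fun _ => zero_le_one) (fun _ => by positivity) (fun _ => by positivity)
    (m := 1) (n := t) one_pos (by omega)
  simp only [one_mul, pow_one, Nat.cast_one, ← pow_mul, mul_assoc, add_comm 1 t,
    add_comm (1 : ℝ)] at h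
  refine h.trans (mul_le_mul ?_ ?_ (Real.rpow_nonneg (integral_nonneg fun _ => by positivity) _)
    (by positivity))
  · exact Real.rpow_le_rpow (integral_nonneg fun _ => by positivity)
      (integral_norm_Fexp_pow_le hp _) (by positivity)
  · exact Real.rpow_le_rpow (integral_nonneg fun _ => by positivity)
      (integral_fexp_le_Jcount hp X c η _) (by positivity)

end congruencing

lemma muN_cast {k r t : ℕ} (hr2 : r ≤ k) (hrt : k ≤ r + t) : (muN k r t : ℝ) = muC k r t := by
  obtain ⟨n, hn⟩ : ∃ n, t = k - r + n := ⟨t - (k - r), by omega⟩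
  have h : ∀ n d : ℕ, ∑ j ∈ Ioc d (d + n), (((d + n - j : ℕ)) : ℝ) = n * (n - 1) / 2 := by
    intro n d
    induction n generalizing d with
    | zero => simp
    | succ n ih =>
      rw [show d + (n + 1) = (d + 1) + n by ring, ← Ioc_union_Ioc_eq_Ioc (b := d + 1) (by omega)
        (by omega), sum_union (by
          rw [disjoint_left]; intro j; simp only [mem_Ioc]; omega), ih (d + 1)]
      have : Ioc d (d + 1) = {d + 1} := by ext j; simp only [mem_Ioc, mem_singleton]; omega
      rw [this, sum_singleton, Nat.add_sub_cancel_left]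
      push_cast
      ring
  have hk : ((k - r : ℕ) : ℝ) = (k : ℝ) - r := Nat.cast_sub hr2
  rw [muN, muC]
  subst hn
  push_cast
  rw [h, hk]
  ring

lemma nuN_cast {k r t : ℕ} (ht2 : t ≤ k) (hrt : k ≤ r + t) : (nuN k r t : ℝ) = nuC k r t := by
  obtain ⟨n, hn⟩ : ∃ n, r = k - t + n := ⟨r - (k - t), by omega⟩
  have h : ∀ n d : ℕ, ∑ l ∈ Ico d (d + n), (l : ℝ) = n * (2 * d + n - 1) / 2 := by
    intro n d
    induction n with
    | zero => simp
    | succ n ih =>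
      rw [← add_assoc, sum_Ico_succ_top (by omega), ih]
      push_cast
      ring
  have hk : ((k - t : ℕ) : ℝ) = (k : ℝ) - t := Nat.cast_sub ht2
  rw [nuN, nuC]
  subst hn
  push_cast
  rw [h, hk]
  ring

section exponents

variable {k r t : ℕ} {a b δ y m l : ℝ}

/-- Comparison of exponents when the conditioning process terminates. -/
lemma exponent_le_of_conditioned (ht : 2 ≤ t) (hr1 : 1 ≤ r) (hrt : k ≤ r + t) (hta : t * a ≤ b)
    (hm : 0 ≤ m) (hy : 0 ≤ y) (hyl : y ≤ l) (hδ : 0 ≤ δ) (lam h : ℝ) :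
    m * (muC k r t * b + nuC k r t * a + r * (t * b - a)) + m * (2 * (r * t) / 3 * h) / t +
        y * ((lam + δ) * (1 - 1 / t)) + y * (-(2 * (r * t))) +
        (y + (b - a) * m) * (kappa k r t - 2 * r) ≤
      l * δ + (m * (b - t * a - 4 * h / 3) * (r * t) +
        ((y - ((t - 1) * b + h) * m) * (-(2 * (r * t))) + y * (kappa k r t - 2 * r))) / t +
        y * ((lam - 2 * (r * (t + 1)) + kappa k r t) * (1 - 1 / t)) := by
  have ht' : (2 : ℝ) ≤ t := by exact_mod_cast ht
  have hr' : (1 : ℝ) ≤ r := by exact_mod_cast hr1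
  have hrt' : (k : ℝ) ≤ r + t := by exact_mod_cast hrt
  have ht1 : (t : ℝ) - 1 ≠ 0 := by linarith
  have ht0 : (t : ℝ) ≠ 0 := by linarith
  have hE : 0 ≤ m * (((t : ℝ) + r - k) * (r - 1) / (t - 1)) * (b - t * a) :=
    mul_nonneg (mul_nonneg hm (div_nonneg (mul_nonneg (by linarith) (by linarith))
      (by linarith))) (by linarith)
  have h1 : 0 ≤ δ * (l - y) := mul_nonneg hδ (by linarith)
  have h2 : 0 ≤ δ * y / t := by positivity
  rw [← sub_nonneg]
  refine (add_nonneg (add_nonneg hE h1) h2).trans_eq ?_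
  simp only [muC, nuC, kappa]
  field_simp
  ring

/-- Comparison of exponents when the conditioning process does not terminate. -/
lemma exponent_le_of_unconditioned (ht : 2 ≤ t) (hr1 : 1 ≤ r) (hrt : k ≤ r + t)
    (hta : t * a ≤ b) (ha : 0 ≤ a) (hb : 1 ≤ b) (hm : 0 ≤ m) (hyδ : y * δ ≤ m / 2) (lam : ℝ)
    (hL : r * (t + 1) ≤ lam + δ) :
    m * (muC k r t * b + nuC k r t * a + r * (t * b - a)) +
        (m * (2 * (r * t) / 3 * (15 * (t - 1) * b)) + (y * ((lam + δ) * (1 / (t + 1))) +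
          (y - ((t - 1) * b + 15 * (t - 1) * b) * m) * ((lam + δ) * (t / (t + 1))))) / t +
        y * ((lam + δ) * (1 - 1 / t)) + y * (-(2 * (r * t))) +
        (y + (b - a) * m) * (kappa k r t - 2 * r) ≤
      m * (15 * (t - 1) * b) * (-r / 6) + y * (lam - 2 * (r * (t + 1)) + kappa k r t) := by
  have ht' : (2 : ℝ) ≤ t := by exact_mod_cast ht
  have hr' : (1 : ℝ) ≤ r := by exact_mod_cast hr1
  have hrt' : (k : ℝ) ≤ r + t := by exact_mod_cast hrt
  have ht1 : (t : ℝ) - 1 ≠ 0 := by linarith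
  have ht0 : (t : ℝ) ≠ 0 := by linarith
  have htp : (t : ℝ) + 1 ≠ 0 := by linarith
  have hE : 0 ≤ m * (((t : ℝ) + r - k) * (r - 1) / (t - 1)) * (b - t * a) :=
    mul_nonneg (mul_nonneg hm (div_nonneg (mul_nonneg (by linarith) (by linarith))
      (by linarith))) (by linarith)
  have h1 : 0 ≤ ((lam + δ) - r * (t + 1)) * (m * (16 * (t - 1) * b)) / (t + 1) :=
    div_nonneg (mul_nonneg (by linarith) (mul_nonneg hm (mul_nonneg (by linarith)
      (by linarith)))) (by linarith)
  have h2 : 0 ≤ m * (r * t * a) := by positivity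
  have h3 : 0 ≤ m / 2 - y * δ := by linarith
  have h4 : 0 ≤ m * (r * b * (3 * t - 5) / 2 - 1 / 2) := by
    have hrb : 1 ≤ r * b := one_le_mul_of_one_le_of_one_le hr' hb
    refine mul_nonneg hm ?_
    nlinarith
  rw [← sub_nonneg]
  refine (add_nonneg (add_nonneg (add_nonneg (add_nonneg hE h1) h2) h3) h4).trans_eq ?_
  simp only [muC, nuC, kappa]
  field_simp
  ring

end exponents

/-- A power bound for `J` forces its exponent to be at least the diagonal one. -/
lemma le_exponent_of_Jcount_lt {n k : ℕ} {Y₀ L : ℝ}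
    (h : ∀ Y : ℝ, Y₀ ≤ Y → (Jcount n k Y : ℝ) < Y ^ L) : (n : ℝ) ≤ L := by
  by_contra! hlt
  have htend := tendsto_rpow_atTop (sub_pos.2 hlt)
  obtain ⟨Y, hY1, hY2, hY3⟩ := ((htend.eventually_ge_atTop ((2 : ℝ) ^ n)).and
    ((eventually_ge_atTop Y₀).and (eventually_ge_atTop (2 : ℝ)))).exists
  have h1 := h Y hY2
  have h2 : ((⌊Y⌋₊ : ℝ)) ^ n ≤ Jcount n k Y := by exact_mod_cast floor_pow_le_Jcount n k Y
  have h3 : Y / 2 ≤ ⌊Y⌋₊ := by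
    have := Nat.lt_floor_add_one Y
    linarith
  have h4 : (Y / 2) ^ n < Y ^ L := ((pow_le_pow_left₀ (by linarith) h3 n).trans h2).trans_lt h1
  rw [Real.rpow_sub (by linarith), le_div_iff₀ (by positivity), Real.rpow_natCast] at hY1
  rw [div_pow, div_lt_iff₀ (by positivity)] at h4
  linarith

lemma Jcount_le_rpow {n k c : ℕ} {X M L : ℝ} {p : ℕ} (hX : 1 ≤ X)
    (hJ : ∀ Y : ℝ, X ^ ((1 : ℝ) / 2) ≤ Y → (Jcount n k Y : ℝ) < Y ^ L) (hM : 0 < M)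
    (hMp : M ≤ p) (hc : M ^ c ≤ X ^ ((1 : ℝ) / 2)) :
    (Jcount n k (X / (p : ℝ) ^ c + 1) : ℝ) ≤ (2 * (X / M ^ c)) ^ L := by
  have hX2 : X = X ^ ((1 : ℝ) / 2) * X ^ ((1 : ℝ) / 2) := by
    rw [← Real.rpow_add (by linarith)]; norm_num
  have h1 : X ^ ((1 : ℝ) / 2) ≤ X / M ^ c := by
    rw [le_div_iff₀ (by positivity)]
    calc X ^ ((1 : ℝ) / 2) * M ^ c ≤ X ^ ((1 : ℝ) / 2) * X ^ ((1 : ℝ) / 2) := by gcongr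
      _ = X := hX2.symm
  have h2 : 1 ≤ X ^ ((1 : ℝ) / 2) := Real.one_le_rpow hX (by norm_num)
  have h3 : X / (p : ℝ) ^ c ≤ X / M ^ c := by gcongr
  refine le_trans ?_ (hJ (2 * (X / M ^ c)) (by linarith)).le
  exact Nat.cast_le.2 (Jcount_mono n k (by linarith))

lemma natCast_pow_le_exp {p : ℕ} {M : ℝ} (hM : 0 < M) (hp : (p : ℝ) ≤ 2 * M) {e n : ℕ}
    (he : e ≤ n) : (p : ℝ) ^ e ≤ 2 ^ n * Real.exp (Real.log M * e) := by
  rw [mul_comm (Real.log M), Real.exp_nat_mul, Real.exp_log hM]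
  calc (p : ℝ) ^ e ≤ (2 * M) ^ e := by gcongr
    _ = 2 ^ e * M ^ e := mul_pow _ _ _
    _ ≤ 2 ^ n * M ^ e := by gcongr; norm_num

lemma thetaC_pos {t : ℕ} (ht : 1 ≤ t) (N : ℕ) : 0 < thetaC t N := by
  unfold thetaC
  positivity

lemma normK_eq_exp {k p r t N : ℕ} {X : ℝ} (hX : 0 < X) (a b : ℕ) :
    normK k p r t N X a b = Kmax k p r t X a b *
      Real.exp ((Real.log X - b * Real.log (Mval t N X)) * (-(2 * (r * t))) +
        (Real.log X - a * Real.log (Mval t N X)) * (kappa k r t - 2 * r)) := by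
  have hM : 0 < Mval t N X := Real.rpow_pos_of_pos hX _
  have hlog : ∀ c : ℕ, Real.log (X / Mval t N X ^ c) =
      Real.log X - c * Real.log (Mval t N X) := fun c => by
    rw [Real.log_div hX.ne' (by positivity), Real.log_pow]
  rw [normK, Real.rpow_def_of_pos (by positivity), Real.rpow_def_of_pos (by positivity), hlog,
    hlog, Real.exp_add, mul_assoc]
  push_cast
  rfl

lemma condConst_pow_mul_le {p r t : ℕ} {M : ℝ} (hM : 0 < M) (hp : (p : ℝ) ≤ 2 * M) {e h n : ℕ}
    (he : e ≤ n) (hh : h ≤ n) :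
    condConst r t ^ e * ((p : ℝ) ^ (2 * ((r * t : ℕ) : ℝ) / 3)) ^ h ≤
      condConst r t ^ n * 2 ^ (r * t * n) *
        Real.exp (Real.log M * (2 * (r * t) / 3 * h)) := by
  have h1 : condConst r t ^ e ≤ condConst r t ^ n := pow_le_pow_right₀ (one_le_condConst r t) he
  have h2 : (0 : ℝ) ≤ 2 * (r * t) / 3 * h := by positivity
  have h3 : ((p : ℝ) ^ (2 * ((r * t : ℕ) : ℝ) / 3)) ^ h ≤
      2 ^ (r * t * n) * Real.exp (Real.log M * (2 * (r * t) / 3 * h)) := by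
    rw [← Real.rpow_natCast, ← Real.rpow_mul (by positivity), ← Real.rpow_def_of_pos hM]
    push_cast
    calc (p : ℝ) ^ (2 * ((r : ℝ) * t) / 3 * h) ≤ (2 * M) ^ (2 * ((r : ℝ) * t) / 3 * h) :=
          Real.rpow_le_rpow (by positivity) hp h2
      _ = 2 ^ (2 * ((r : ℝ) * t) / 3 * h) * M ^ (2 * ((r : ℝ) * t) / 3 * h) :=
          Real.mul_rpow (by norm_num) hM.le
      _ ≤ 2 ^ (r * t * n) * M ^ (2 * ((r : ℝ) * t) / 3 * h) := by
          refine mul_le_mul_of_nonneg_right ?_ (by positivity)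
          rw [← Real.rpow_natCast]
          refine Real.rpow_le_rpow_of_exponent_le (by norm_num) ?_
          push_cast
          have hh' : (h : ℝ) ≤ n := by exact_mod_cast hh
          have : (0 : ℝ) ≤ r * t := by positivity
          nlinarith [mul_le_mul_of_nonneg_left hh' this, mul_nonneg this (Nat.cast_nonneg (α := ℝ) h)]
  rw [mul_assoc]
  exact mul_le_mul h1 h3 (by positivity) (pow_nonneg (zero_le_one.trans (one_le_condConst r t)) _)

lemma Jcount_rpow_le_exp {n k c : ℕ} {X M L u : ℝ} {p : ℕ} (hX : 1 ≤ X)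
    (hJ : ∀ Y : ℝ, X ^ ((1 : ℝ) / 2) ≤ Y → (Jcount n k Y : ℝ) < Y ^ L) (hM : 0 < M)
    (hMp : M ≤ p) (hc : M ^ c ≤ X ^ ((1 : ℝ) / 2)) (hu : 0 ≤ u) :
    (Jcount n k (X / (p : ℝ) ^ c + 1) : ℝ) ^ u ≤
      2 ^ (L * u) * Real.exp ((Real.log X - c * Real.log M) * (L * u)) := by
  have hX0 : 0 < X := by linarith
  refine (Real.rpow_le_rpow (by positivity) (Jcount_le_rpow hX hJ hM hMp hc) hu).trans_eq ?_
  rw [← Real.rpow_mul (by positivity), Real.mul_rpow (by norm_num) (by positivity),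
    Real.rpow_def_of_pos (x := X / M ^ c) (by positivity),
    Real.log_div hX0.ne' (by positivity), Real.log_pow]

/-- The congruencing step with the moduli measured in terms of `M`. -/
lemma Kmax_le_exp {k p r t : ℕ} {X M L : ℝ} {a b n : ℕ} (hp : p.Prime) (hkp : k < p)
    (ht1 : k ≤ 2 * t + 1) (ht2 : t ≤ k) (ht : 2 ≤ t) (hr1 : 1 ≤ r) (hr2 : r ≤ k)
    (hrt : k ≤ r + t) (hab : a < b) (hta : t * a ≤ b) (hbn : b ≤ n) (hX : 1 ≤ X)
    (hJ : ∀ Y : ℝ, X ^ ((1 : ℝ) / 2) ≤ Y → (Jcount (r * (t + 1)) k Y : ℝ) < Y ^ L)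
    (hM : 0 < M) (hMp : M ≤ p) (hp2 : (p : ℝ) ≤ 2 * M) (hMb : M ^ b ≤ X ^ ((1 : ℝ) / 2)) :
    Kmax k p r t X a b ≤ r * r ^ r * 2 ^ ((muN k r t + nuN k r t + t * r) * n) *
      2 ^ (L * (1 - 1 / (t : ℝ))) * Imax k p r (r * t) X b (t * b) ^ (1 / (t : ℝ)) *
      Real.exp (Real.log M * (muC k r t * b + nuC k r t * a + r * (t * b - a)) +
        (Real.log X - b * Real.log M) * (L * (1 - 1 / t))) := by
  have : Fact p.Prime := ⟨hp⟩
  have htpos : (0 : ℝ) < t := by positivity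
  have ht' : (2 : ℝ) ≤ t := by exact_mod_cast ht
  have hu : 0 ≤ 1 - 1 / (t : ℝ) := by
    rw [sub_nonneg, div_le_one htpos]
    linarith
  have hI := Real.rpow_nonneg (Imax_nonneg k p r (r * t) X b (t * b)) (1 / (t : ℝ))
  have hatb : a ≤ t * b := by nlinarith
  have hJb := Jcount_rpow_le_exp hX hJ hM hMp hMb hu
  have hpe := natCast_pow_le_exp hM hp2
    (e := muN k r t * b + nuN k r t * a + (t * b - a) * r)
    (n := (muN k r t + nuN k r t + t * r) * n) (by
      have h1 : muN k r t * b ≤ muN k r t * n := Nat.mul_le_mul_left _ hbn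
      have h2 : nuN k r t * a ≤ nuN k r t * n := Nat.mul_le_mul_left _ (by omega)
      have h3 : (t * b - a) * r ≤ t * n * r :=
        Nat.mul_le_mul_right _ ((Nat.sub_le _ _).trans (Nat.mul_le_mul_left _ hbn))
      linarith)
  have hcast : ((muN k r t * b + nuN k r t * a + (t * b - a) * r : ℕ) : ℝ) =
      muC k r t * b + nuC k r t * a + r * (t * b - a) := by
    push_cast [Nat.cast_sub hatb]
    rw [muN_cast hr2 hrt, nuN_cast ht2 hrt]
    ring
  rw [hcast, pow_add, pow_mul (p : ℝ) (t * b - a)] at hpe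
  refine (Kmax_le_Imax hkp ht1 ht2 ht hr1 hr2 hrt hab hta).trans ?_
  push_cast
  rw [Real.exp_add]
  calc _ = (r * r ^ r : ℝ) * (Imax k p r (r * t) X b (t * b) ^ (1 / (t : ℝ)) *
        ((p : ℝ) ^ (muN k r t * b + nuN k r t * a) * ((p : ℝ) ^ (t * b - a)) ^ r *
        (Jcount (r * (t + 1)) k (X / (p : ℝ) ^ b + 1) : ℝ) ^ (1 - 1 / (t : ℝ)))) := by ring
    _ ≤ (r * r ^ r : ℝ) * (Imax k p r (r * t) X b (t * b) ^ (1 / (t : ℝ)) *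
        (2 ^ ((muN k r t + nuN k r t + t * r) * n) * Real.exp (Real.log M *
          (muC k r t * b + nuC k r t * a + r * (t * b - a))) *
        (2 ^ (L * (1 - 1 / (t : ℝ))) *
          Real.exp ((Real.log X - b * Real.log M) * (L * (1 - 1 / t)))))) := by
        refine mul_le_mul_of_nonneg_left (mul_le_mul_of_nonneg_left ?_ hI) (by positivity)
        exact mul_le_mul hpe hJb (by positivity) (by positivity)
    _ = _ := by ring

lemma Imax_le_exp {k p r t : ℕ} {X M L : ℝ} {b c : ℕ} (hp : 0 < p) (ht : 1 ≤ t) (hX : 1 ≤ X)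
    (hJ : ∀ Y : ℝ, X ^ ((1 : ℝ) / 2) ≤ Y → (Jcount (r * (t + 1)) k Y : ℝ) < Y ^ L)
    (hM : 0 < M) (hMp : M ≤ p) (hMb : M ^ b ≤ X ^ ((1 : ℝ) / 2))
    (hMc : M ^ c ≤ X ^ ((1 : ℝ) / 2)) :
    Imax k p r (r * t) X b c ≤ 2 ^ L *
      Real.exp ((Real.log X - b * Real.log M) * (L * (1 / (t + 1))) +
        (Real.log X - c * Real.log M) * (L * (t / (t + 1)))) := by
  refine (Imax_le_Jcount hp ht c).trans ((mul_le_mul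
    (Jcount_rpow_le_exp hX hJ hM hMp hMb (by positivity))
    (Jcount_rpow_le_exp hX hJ hM hMp hMc (by positivity)) (by positivity)
    (by positivity)).trans_eq ?_)
  have htp : (t : ℝ) + 1 ≠ 0 := by positivity
  rw [Real.exp_add, mul_mul_mul_comm, ← Real.rpow_add (by norm_num)]
  congr 2
  field_simp
  ring

lemma deltaC_nonneg (t N : ℕ) : 0 ≤ deltaC t N := by
  unfold deltaC thetaC
  positivity

lemma LamC_eq (k r t : ℕ) :
    LamC k r t = lamExp k (r * (t + 1)) - 2 * (r * (t + 1)) + kappa k r t := by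
  rw [LamC]
  push_cast
  rfl

lemma log_Mval_nonneg {t : ℕ} (ht : 1 ≤ t) (N : ℕ) {X : ℝ} (hX : 1 ≤ X) :
    0 ≤ Real.log (Mval t N X) :=
  Real.log_nonneg (Real.one_le_rpow hX (thetaC_pos ht N).le)

lemma log_sub_mul_log_Mval_mem {t N b : ℕ} (ht : 1 ≤ t) {X : ℝ} (hX : 1 ≤ X)
    (hMb : Mval t N X ^ b ≤ X) : 0 ≤ Real.log X - b * Real.log (Mval t N X) ∧
      Real.log X - b * Real.log (Mval t N X) ≤ Real.log X := by
  have hM0 : 0 < Mval t N X := Real.rpow_pos_of_pos (by linarith) _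
  have h1 := Real.log_le_log (by positivity) hMb
  have h2 : 0 ≤ b * Real.log (Mval t N X) :=
    mul_nonneg (Nat.cast_nonneg b) (log_Mval_nonneg ht N hX)
  rw [Real.log_pow] at h1
  exact ⟨by linarith, by linarith⟩

/-- The normalised bound when the conditioning process terminates after `h` steps. -/
lemma normK_le_of_conditioned {k p r t N a b h : ℕ} {X Q R I L : ℝ} (ht : 2 ≤ t) (hr1 : 1 ≤ r)
    (hrt : k ≤ r + t) (hta : t * a ≤ b) (hX : 1 ≤ X) (hMb : Mval t N X ^ b ≤ X) (hQ0 : 0 < Q)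
    (hR0 : 0 < R) (hI : 0 ≤ I) (hLdef : L = lamExp k (r * (t + 1)) + deltaC t N) (hL0 : 0 ≤ L)
    (hK : Kmax k p r t X a b ≤ Q * 2 ^ (L * (1 - 1 / (t : ℝ))) * I ^ (1 / (t : ℝ)) *
      Real.exp (Real.log (Mval t N X) * (muC k r t * b + nuC k r t * a + r * (t * b - a)) +
        (Real.log X - b * Real.log (Mval t N X)) * (L * (1 - 1 / t))))
    (hIK : I ≤ R * Real.exp (Real.log (Mval t N X) * (2 * (r * t) / 3 * h)) *
      Kmax k p r t X b (t * b + h)) :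
    normK k p r t N X a b ≤ Q * R ^ (1 / (t : ℝ)) * 2 ^ L * (X ^ deltaC t N *
      ((Mval t N X ^ (((b - t * a : ℕ) : ℝ) - 4 * (h : ℝ) / 3)) ^ (r * t) *
        normK k p r t N X b (t * b + h)) ^ (1 / (t : ℝ)) *
      (X / Mval t N X ^ b) ^ (LamC k r t * (1 - 1 / (t : ℝ)))) := by
  have ht' : (2 : ℝ) ≤ t := by exact_mod_cast ht
  have htpos : (0 : ℝ) < t := by linarith
  have hX0 : 0 < X := by linarith
  have hm := log_Mval_nonneg (by omega : 1 ≤ t) N hX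
  obtain ⟨hy0, hyl⟩ := log_sub_mul_log_Mval_mem (by omega : 1 ≤ t) hX hMb
  have hδ := deltaC_nonneg t N
  have hta' : (t : ℝ) * a ≤ b := by exact_mod_cast hta
  set M := Mval t N X with hMdef
  have hM0 : 0 < M := Real.rpow_pos_of_pos hX0 _
  set y := Real.log X - b * Real.log M with hy
  have hlogb : Real.log (X / M ^ b) = y := by
    rw [Real.log_div hX0.ne' (by positivity), Real.log_pow]
  have hya : Real.log X - a * Real.log M = y + (b - a) * Real.log M := by ring
  have h2L : (2 : ℝ) ^ (L * (1 - 1 / (t : ℝ))) ≤ 2 ^ L := by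
    refine Real.rpow_le_rpow_of_exponent_le one_le_two (mul_le_of_le_one_right hL0 ?_)
    have : 0 < 1 / (t : ℝ) := by positivity
    linarith
  set K := Kmax k p r t X b (t * b + h)
  have hK0 : 0 ≤ K := Kmax_nonneg ..
  have hroot := Real.rpow_le_rpow hI hIK (by positivity : 0 ≤ 1 / (t : ℝ))
  rw [Real.mul_rpow (by positivity) hK0, Real.mul_rpow hR0.le (by positivity),
    ← Real.exp_mul] at hroot
  have hexp := exponent_le_of_conditioned (k := k) (δ := deltaC t N) ht hr1 hrt hta' hm hy0
    hyl hδ (lamExp k (r * (t + 1))) h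
  rw [← Real.exp_le_exp] at hexp
  rw [normK_eq_exp hX0, normK_eq_exp hX0]
  have hlogc : Real.log X - (t * b + h : ℕ) * Real.log M =
      y - ((t - 1) * b + h) * Real.log M := by
    push_cast
    ring
  have hrhs : X ^ deltaC t N * ((M ^ (((b - t * a : ℕ) : ℝ) - 4 * (h : ℝ) / 3)) ^ (r * t) *
        (K * Real.exp ((Real.log X - (t * b + h : ℕ) * Real.log M) * (-(2 * (r * t))) +
          y * (kappa k r t - 2 * r)))) ^ (1 / (t : ℝ)) *
        (X / M ^ b) ^ (LamC k r t * (1 - 1 / (t : ℝ))) =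
      K ^ (1 / (t : ℝ)) * Real.exp (Real.log X * deltaC t N +
        (Real.log M * (b - t * a - 4 * h / 3) * (r * t) +
          ((y - ((t - 1) * b + h) * Real.log M) * (-(2 * (r * t))) +
            y * (kappa k r t - 2 * r))) / t +
        y * ((lamExp k (r * (t + 1)) - 2 * (r * (t + 1)) + kappa k r t) * (1 - 1 / t))) := by
    rw [Real.rpow_def_of_pos hX0, Real.rpow_def_of_pos hM0,
      Real.rpow_def_of_pos (x := X / M ^ b) (by positivity), hlogb, hlogc, LamC_eq,
      ← Real.exp_nat_mul, mul_left_comm, ← Real.exp_add, Real.mul_rpow hK0 (by positivity),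
      ← Real.exp_mul, mul_left_comm, mul_assoc, ← Real.exp_add, ← Real.exp_add,
      Nat.cast_sub hta]
    congr 2
    push_cast
    ring
  rw [← hy, hrhs, hya]
  calc _ ≤ Q * 2 ^ (L * (1 - 1 / (t : ℝ))) * (R ^ (1 / (t : ℝ)) *
          Real.exp (Real.log M * (2 * (r * t) / 3 * h) * (1 / t)) * K ^ (1 / (t : ℝ))) *
          Real.exp (Real.log M * (muC k r t * b + nuC k r t * a + r * (t * b - a)) +
            y * (L * (1 - 1 / t))) *
          Real.exp (y * (-(2 * (r * t))) +
            (y + (b - a) * Real.log M) * (kappa k r t - 2 * r)) := by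
        refine mul_le_mul_of_nonneg_right (hK.trans ?_) (by positivity)
        gcongr
    _ = Q * R ^ (1 / (t : ℝ)) * 2 ^ (L * (1 - 1 / (t : ℝ))) * (K ^ (1 / (t : ℝ)) *
          (Real.exp (Real.log M * (2 * (r * t) / 3 * h) * (1 / t)) *
          Real.exp (Real.log M * (muC k r t * b + nuC k r t * a + r * (t * b - a)) +
            y * (L * (1 - 1 / t))) *
          Real.exp (y * (-(2 * (r * t))) +
            (y + (b - a) * Real.log M) * (kappa k r t - 2 * r)))) := by ring
    _ ≤ _ := by
        refine mul_le_mul (by gcongr) (mul_le_mul_of_nonneg_left (le_trans (le_of_eq ?_) hexp)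
          (by positivity)) (by positivity) (by positivity)
        rw [← Real.exp_add, ← Real.exp_add, hLdef]
        congr 1
        ring

/-- The normalised bound when the conditioning process does not terminate. -/
lemma normK_le_of_unconditioned {k p r t N a b : ℕ} {X Q R I L : ℝ} (hN : 1 ≤ N) (ht : 2 ≤ t)
    (hr1 : 1 ≤ r) (hrt : k ≤ r + t) (hta : t * a ≤ b) (hb1 : 1 ≤ b) (hX : 1 ≤ X)
    (hMb : Mval t N X ^ b ≤ X) (hQ0 : 0 < Q) (hR0 : 0 < R) (hI : 0 ≤ I)
    (hLdef : L = lamExp k (r * (t + 1)) + deltaC t N) (hL : (r : ℝ) * (t + 1) ≤ L)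
    (hK : Kmax k p r t X a b ≤ Q * 2 ^ (L * (1 - 1 / (t : ℝ))) * I ^ (1 / (t : ℝ)) *
      Real.exp (Real.log (Mval t N X) * (muC k r t * b + nuC k r t * a + r * (t * b - a)) +
        (Real.log X - b * Real.log (Mval t N X)) * (L * (1 - 1 / t))))
    (hIJ : I ≤ R * Real.exp (Real.log (Mval t N X) * (2 * (r * t) / 3 * (15 * (t - 1) * b : ℕ))) *
      (2 ^ L * Real.exp ((Real.log X - b * Real.log (Mval t N X)) * (L * (1 / (t + 1))) +
        (Real.log X - (t * b + 15 * (t - 1) * b : ℕ) * Real.log (Mval t N X)) *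
          (L * (t / (t + 1)))))) :
    normK k p r t N X a b ≤ Q * R ^ (1 / (t : ℝ)) * 2 ^ L *
      ((Mval t N X ^ (15 * (t - 1) * b)) ^ (-(r : ℝ) / 6) *
        (X / Mval t N X ^ b) ^ LamC k r t) := by
  have ht' : (2 : ℝ) ≤ t := by exact_mod_cast ht
  have htpos : (0 : ℝ) < t := by linarith
  have hX0 : 0 < X := by linarith
  have hm := log_Mval_nonneg (by omega : 1 ≤ t) N hX
  obtain ⟨hy0, hyl⟩ := log_sub_mul_log_Mval_mem (by omega : 1 ≤ t) hX hMb
  have hδ := deltaC_nonneg t N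
  have hta' : (t : ℝ) * a ≤ b := by exact_mod_cast hta
  set M := Mval t N X with hMdef
  have hM0 : 0 < M := Real.rpow_pos_of_pos hX0 _
  set y := Real.log X - b * Real.log M with hy
  have hlogb : Real.log (X / M ^ b) = y := by
    rw [Real.log_div hX0.ne' (by positivity), Real.log_pow]
  have hya : Real.log X - a * Real.log M = y + (b - a) * Real.log M := by ring
  have hcast : ((t - 1 : ℕ) : ℝ) = (t : ℝ) - 1 := by
    rw [Nat.cast_sub (by omega)]
    norm_num
  have hlogM : Real.log M = thetaC t N * Real.log X := Real.log_rpow hX0 _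
  have hLpow : (2 : ℝ) ^ (L * (1 - 1 / (t : ℝ))) * (2 ^ L) ^ (1 / (t : ℝ)) = 2 ^ L := by
    rw [← Real.rpow_mul (by norm_num), ← Real.rpow_add (by norm_num)]
    congr 1
    ring
  have hθ := thetaC_pos (by omega : 1 ≤ t) N
  have hroot := Real.rpow_le_rpow hI hIJ (by positivity : 0 ≤ 1 / (t : ℝ))
  rw [mul_mul_mul_comm, ← Real.exp_add, Real.mul_rpow (by positivity) (by positivity),
    Real.mul_rpow hR0.le (by positivity), ← Real.exp_mul] at hroot
  have hyδ : y * deltaC t N ≤ Real.log M / 2 := by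
    have hN' : (1 : ℝ) ≤ N := by exact_mod_cast hN
    have htN : (1 : ℝ) ≤ (t : ℝ) ^ N := one_le_pow₀ (by linarith)
    have hd : deltaC t N ≤ thetaC t N / 2 := by
      unfold deltaC
      gcongr
      nlinarith
    have hlX : 0 ≤ Real.log X := hy0.trans hyl
    calc y * deltaC t N ≤ Real.log X * (thetaC t N / 2) := mul_le_mul hyl hd hδ hlX
      _ = Real.log M / 2 := by rw [hlogM]; ring
  have hexp := exponent_le_of_unconditioned (k := k) ht hr1 hrt hta' (Nat.cast_nonneg a)
    (by exact_mod_cast hb1) hm hyδ (lamExp k (r * (t + 1))) (hLdef ▸ hL)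
  rw [← Real.exp_le_exp] at hexp
  have hlogc : Real.log X - (t * b + 15 * (t - 1) * b : ℕ) * Real.log M =
      y - ((t - 1) * b + 15 * (t - 1) * b) * Real.log M := by
    push_cast
    rw [hcast]
    ring
  have hrhs : (M ^ (15 * (t - 1) * b)) ^ (-(r : ℝ) / 6) * (X / M ^ b) ^ LamC k r t =
      Real.exp (Real.log M * (15 * (t - 1) * b) * (-r / 6) +
        y * (lamExp k (r * (t + 1)) - 2 * (r * (t + 1)) + kappa k r t)) := by
    rw [Real.rpow_def_of_pos (by positivity), Real.rpow_def_of_pos (by positivity), hlogb, LamC_eq,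
      ← Real.exp_add, Real.log_pow]
    push_cast
    rw [hcast]
    congr 1
    ring
  rw [hlogc] at hroot
  rw [normK_eq_exp hX0, ← hy, hrhs, hya]
  refine (mul_le_mul_of_nonneg_right (hK.trans (mul_le_mul_of_nonneg_right
    (mul_le_mul_of_nonneg_left hroot (by positivity)) (by positivity))) (by positivity)).trans ?_
  refine le_trans (le_of_eq ?_) (mul_le_mul_of_nonneg_left hexp (by positivity))
  have hcomb : ∀ u v w z : ℝ, z = u * (1 / t) + v + w →
      Q * 2 ^ (L * (1 - 1 / (t : ℝ))) * (R ^ (1 / (t : ℝ)) * (2 ^ L) ^ (1 / (t : ℝ)) *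
        Real.exp (u * (1 / t))) * Real.exp v * Real.exp w =
      Q * R ^ (1 / (t : ℝ)) * 2 ^ L * Real.exp z := by
    rintro u v w _ rfl
    rw [Real.exp_add, Real.exp_add]
    conv_rhs => rw [← hLpow]
    ring
  refine hcomb _ _ _ _ ?_
  rw [hLdef]
  push_cast
  rw [hcast]
  ring

/-- Lemma 5.2: for 0 ≤ a < b ≤ (32tθ)⁻¹ with b ≥ ta, H = 15(t-1)b and g = b - ta,
there is an integer 0 ≤ h < H with
⟦K_{a,b}(X)⟧ ≤ C (X^δ ((M^{g-4h/3})^s ⟦K_{b,tb+h}(X)⟧)^{1/t} (X/M^b)^{Λ(1-1/t)}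
  + (M^H)^{-r/6} (X/M^b)^Λ). -/
theorem lemma5_2 (k r t : ℕ) (hk : 2 ≤ k)
    (ht1 : max 2 (((k : ℝ) - 1) / 2) ≤ (t : ℝ)) (ht2 : t ≤ k)
    (hr1 : 1 ≤ r) (hr2 : r ≤ k) (hrt : k ≤ r + t) :
    ∃ P₀ : ℝ, ∃ N₀ : ℕ, ∀ N : ℕ, N₀ ≤ N →
    ∃ C : ℝ, 0 < C ∧ ∃ X₀ : ℝ, ∀ X : ℝ, X₀ ≤ X →
    (∀ Y : ℝ, X ^ ((1:ℝ)/2) ≤ Y →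
        (Jcount (r*(t+1)) k Y : ℝ) < Y ^ (lamExp k (r*(t+1)) + deltaC t N)) →
    ∀ p : ℕ, p.Prime → P₀ < (p:ℝ) → Mval t N X < (p:ℝ) → (p:ℝ) ≤ 2 * Mval t N X →
    ∀ a b : ℕ, a < b → (b:ℝ) ≤ (32*(t:ℝ)*thetaC t N)⁻¹ → t*a ≤ b →
    ∃ h : ℕ, h < 15*(t-1)*b ∧
      normK k p r t N X a b ≤
        C * (X ^ deltaC t N *
            ((Mval t N X ^ (((b - t*a : ℕ):ℝ) - 4*(h:ℝ)/3)) ^ (r*t)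
              * normK k p r t N X b (t*b+h)) ^ (1/(t:ℝ))
            * (X / Mval t N X ^ b) ^ (LamC k r t * (1 - 1/(t:ℝ)))
          + (Mval t N X ^ (15*(t-1)*b)) ^ (-(r:ℝ)/6)
            * (X / Mval t N X ^ b) ^ LamC k r t) := by
  have ht : 2 ≤ t := by exact_mod_cast (le_max_left _ _).trans ht1
  have hkt : k ≤ 2 * t + 1 := by
    have h := (le_max_right _ _).trans ht1
    have : (k : ℝ) ≤ 2 * t + 1 := by linarith
    exact_mod_cast this
  have htpos : (0 : ℝ) < t := by exact_mod_cast (by omega : 0 < t)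
  refine ⟨k, 1, fun N hN => ?_⟩
  have hθ := thetaC_pos (by omega : 1 ≤ t) N
  set L := lamExp k (r * (t + 1)) + deltaC t N with hLdef
  set n := ⌊(32 * (t : ℝ) * thetaC t N)⁻¹⌋₊
  set Q : ℝ := r * r ^ r * 2 ^ ((muN k r t + nuN k r t + t * r) * n) with hQ
  set R : ℝ := condConst r t ^ (15 * t * n) * 2 ^ (r * t * (15 * t * n)) with hR
  have hQ0 : 0 < Q := by
    have : (0 : ℝ) < r := by exact_mod_cast hr1
    positivity
  have hR0 : 0 < R := by
    have := zero_lt_one.trans_le (one_le_condConst r t)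
    positivity
  refine ⟨Q * R ^ (1 / (t : ℝ)) * 2 ^ L, by positivity, 1,
    fun X hX hJ p hp hkp hMp hp2 a b hab hb hta => ?_⟩
  have hX0 : 0 < X := by linarith
  set M := Mval t N X with hMdef
  have hM1 : 1 ≤ M := Real.one_le_rpow hX hθ.le
  have hM0 : 0 < M := by linarith
  have hbn : b ≤ n := Nat.le_floor hb
  have hb1 : 1 ≤ b := by omega
  have hH : 15 * (t - 1) * b ≤ 15 * t * n :=
    Nat.mul_le_mul (Nat.mul_le_mul_left _ (Nat.sub_le _ _)) hbn
  have hMpow : ∀ c : ℕ, c ≤ 16 * t * b → M ^ c ≤ X ^ ((1 : ℝ) / 2) := by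
    intro c hc
    rw [hMdef, Mval, ← Real.rpow_natCast, ← Real.rpow_mul hX0.le]
    refine Real.rpow_le_rpow_of_exponent_le hX ?_
    have hc' : (c : ℝ) ≤ 16 * t * b := by exact_mod_cast hc
    rw [le_inv_comm₀ (by positivity) (by positivity)] at hb
    have hb' : (b : ℝ) * (32 * t * thetaC t N) ≤ 1 := by
      have hb0 : (0 : ℝ) < b := by positivity
      calc (b : ℝ) * (32 * t * thetaC t N) ≤ b * (b : ℝ)⁻¹ := by gcongr
        _ = 1 := mul_inv_cancel₀ hb0.ne'
    nlinarith [mul_le_mul_of_nonneg_left hc' hθ.le]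
  have hMb : M ^ b ≤ X ^ ((1 : ℝ) / 2) := hMpow b (by nlinarith)
  have hL : (r : ℝ) * (t + 1) ≤ L := by exact_mod_cast le_exponent_of_Jcount_lt hJ
  have hL0 : 0 ≤ L := le_trans (by positivity) hL
  have hK := Kmax_le_exp hp (by exact_mod_cast hkp) hkt ht2 ht hr1 hr2 hrt hab hta hbn hX hJ hM0
    hMp.le hp2 hMb
  have hMX : M ^ b ≤ X := hMb.trans ((Real.rpow_le_rpow_of_exponent_le hX (by norm_num)).trans_eq
    (Real.rpow_one X))
  have hI := Imax_nonneg k p r (r * t) X b (t * b)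
  have hHpos : 0 < 15 * (t - 1) * b := by
    have : 0 < t - 1 := by omega
    positivity
  rcases exists_Imax_le_Kmax_or (k := k) (X := X) hp.pos ht hr1 hb1
    (Nat.mul_pos (by omega : 0 < t) hb1) (15 * (t - 1) * b) with ⟨h, hh, hle⟩ | hle
  · refine ⟨h, hh, (normK_le_of_conditioned ht hr1 hrt hta hX hMX hQ0 hR0 hI hLdef hL0 hK
      (hle.trans (mul_le_mul_of_nonneg_right (condConst_pow_mul_le hM0 hp2 (by omega) (by omega))
        (Kmax_nonneg ..)))).trans (mul_le_mul_of_nonneg_left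
          (le_add_of_nonneg_right (by positivity)) (by positivity))⟩
  · have hMH : M ^ (t * b + 15 * (t - 1) * b) ≤ X ^ ((1 : ℝ) / 2) := by
      refine hMpow _ ?_
      have : 15 * (t - 1) * b ≤ 15 * t * b :=
        Nat.mul_le_mul_right _ (Nat.mul_le_mul_left _ (Nat.sub_le _ _))
      linarith
    have hnn : 0 ≤ normK k p r t N X b (t * b + 0) := by
      rw [normK_eq_exp hX0]
      exact mul_nonneg (Kmax_nonneg ..) (by positivity)
    refine ⟨0, hHpos, (normK_le_of_unconditioned hN ht hr1 hrt hta hb1 hX hMX hQ0 hR0 hI hLdef hL hK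
      (hle.trans (mul_le_mul (condConst_pow_mul_le hM0 hp2 hH hH)
        (Imax_le_exp hp.pos (by omega) hX hJ hM0 hMp.le hMb hMH) (Imax_nonneg ..)
        (by positivity)))).trans (mul_le_mul_of_nonneg_left
          (le_add_of_nonneg_left (by positivity)) (by positivity))⟩

end
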